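/- (Rigidity Theorem II) Let A ⊆ ℝ^n be a Borel set and m a Radon measure on ℝ^n concentrated on A such that (A, d_Euclid, m) is a Lipschitz differentiability space whose Lipschitz dimension equals n, i.e. every Borel subset of A of positive m-measure contains a further Borel subset of positive m-measure on which some n Lipschitz functions are independent, and no n+1 Lipschitz functions are independent on any set of positive m-measure. Then m is absolutely continuous with respect to the Lebesgue measure on ℝ^n; in particular m is supported on an n-rectifiable set. -/

import Mathlib

open MeasureTheory
open scoped ENNReal NNReal

/-- The local Lipschitz constant (slope) `lip f (x) = limsup_{y → x} |f y - f x| / d(y,x)`,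
equal to `0` at isolated points. -/
noncomputable def lip {M : Type*} [PseudoMetricSpace M] (f : M → ℝ) (x : M) : ℝ :=
  Filter.limsup (fun y => |f y - f x| / dist y x) (nhdsWithin x {x}ᶜ)

/-- `q` is a norm on `ℝ^k`. -/
def IsNormOn {k : ℕ} (q : (Fin k → ℝ) → ℝ) : Prop :=
  (∀ a, 0 ≤ q a) ∧ (∀ a, q a = 0 ↔ a = 0) ∧
  (∀ (c : ℝ) (a : Fin k → ℝ), q (c • a) = |c| * q a) ∧
  (∀ a b : Fin k → ℝ, q (a + b) ≤ q a + q b)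

/-- Lipschitz functions `f 0, …, f (k-1)` are independent on `A`: for `μ`-a.e. `x ∈ A` the map
`a ↦ lip (Σ i, a i * f i) (x)` is a norm on `ℝ^k`. -/
def IndependentOn {M : Type*} [PseudoMetricSpace M] [MeasurableSpace M] (μ : Measure M)
    {k : ℕ} (f : Fin k → M → ℝ) (A : Set M) : Prop :=
  ∀ᵐ x ∂(μ.restrict A),
    IsNormOn (fun a : Fin k → ℝ => lip (fun y => ∑ i, a i * f i y) x)

/-- `(M,d,μ)` is a (Lipschitz) differentiability space: there is `N` such that no family of
more than `N` Lipschitz functions is independent on a Borel set of positive measure. -/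
def IsDiffSpace {M : Type*} [PseudoMetricSpace M] [MeasurableSpace M] (μ : Measure M) : Prop :=
  ∃ N : ℕ, ∀ (k : ℕ) (f : Fin k → M → ℝ) (A : Set M), MeasurableSet A → 0 < μ A →
    (∀ i, ∃ K : ℝ≥0, LipschitzWith K (f i)) → IndependentOn μ f A → k ≤ N

/-- `S ⊆ X` is `n`-rectifiable: it is the image of a measurable subset of `ℝⁿ` under a
bi-Lipschitz map. -/
def IsNRectifiable {X : Type*} [PseudoMetricSpace X] (n : ℕ) (S : Set X) : Prop :=
  ∃ (T : Set (EuclideanSpace ℝ (Fin n))) (g : EuclideanSpace ℝ (Fin n) → X) (C : ℝ),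
    0 < C ∧ MeasurableSet T ∧ S = g '' T ∧
    ∀ x ∈ T, ∀ y ∈ T, dist x y / C ≤ dist (g x) (g y) ∧ dist (g x) (g y) ≤ C * dist x y

/-- Euclidean space. -/
abbrev Eu (n : ℕ) := EuclideanSpace ℝ (Fin n)

/-- divergence of a vector field -/
noncomputable def dvg {n : ℕ} (Φ : Eu n → Eu n) (x : Eu n) : ℝ :=
  ∑ i, (fderiv ℝ Φ x (EuclideanSpace.single i 1)) i

lemma hasDerivAt_posPow (k : ℕ) (s : ℝ) :
    HasDerivAt (fun s : ℝ => (max s 0) ^ (k + 2)) ((k + 2) * (max s 0) ^ (k + 1)) s := by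
  rcases lt_trichotomy s 0 with h | h | h
  · have : (fun s : ℝ => (max s 0) ^ (k + 2)) =ᶠ[nhds s] fun _ => 0 := by
      filter_upwards [gt_mem_nhds h] with y hy
      simp [max_eq_right hy.le]
    rw [max_eq_right h.le]
    simpa using (hasDerivAt_const s (0 : ℝ)).congr_of_eventuallyEq this
  · subst h
    rw [hasDerivAt_iff_isLittleO]
    simp only [max_self, ne_eq, Nat.add_eq_zero_iff, OfNat.ofNat_ne_zero, and_false, not_false_eq_true,
      zero_pow, sub_zero, one_ne_zero, mul_zero, smul_eq_mul]
    have h1 : (fun s : ℝ => (max s 0) ^ (k + 2)) =O[nhds 0] (fun s : ℝ => s ^ (k + 2)) := by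
      refine Asymptotics.IsBigO.of_bound 1 (Filter.Eventually.of_forall fun s => ?_)
      rw [one_mul, norm_pow, norm_pow]
      gcongr
      rw [Real.norm_eq_abs, Real.norm_eq_abs, abs_of_nonneg (le_max_right _ _)]
      exact max_le (le_abs_self s) (abs_nonneg s)
    refine h1.trans_isLittleO ?_
    simpa using (Asymptotics.isLittleO_pow_pow (𝕜 := ℝ) (show 1 < k + 2 by omega))
  · have : (fun s : ℝ => (max s 0) ^ (k + 2)) =ᶠ[nhds s] fun s => s ^ (k + 2) := by
      filter_upwards [lt_mem_nhds h] with y hy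
      simp [max_eq_left hy.le]
    rw [max_eq_left h.le]
    have := (hasDerivAt_pow (k + 2) s).congr_of_eventuallyEq this
    simpa using this

lemma contDiff_posPow (k : ℕ) : ContDiff ℝ 1 (fun s : ℝ => (max s 0) ^ (k + 2)) := by
  rw [contDiff_one_iff_deriv]
  refine ⟨fun s => (hasDerivAt_posPow k s).differentiableAt, ?_⟩
  have : deriv (fun s : ℝ => (max s 0) ^ (k + 2)) = fun s : ℝ => ((k : ℝ) + 2) * (max s 0) ^ (k + 1) := by
    ext s; exact (hasDerivAt_posPow k s).deriv
  rw [this]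
  fun_prop

/-- radial cut-off -/
noncomputable def rcut {n : ℕ} (k : ℕ) (x : Eu n) (ρ : ℝ) (y : Eu n) : ℝ :=
  (max (1 - ‖y - x‖ ^ 2 / ρ ^ 2) 0) ^ (k + 2)

lemma contDiff_rcut {n : ℕ} (k : ℕ) (x : Eu n) (ρ : ℝ) : ContDiff ℝ 1 (rcut k x ρ) := by
  unfold rcut
  refine (contDiff_posPow k).comp ?_
  have : ContDiff ℝ 1 (fun y : Eu n => ‖y - x‖ ^ 2) := (contDiff_id.sub contDiff_const).norm_sq ℝ
  fun_prop

lemma hasFDerivAt_rcut {n : ℕ} (k : ℕ) (x : Eu n) (ρ : ℝ) (y : Eu n) :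
    HasFDerivAt (rcut k x ρ)
      (-((k + 2) * (max (1 - ‖y - x‖ ^ 2 / ρ ^ 2) 0) ^ (k + 1) * (2 / ρ ^ 2)) •
        innerSL ℝ (y - x)) y := by
  have h1 : HasFDerivAt (fun y : Eu n => ‖y - x‖ ^ 2) (2 • innerSL ℝ (y - x)) y := by
    have := ((hasFDerivAt_id (𝕜 := ℝ) y).sub_const x).norm_sq
    simpa using this
  have h2 : HasFDerivAt (fun y : Eu n => 1 - ‖y - x‖ ^ 2 / ρ ^ 2)
      (-((1 / ρ ^ 2) • (2 • innerSL ℝ (y - x)))) y := by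
    have := ((h1.const_mul (1 / ρ ^ 2)).const_sub 1)
    refine this.congr_of_eventuallyEq (Filter.Eventually.of_forall fun z => ?_)
    simp; ring
  have := (hasDerivAt_posPow k (1 - ‖y - x‖ ^ 2 / ρ ^ 2)).comp_hasFDerivAt y h2
  refine this.congr_fderiv ?_
  ext h
  simp
  ring

lemma rcut_nonneg {n : ℕ} (k : ℕ) (x : Eu n) (ρ : ℝ) (y : Eu n) : 0 ≤ rcut k x ρ y := by
  unfold rcut; positivity

lemma rcut_le_one {n : ℕ} (k : ℕ) (x : Eu n) (ρ : ℝ) (y : Eu n) : rcut k x ρ y ≤ 1 := by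
  unfold rcut
  refine pow_le_one₀ (by positivity) (max_le ?_ zero_le_one)
  have : 0 ≤ ‖y - x‖ ^ 2 / ρ ^ 2 := by positivity
  linarith

lemma cut_zero {n : ℕ} {x : Eu n} {ρ : ℝ} (hρ : 0 < ρ) {y : Eu n}
    (h : y ∉ Metric.closedBall x ρ) : max (1 - ‖y - x‖ ^ 2 / ρ ^ 2) 0 = 0 := by
  apply max_eq_right
  rw [Metric.mem_closedBall, dist_eq_norm, not_le] at h
  have : 1 ≤ ‖y - x‖ ^ 2 / ρ ^ 2 := by
    rw [le_div_iff₀ (by positivity)]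
    nlinarith
  linarith

lemma rcut_eq_zero {n : ℕ} (k : ℕ) {x : Eu n} {ρ : ℝ} (hρ : 0 < ρ) {y : Eu n}
    (h : y ∉ Metric.closedBall x ρ) : rcut k x ρ y = 0 := by
  unfold rcut; rw [cut_zero hρ h]; simp

/-- the contracting field -/
noncomputable def cfield {n : ℕ} (k : ℕ) (x : Eu n) (ρ : ℝ) (y : Eu n) : Eu n :=
  -(rcut k x ρ y • (y - x))

lemma contDiff_cfield {n : ℕ} (k : ℕ) (x : Eu n) (ρ : ℝ) : ContDiff ℝ 1 (cfield k x ρ) := by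
  unfold cfield
  exact ((contDiff_rcut k x ρ).smul (contDiff_id.sub contDiff_const)).neg

lemma hasFDerivAt_cfield {n : ℕ} (k : ℕ) (x : Eu n) (ρ : ℝ) (y : Eu n) :
    HasFDerivAt (cfield k x ρ)
      (-(rcut k x ρ y • ContinuousLinearMap.id ℝ (Eu n)
        + (-((k + 2) * (max (1 - ‖y - x‖ ^ 2 / ρ ^ 2) 0) ^ (k + 1) * (2 / ρ ^ 2)) •
        innerSL ℝ (y - x)).smulRight (y - x))) y := by
  unfold cfield
  exact ((hasFDerivAt_rcut k x ρ y).smul ((hasFDerivAt_id y).sub_const x)).neg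

lemma fderiv_cfield_apply {n : ℕ} (k : ℕ) (x : Eu n) (ρ : ℝ) (y h : Eu n) :
    fderiv ℝ (cfield k x ρ) y h = -(rcut k x ρ y • h) + ((k + 2) *
      (max (1 - ‖y - x‖ ^ 2 / ρ ^ 2) 0) ^ (k + 1) * (2 / ρ ^ 2) * inner ℝ (y - x) h) • (y - x) := by
  rw [(hasFDerivAt_cfield k x ρ y).fderiv]
  simp [add_comm, inner_sub_left]

lemma fderiv_cfield_zero {n : ℕ} (k : ℕ) {x : Eu n} {ρ : ℝ} (hρ : 0 < ρ) {y : Eu n}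
    (h : y ∉ Metric.closedBall x ρ) : fderiv ℝ (cfield k x ρ) y = 0 := by
  ext1 v
  rw [fderiv_cfield_apply, rcut_eq_zero k hρ h, cut_zero hρ h]
  simp

lemma cfield_zero {n : ℕ} (k : ℕ) {x : Eu n} {ρ : ℝ} (hρ : 0 < ρ) {y : Eu n}
    (h : y ∉ Metric.closedBall x ρ) : cfield k x ρ y = 0 := by
  rw [cfield, rcut_eq_zero k hρ h]
  simp

lemma norm_cfield_le {n : ℕ} (k : ℕ) {x : Eu n} {ρ : ℝ} (hρ : 0 < ρ) (y : Eu n) :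
    ‖cfield k x ρ y‖ ≤ ρ := by
  by_cases h : y ∈ Metric.closedBall x ρ
  · rw [cfield, norm_neg, norm_smul, Real.norm_eq_abs, abs_of_nonneg (rcut_nonneg _ _ _ _)]
    rw [Metric.mem_closedBall, dist_eq_norm] at h
    have := rcut_le_one k x ρ y
    have := rcut_nonneg k x ρ y
    nlinarith [norm_nonneg (y - x)]
  · rw [cfield_zero k hρ h]; simpa using hρ.le

lemma norm_fderiv_cfield_le {n : ℕ} (k : ℕ) {x : Eu n} {ρ : ℝ} (hρ : 0 < ρ) (y : Eu n) :
    ‖fderiv ℝ (cfield k x ρ) y‖ ≤ 1 + 2 * (k + 2) := by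
  by_cases h : y ∈ Metric.closedBall x ρ
  · refine ContinuousLinearMap.opNorm_le_bound _ (by positivity) fun v => ?_
    rw [fderiv_cfield_apply]
    rw [Metric.mem_closedBall, dist_eq_norm] at h
    set M := max (1 - ‖y - x‖ ^ 2 / ρ ^ 2) 0 with hM
    have hM0 : 0 ≤ M := le_max_right _ _
    have hM1 : M ≤ 1 := by
      refine max_le ?_ zero_le_one
      have : 0 ≤ ‖y - x‖ ^ 2 / ρ ^ 2 := by positivity
      linarith
    have hMk : M ^ (k + 1) ≤ 1 := pow_le_one₀ hM0 hM1
    refine (norm_add_le _ _).trans ?_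
    rw [norm_neg, norm_smul, norm_smul, Real.norm_eq_abs, Real.norm_eq_abs,
      abs_of_nonneg (rcut_nonneg _ _ _ _), abs_mul, abs_of_nonneg (by positivity)]
    have h1 := rcut_le_one k x ρ y
    have h2 := abs_real_inner_le_norm (y - x) v
    have h3 : ‖y - x‖ ^ 2 / ρ ^ 2 ≤ 1 := by
      rw [div_le_one (by positivity)]; gcongr
    have : (k + 2) * M ^ (k + 1) * (2 / ρ ^ 2) * |inner ℝ (y - x) v| * ‖y - x‖
       ≤ (k + 2) * 1 * (2 / ρ ^ 2) * (‖y - x‖ * ‖v‖) * ‖y - x‖ := by gcongr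
    have h4 : (k + 2 : ℝ) * 1 * (2 / ρ ^ 2) * (‖y - x‖ * ‖v‖) * ‖y - x‖ =
       2 * (k + 2) * (‖y - x‖ ^ 2 / ρ ^ 2) * ‖v‖ := by ring
    have h5 : 2 * (k + 2 : ℝ) * (‖y - x‖ ^ 2 / ρ ^ 2) * ‖v‖ ≤ 2 * (k + 2) * 1 * ‖v‖ := by gcongr
    have h6 : rcut k x ρ y * ‖v‖ ≤ 1 * ‖v‖ := by gcongr
    linarith
  · rw [fderiv_cfield_zero k hρ h]; simp; positivity

lemma dvg_cfield {n : ℕ} (k : ℕ) (x : Eu n) (ρ : ℝ) (y : Eu n) :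
    dvg (cfield k x ρ) y = (max (1 - ‖y - x‖ ^ 2 / ρ ^ 2) 0) ^ (k + 1) *
      ((n + 2 * (k + 2)) * (‖y - x‖ ^ 2 / ρ ^ 2) - n) := by
  have hs : ‖y - x‖ ^ 2 = ∑ i, (y i - x i) * (y i - x i) := by
    rw [EuclideanSpace.norm_sq_eq]; simp [sq]
  unfold dvg
  simp only [fderiv_cfield_apply]
  simp only [PiLp.add_apply, PiLp.neg_apply, PiLp.smul_apply, PiLp.sub_apply,
    EuclideanSpace.inner_single_right, PiLp.single_apply, smul_eq_mul]
  set M := max (1 - ‖y - x‖ ^ 2 / ρ ^ 2) 0 with hM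
  have e : ∑ i : Fin n, (-(rcut k x ρ y * if True then 1 else 0) + (↑k + 2) * M ^ (k + 1) * (2 / ρ ^ 2) *
       (1 * (y i - x i)) * (y i - x i)) = -(n * rcut k x ρ y) + (k + 2) * M ^ (k + 1) * (2 / ρ ^ 2) * ‖y - x‖ ^ 2 := by
    rw [hs, Finset.sum_add_distrib, Finset.mul_sum]
    simp [mul_assoc]
  have e2 : rcut k x ρ y = M ^ (k + 1) * (1 - ‖y - x‖ ^ 2 / ρ ^ 2) := by
    unfold rcut
    rw [← hM]
    rcases le_total (1 - ‖y - x‖ ^ 2 / ρ ^ 2) 0 with h | h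
    · have : M = 0 := max_eq_right h
      rw [this]; simp
    · have : M = (1 - ‖y - x‖ ^ 2 / ρ ^ 2) := max_eq_left h
      rw [← this]; ring
  simp only [conj_trivial]
  rw [e, e2]
  ring

/-- closability of the divergence -/
def CLv {n : ℕ} (ν : Measure (Eu n)) : Prop :=
  ∀ Λ > (0 : ℝ), ∀ η > (0 : ℝ), ∃ τ > (0 : ℝ), ∀ Φ : Eu n → Eu n, ContDiff ℝ 1 Φ →
    (∀ x, ‖fderiv ℝ Φ x‖ ≤ Λ) → (∀ x, ‖Φ x‖ ≤ τ) → ∫ x, dvg Φ x ∂ν ≤ η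

lemma continuous_dvg {n : ℕ} {Φ : Eu n → Eu n} (h : ContDiff ℝ 1 Φ) : Continuous (dvg Φ) := by
  have := h.continuous_fderiv one_ne_zero
  unfold dvg
  refine continuous_finset_sum _ fun i _ => ?_
  have h2 : Continuous fun x => fderiv ℝ Φ x (EuclideanSpace.single i 1) :=
    this.clm_apply continuous_const
  fun_prop

lemma abs_dvg_le {n : ℕ} {Φ : Eu n → Eu n} {x : Eu n} {Λ : ℝ} (h : ‖fderiv ℝ Φ x‖ ≤ Λ) :
    |dvg Φ x| ≤ n * Λ := by
  unfold dvg
  refine (Finset.abs_sum_le_sum_abs _ _).trans ?_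
  have : ∀ i ∈ (Finset.univ : Finset (Fin n)),
      |(fderiv ℝ Φ x (EuclideanSpace.single i 1)) i| ≤ Λ := by
    intro i _
    have h1 := PiLp.norm_apply_le (fderiv ℝ Φ x (EuclideanSpace.single i 1)) i
    have h2 := (fderiv ℝ Φ x).le_opNorm (EuclideanSpace.single i (1:ℝ))
    simp only [PiLp.norm_single, norm_one, mul_one] at h2
    rw [Real.norm_eq_abs] at h1
    linarith
  refine (Finset.sum_le_sum this).trans ?_
  simp

lemma integrable_dvg {n : ℕ} {ν : Measure (Eu n)} [IsFiniteMeasure ν] {Φ : Eu n → Eu n}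
    (h : ContDiff ℝ 1 Φ) {Λ : ℝ} (hΛ : ∀ x, ‖fderiv ℝ Φ x‖ ≤ Λ) : Integrable (dvg Φ) ν := by
  refine Integrable.of_bound (continuous_dvg h).aestronglyMeasurable (n * Λ)
    (Filter.Eventually.of_forall fun x => ?_)
  exact abs_dvg_le (hΛ x)

/-- gain of the contracting field -/
lemma cfield_gain {n : ℕ} (hn : 0 < n) : ∃ C0 : ℝ, 1 ≤ C0 ∧ ∀ C ≥ C0, ∃ c > (0:ℝ),
    ∀ (ν : Measure (Eu n)) [IsFiniteMeasure ν] (x : Eu n) (R : ℝ), 0 < R →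
      C * ν.real (Metric.closedBall x (R / 2)) ≤ ν.real (Metric.closedBall x R) →
      ν.real (Metric.closedBall x (2 * R)) ≤ C * ν.real (Metric.closedBall x R) →
      c * ν.real (Metric.closedBall x (2 * R)) ≤ ∫ y, dvg (cfield (16 * n) x (2 * R)) y ∂ν := by
  set c1 : ℝ := (3 / 4) ^ (16 * n + 1) with hc1
  have hc1p : 0 < c1 := by positivity
  have hc1l : c1 ≤ 1 := pow_le_one₀ (by norm_num) (by norm_num)
  refine ⟨4 / c1, ?_, fun C hC => ?_⟩
  · rw [le_div_iff₀ hc1p]; linarith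
  have hC' : 4 ≤ C * c1 := by rwa [ge_iff_le, div_le_iff₀ hc1p] at hC
  have hCp : 0 < C := by by_contra h; nlinarith
  refine ⟨n * c1 / (2 * C), by positivity, fun ν _ x R hR h1 h2 => ?_⟩
  set k := 16 * n
  have hn1 : (1:ℝ) ≤ n := by exact_mod_cast hn
  have hk : (k : ℝ) = 16 * n := by simp [k]
  -- pointwise lower bound
  set A := Metric.closedBall x (R / 2)
  set B := Metric.closedBall x R
  have hAm : MeasurableSet A := Metric.isClosed_closedBall.measurableSet
  have hBm : MeasurableSet B := Metric.isClosed_closedBall.measurableSet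
  have key : ∀ y, A.indicator (fun _ => -(n + n * c1 : ℝ)) y + B.indicator (fun _ => (n * c1 : ℝ)) y
      ≤ dvg (cfield k x (2 * R)) y := by
    intro y
    rw [dvg_cfield]
    set t := ‖y - x‖ ^ 2 / (2 * R) ^ 2 with ht
    have ht0 : 0 ≤ t := by positivity
    set M := max (1 - t) 0 with hM
    have hM0 : 0 ≤ M := le_max_right _ _
    have hM1 : M ≤ 1 := max_le (by linarith) zero_le_one
    have hMk0 : 0 ≤ M ^ (k + 1) := by positivity
    have hMk1 : M ^ (k + 1) ≤ 1 := pow_le_one₀ hM0 hM1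
    have hA : y ∉ A → 1 / 16 ≤ t := by
      intro h
      rw [Metric.mem_closedBall, dist_eq_norm, not_le] at h
      rw [ht, le_div_iff₀ (by positivity)]
      nlinarith
    have hB : y ∈ B → t ≤ 1 / 4 := by
      intro h
      rw [Metric.mem_closedBall, dist_eq_norm] at h
      rw [ht, div_le_iff₀ (by positivity)]
      nlinarith [norm_nonneg (y - x)]
    have hAB : A ⊆ B := Metric.closedBall_subset_closedBall (by linarith)
    by_cases yA : y ∈ A
    · have yB := hAB yA
      rw [Set.indicator_of_mem yA, Set.indicator_of_mem yB]
      have : -(n:ℝ) ≤ (n + 2 * (k + 2)) * t - n := by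
        have : 0 ≤ (n + 2 * ((k:ℝ) + 2)) * t := by positivity
        linarith
      nlinarith
    · have h16 := hA yA
      have : (n:ℝ) ≤ (n + 2 * (k + 2)) * t - n := by
        rw [hk]; nlinarith
      rw [Set.indicator_of_notMem yA]
      by_cases yB : y ∈ B
      · rw [Set.indicator_of_mem yB]
        have : c1 ≤ M ^ (k + 1) := by
          rw [hc1]
          have := hB yB
          have : 3 / 4 ≤ M := le_trans (by linarith) (le_max_left _ _)
          gcongr
        nlinarith
      · rw [Set.indicator_of_notMem yB]
        have : (0:ℝ) ≤ n := by positivity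
        nlinarith
  have hintg : ∫ y, A.indicator (fun _ => -(n + n * c1 : ℝ)) y + B.indicator (fun _ => (n * c1 : ℝ)) y ∂ν
      = -(n + n * c1) * ν.real A + n * c1 * ν.real B := by
    rw [integral_add]
    · rw [integral_indicator hAm, integral_indicator hBm]; simp; ring
    · exact (integrable_const _).indicator hAm
    · exact (integrable_const _).indicator hBm
  have := integral_mono (μ := ν) (((integrable_const _).indicator hAm).add ((integrable_const _).indicator hBm))
    (integrable_dvg (contDiff_cfield k x (2 * R)) (norm_fderiv_cfield_le k (by positivity))) key
  refine le_trans ?_ (hintg ▸ this)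
  have hA0 : 0 ≤ ν.real A := measureReal_nonneg
  have hB0 : 0 ≤ ν.real B := measureReal_nonneg
  have e1 : (n * c1 / (2 * C)) * ν.real (Metric.closedBall x (2 * R)) ≤ (n * c1 / (2 * C)) * (C * ν.real B) := by
    gcongr
  have e2 : (n * c1 / (2 * C)) * (C * ν.real B) = n * c1 / 2 * ν.real B := by
    field_simp
  have e3 : 4 * ν.real A ≤ c1 * ν.real B := by nlinarith
  have e4 : (1 + c1) * ν.real A ≤ c1 / 2 * ν.real B := by nlinarith
  nlinarith

lemma sum_disj_bound {ι V : Type*} [SeminormedAddCommGroup V] (s : Finset ι) (f : ι → V) (c : ℝ)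
    (hc : 0 ≤ c) (h1 : ∀ i ∈ s, ‖f i‖ ≤ c)
    (h2 : ∀ i ∈ s, ∀ j ∈ s, f i ≠ 0 → f j ≠ 0 → i = j) : ‖∑ i ∈ s, f i‖ ≤ c := by
  by_cases h : ∃ i ∈ s, f i ≠ 0
  · obtain ⟨i, hi, hfi⟩ := h
    rw [Finset.sum_eq_single_of_mem i hi]
    · exact h1 i hi
    · intro j hj hji
      by_contra hne
      exact hji (h2 j hj i hi hne hfi)
  · push Not at h
    rw [Finset.sum_eq_zero h]; simpa using hc

lemma dvg_sum {n : ℕ} {ι : Type*} (s : Finset ι) (f : ι → Eu n → Eu n)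
    (hf : ∀ i ∈ s, ContDiff ℝ 1 (f i)) (y : Eu n) :
    dvg (fun y => ∑ i ∈ s, f i y) y = ∑ i ∈ s, dvg (f i) y := by
  unfold dvg
  rw [fderiv_fun_sum (fun i hi => (hf i hi).differentiable one_ne_zero y)]
  rw [Finset.sum_comm]
  simp

lemma escape {n : ℕ} (hn : 0 < n) (ν : Measure (Eu n)) [IsFiniteMeasure ν] (x : Eu n) (C : ℝ)
    (hC : 4 ^ n ≤ C)
    (hm : ∃ r1 > 0, ∀ r, 0 < r → r < r1 → r ^ n ≤ ν.real (Metric.closedBall x r))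
    (hbad : ∀ ρ > 0, ∃ r, 0 < r ∧ r < ρ ∧
      C * ν.real (Metric.closedBall x r) < ν.real (Metric.closedBall x (2 * r))) :
    ∀ ρ > 0, ∃ R, 0 < R ∧ R < ρ ∧
      C * ν.real (Metric.closedBall x (R / 2)) ≤ ν.real (Metric.closedBall x R) ∧
      ν.real (Metric.closedBall x (2 * R)) ≤ C * ν.real (Metric.closedBall x R) := by
  intro ρ hρ
  by_contra hcon
  push Not at hcon
  obtain ⟨r1, hr1, hm⟩ := hm
  set T := ν.real Set.univ
  have hT : 0 ≤ T := measureReal_nonneg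
  have hCp : 0 < C := lt_of_lt_of_le (by positivity) hC
  obtain ⟨r, hr0, hr, hrb⟩ := hbad (min (min r1 (ρ / 2)) ((ρ / 4) ^ (n + 1) / (T + 1))) (by positivity)
  have hrr1 : r < r1 := lt_of_lt_of_le hr ((min_le_left _ _).trans (min_le_left _ _))
  have hrρ : r < ρ / 2 := lt_of_lt_of_le hr ((min_le_left _ _).trans (min_le_right _ _))
  have hrT : r < (ρ / 4) ^ (n + 1) / (T + 1) := lt_of_lt_of_le hr (min_le_right _ _)
  have step : ∀ j : ℕ, 2 ^ j * r < ρ →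
      C * ν.real (Metric.closedBall x (2 ^ j * r)) ≤ ν.real (Metric.closedBall x (2 ^ (j + 1) * r)) := by
    intro j
    induction j with
    | zero => intro _; simpa using hrb.le
    | succ j ih =>
      intro hj
      have hj' : 2 ^ j * r < ρ := by
        rw [pow_succ] at hj; nlinarith [show (0:ℝ) < 2 ^ j * r by positivity]
      have h1 := ih hj'
      have := hcon (2 ^ (j + 1) * r) (by positivity) hj (by
        rwa [show (2:ℝ) ^ (j + 1) * r / 2 = 2 ^ j * r by rw [pow_succ]; ring])
      rw [show (2:ℝ) ^ (j + 1 + 1) * r = 2 * (2 ^ (j + 1) * r) by rw [pow_succ]; ring]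
      exact this.le
  have grow : ∀ j : ℕ, 2 ^ j * r < ρ →
      C ^ j * r ^ n ≤ ν.real (Metric.closedBall x (2 ^ j * r)) := by
    intro j
    induction j with
    | zero => intro _; simpa using hm r hr0 hrr1
    | succ j ih =>
      intro hj
      have hj' : 2 ^ j * r < ρ := by
        rw [pow_succ] at hj; nlinarith [show (0:ℝ) < 2 ^ j * r by positivity]
      refine le_trans ?_ (step j hj')
      rw [pow_succ, mul_comm (C ^ j), mul_assoc]
      gcongr
      exact ih hj'
  obtain ⟨j, hj1, hj2⟩ := exists_nat_pow_near (x := ρ / 2 / r) (y := (2:ℝ))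
    (by rw [le_div_iff₀ hr0]; linarith) one_lt_two
  rw [le_div_iff₀ hr0] at hj1
  rw [div_lt_iff₀ hr0, pow_succ] at hj2
  have hg := grow j (by linarith)
  have hle : ν.real (Metric.closedBall x (2 ^ j * r)) ≤ T := measureReal_mono (Set.subset_univ _)
  -- 2^j r > ρ/4
  have g1 : (4 ^ n) ^ j * r ^ n ≤ C ^ j * r ^ n := by gcongr
  have g2 : ((4:ℝ) ^ n) ^ j * r ^ n = (2 ^ j) ^ n * (2 ^ j * r) ^ n := by
    rw [← pow_mul, mul_comm n j, pow_mul, ← mul_pow, ← mul_pow, show (4:ℝ) = 2 * 2 by norm_num]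
    congr 1
    rw [mul_pow (2:ℝ) 2 j, mul_assoc]
  have g3 : (ρ / 4) ^ n ≤ (2 ^ j * r) ^ n := by
    gcongr; linarith
  have g4 : (2:ℝ) ^ j ≤ (2 ^ j) ^ n := by
    apply le_self_pow₀ (one_le_pow₀ one_le_two) hn.ne'
  have g5 : (2:ℝ) ^ j * (ρ / 4) ^ n ≤ T := by
    calc (2:ℝ) ^ j * (ρ / 4) ^ n ≤ (2 ^ j) ^ n * (2 ^ j * r) ^ n := by gcongr
      _ ≤ T := by linarith
  have := hrT
  rw [lt_div_iff₀ (by positivity)] at this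
  have g6 : (ρ / 4) ^ (n + 1) ≤ r * T := by
    calc (ρ / 4) ^ (n + 1) = (ρ / 4) ^ n * (ρ / 4) := pow_succ _ _
      _ ≤ (ρ / 4) ^ n * (2 ^ j * r) := by gcongr; linarith
      _ = r * (2 ^ j * (ρ / 4) ^ n) := by ring
      _ ≤ r * T := by gcongr
  linarith

lemma ae_lower {n : ℕ} (ν : Measure (Eu n)) [IsFiniteMeasure ν]
    (hs : (volume : Measure (Eu n)) ⟂ₘ ν) :
    ∀ᵐ x ∂ν, ∃ r1 > 0, ∀ r, 0 < r → r < r1 → r ^ n ≤ ν.real (Metric.closedBall x r) := by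
  filter_upwards [Besicovitch.ae_tendsto_rnDeriv (volume : Measure (Eu n)) ν,
    hs.rnDeriv_ae_eq_zero] with x hx hx0
  rw [hx0] at hx
  set v := (volume : Measure (Eu n)) (Metric.ball 0 1)
  have hv : 0 < v := Metric.measure_ball_pos _ _ one_pos
  have hv' : v ≠ ⊤ := measure_ball_lt_top.ne
  have := hx.eventually (gt_mem_nhds (show ((0 : Eu n → ℝ≥0∞) x) < v from hv))
  rw [eventually_nhdsWithin_iff, Metric.eventually_nhds_iff] at this
  obtain ⟨r1, hr1, h⟩ := this
  refine ⟨r1, hr1, fun r hr0 hr => ?_⟩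
  have h := h (y := r) (by rw [Real.dist_eq, sub_zero, abs_of_pos hr0]; exact hr) hr0
  rw [Measure.addHaar_closedBall _ _ hr0.le, finrank_euclideanSpace, Fintype.card_fin] at h
  have h2 : ENNReal.ofReal (r ^ n) * v ≤ v * ν (Metric.closedBall x r) := by
    refine (ENNReal.div_le_iff_le_mul ?_ ?_).1 h.le
    · exact Or.inr hv'
    · exact Or.inl (measure_ne_top _ _)
  rw [mul_comm, ENNReal.mul_le_mul_iff_right hv.ne' hv'] at h2
  exact (ENNReal.ofReal_le_iff_le_toReal (measure_ne_top _ _)).1 h2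

lemma ae_doubling {n : ℕ} (hn : 0 < n) (ν : Measure (Eu n)) [IsFiniteMeasure ν]
    (hs : (volume : Measure (Eu n)) ⟂ₘ ν) (hcl : CLv ν) :
    ∃ C : ℝ, 1 ≤ C ∧ ∀ᵐ x ∂ν, ∃ r0 > 0, ∀ r, 0 < r → r < r0 →
      ν.real (Metric.closedBall x (2 * r)) ≤ C * ν.real (Metric.closedBall x r) := by
  obtain ⟨C0, hC0, hgain⟩ := cfield_gain hn
  set C := max C0 (4 ^ n)
  obtain ⟨c, hc, hgain⟩ := hgain C (le_max_left _ _)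
  refine ⟨C, hC0.trans (le_max_left _ _), ?_⟩
  set N : Set (Eu n) := {x | (∃ r1 > 0, ∀ r, 0 < r → r < r1 → r ^ n ≤ ν.real (Metric.closedBall x r)) ∧
    ¬ ∃ r0 > 0, ∀ r, 0 < r → r < r0 →
      ν.real (Metric.closedBall x (2 * r)) ≤ C * ν.real (Metric.closedBall x r)} with hN
  suffices hN0 : ν N = 0 by
    have : ∀ᵐ x ∂ν, x ∉ N := measure_eq_zero_iff_ae_notMem.1 hN0
    filter_upwards [this, ae_lower ν hs] with x hx hx2
    by_contra h
    exact hx ⟨hx2, h⟩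
  by_contra hN0
  set k := 16 * n
  have hNp : 0 < ν.real N := ENNReal.toReal_pos hN0 (measure_ne_top _ _)
  obtain ⟨τ, hτ, hcl⟩ := hcl (1 + 2 * (k + 2)) (by positivity) (c * (ν.real N / 4)) (by positivity)
  set f : Eu n → Set ℝ := fun x => {ρ | C * ν.real (Metric.closedBall x (ρ / 2 / 2)) ≤ ν.real (Metric.closedBall x (ρ / 2)) ∧
      ν.real (Metric.closedBall x (2 * (ρ / 2))) ≤ C * ν.real (Metric.closedBall x (ρ / 2))} with hf
  obtain ⟨t, r, htc, htN, htr, htcov, htd⟩ := Besicovitch.exists_disjoint_closedBall_covering_ae ν f N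
    (by
      rintro x ⟨hx1, hx2⟩ δ hδ
      obtain ⟨R, hR, hRδ, h1, h2⟩ := escape hn ν x C (le_max_right _ _) hx1 (by
        intro ρ hρ
        push Not at hx2
        obtain ⟨r, hr0, hr, h⟩ := hx2 ρ hρ
        exact ⟨r, hr0, hr, h⟩) (δ / 2) (by linarith)
      refine ⟨2 * R, ?_, by constructor <;> linarith⟩
      simp only [hf, Set.mem_setOf_eq, mul_div_cancel_left₀ R (two_ne_zero' ℝ)]
      exact ⟨h1, h2⟩)
    (fun _ => τ) (fun _ _ => hτ)
  have hcov : ν N ≤ ∑' p : t, ν (Metric.closedBall (p : Eu n) (r p)) := by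
    rw [← measure_biUnion htc htd (fun b _ => Metric.isClosed_closedBall.measurableSet)]
    calc ν N ≤ ν ((N \ ⋃ x ∈ t, Metric.closedBall x (r x)) ∪ ⋃ x ∈ t, Metric.closedBall x (r x)) := by
          apply measure_mono; rw [Set.diff_union_self]; exact Set.subset_union_left
      _ ≤ _ := (measure_union_le _ _).trans (by rw [htcov, zero_add])
  rw [ENNReal.tsum_eq_iSup_sum] at hcov
  have hlt := lt_of_lt_of_le (ENNReal.half_lt_self hN0 (measure_ne_top _ _)) hcov
  obtain ⟨s, hs⟩ := lt_iSup_iff.1 hlt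
  have hsR : ν.real N / 2 < ∑ p ∈ s, ν.real (Metric.closedBall (p : Eu n) (r p)) := by
    have := (ENNReal.toReal_lt_toReal (ENNReal.div_ne_top (measure_ne_top _ _) two_ne_zero)
      (ENNReal.sum_ne_top.2 fun i _ => measure_ne_top _ _)).2 hs
    rw [ENNReal.toReal_sum (fun i _ => measure_ne_top _ _), ENNReal.toReal_div] at this
    simpa [Measure.real] using this
  have hrpos : ∀ p : t, 0 < r p := fun p => (htr p p.2).2.1
  have hdis : ∀ y : Eu n, ∀ i ∈ s, ∀ j ∈ s, y ∈ Metric.closedBall (i : Eu n) (r i) →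
      y ∈ Metric.closedBall (j : Eu n) (r j) → i = j := by
    intro y i _ j _ hi hj
    by_contra hne
    exact Set.disjoint_left.1 (htd i.2 j.2 (fun h => hne (Subtype.ext h))) hi hj
  have hC1 : ∀ i ∈ s, ContDiff ℝ 1 (cfield k (i : Eu n) (r i)) := fun i _ => contDiff_cfield _ _ _
  have hbound : ∀ y, ‖fderiv ℝ (fun y => ∑ i ∈ s, cfield k (i : Eu n) (r i) y) y‖ ≤ 1 + 2 * (k + 2) := by
    intro y
    rw [fderiv_fun_sum (fun i hi => (hC1 i hi).differentiable one_ne_zero y)]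
    refine sum_disj_bound _ _ _ (by positivity) (fun i _ => norm_fderiv_cfield_le k (hrpos i) y) ?_
    intro i hi j hj h1 h2
    refine hdis y i hi j hj ?_ ?_
    · by_contra h; exact h1 (fderiv_cfield_zero k (hrpos i) h)
    · by_contra h; exact h2 (fderiv_cfield_zero k (hrpos j) h)
  have hle := hcl (fun y => ∑ i ∈ s, cfield k (i : Eu n) (r i) y) (ContDiff.sum hC1) hbound (by
    intro y
    refine sum_disj_bound _ _ _ hτ.le (fun i _ => (norm_cfield_le k (hrpos i) y).trans (htr i i.2).2.2.le) ?_
    intro i hi j hj h1 h2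
    refine hdis y i hi j hj ?_ ?_
    · by_contra h; exact h1 (cfield_zero k (hrpos i) h)
    · by_contra h; exact h2 (cfield_zero k (hrpos j) h))
  have heq : ∫ y, dvg (fun y => ∑ i ∈ s, cfield k (i : Eu n) (r i) y) y ∂ν
      = ∑ i ∈ s, ∫ y, dvg (cfield k (i : Eu n) (r i)) y ∂ν := by
    rw [← integral_finset_sum]
    · exact integral_congr_ae (Filter.Eventually.of_forall fun y => dvg_sum s _ hC1 y)
    · intro i hi
      exact integrable_dvg (hC1 i hi) (norm_fderiv_cfield_le k (hrpos i))
  rw [heq] at hle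
  have hge : ∑ i ∈ s, c * ν.real (Metric.closedBall (i : Eu n) (r i)) ≤
      ∑ i ∈ s, ∫ y, dvg (cfield k (i : Eu n) (r i)) y ∂ν := by
    refine Finset.sum_le_sum fun i _ => ?_
    have h := (htr i i.2).1
    have := hgain ν i (r i / 2) (by have := hrpos i; positivity) h.1 h.2
    rwa [show 2 * (r i / 2) = r i by ring] at this
  rw [← Finset.mul_sum] at hge
  nlinarith

lemma cover_null {n : ℕ} (hn : 0 < n) {K : Set (Eu n)} (hK : IsCompact K)
    (hK0 : (volume : Measure (Eu n)) K = 0) (ε δ0 : ℝ) (hε : 0 < ε) (hδ0 : 0 < δ0) :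
    ∃ δ, 0 < δ ∧ δ < δ0 ∧ ∃ s : Finset (Eu n), K ⊆ ⋃ x ∈ s, Metric.closedBall x δ ∧
      (s.card : ℝ) * δ ^ n ≤ ε := by
  set v := (volume : Measure (Eu n)).real (Metric.ball 0 1)
  have hv : 0 < v := ENNReal.toReal_pos (Metric.measure_ball_pos _ _ one_pos).ne' measure_ball_lt_top.ne
  have ht := tendsto_measure_cthickening_of_isCompact (μ := (volume : Measure (Eu n))) hK
  rw [hK0] at ht
  have hev := ht.eventually (gt_mem_nhds (show (0:ℝ≥0∞) < ENNReal.ofReal (ε * v / 5 ^ n) by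
    rw [ENNReal.ofReal_pos]; positivity))
  rw [Metric.eventually_nhds_iff] at hev
  obtain ⟨t, ht0, hev⟩ := hev
  set δ := min (δ0 / 2) (t / 2) with hδ
  have hδp : 0 < δ := by positivity
  refine ⟨δ, hδp, lt_of_le_of_lt (min_le_left _ _) (by linarith), ?_⟩
  have hvol := hev (y := δ) (by
    rw [Real.dist_eq, sub_zero, abs_of_pos hδp]
    exact lt_of_le_of_lt (min_le_right _ _) (by linarith))
  obtain ⟨u, huK, hud, huc⟩ := Vitali.exists_disjoint_subfamily_covering_enlargement_closedBall
    K id (fun _ => δ / 5) (δ / 5) (fun _ _ => le_rfl) 5 (by norm_num)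
  simp only [id] at hud huc
  have hcard : ∀ s : Finset (Eu n), (s : Set (Eu n)) ⊆ u → (s.card : ℝ) * δ ^ n ≤ ε := by
    intro s hs
    have h1 : (volume : Measure (Eu n)) (⋃ x ∈ s, Metric.closedBall x (δ / 5)) ≤
        volume (Metric.cthickening δ K) := by
      apply measure_mono
      intro y hy
      simp only [Set.mem_iUnion] at hy
      obtain ⟨x, hx, hy⟩ := hy
      exact Metric.closedBall_subset_cthickening (huK (hs hx)) _
        (Metric.closedBall_subset_closedBall (by linarith) hy)
    rw [measure_biUnion_finset (hud.subset hs)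
      (fun b _ => Metric.isClosed_closedBall.measurableSet)] at h1
    have h2 := (h1.trans hvol.le)
    have h3 : (∑ x ∈ s, (volume : Measure (Eu n)) (Metric.closedBall x (δ / 5))) =
        ENNReal.ofReal (s.card * ((δ / 5) ^ n * v)) := by
      rw [Finset.sum_congr rfl (fun x _ => Measure.addHaar_closedBall _ x (by positivity)),
        Finset.sum_const, nsmul_eq_mul, ENNReal.ofReal_mul (by positivity),
        ENNReal.ofReal_mul (by positivity), finrank_euclideanSpace, Fintype.card_fin]
      simp [v, Measure.real, measure_ball_lt_top.ne]
    rw [h3, ENNReal.ofReal_le_ofReal_iff (by positivity), div_pow] at h2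
    have : (s.card : ℝ) * (δ ^ n / 5 ^ n * v) = (s.card * δ ^ n) * (v / 5 ^ n) := by ring
    rw [this, mul_div_assoc] at h2
    exact le_of_mul_le_mul_right h2 (by positivity)
  have hfin : u.Finite := by
    by_contra hinf
    obtain ⟨N, hN⟩ := exists_nat_gt (ε / δ ^ n)
    obtain ⟨s, hs, hsc⟩ := Set.Infinite.exists_subset_card_eq hinf N
    have := hcard s hs
    rw [hsc] at this
    rw [div_lt_iff₀ (by positivity)] at hN
    linarith
  refine ⟨hfin.toFinset, ?_, hcard _ (by simp)⟩
  intro x hx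
  obtain ⟨b, hb, hxb⟩ := huc x hx
  simp only [Set.mem_iUnion]
  refine ⟨b, by simpa using hb, ?_⟩
  have := hxb (Metric.mem_closedBall_self (by positivity))
  simpa [show (5:ℝ) * (δ / 5) = δ by ring] using this

/-- discrete optimal transport potentials with multiplicity two -/
lemma ot {γ ι : Type*} [Fintype γ] [Fintype ι] [Nonempty ι] (a : γ → ι → ℝ)
    (h2 : 2 * Fintype.card ι ≤ Fintype.card γ) :
    ∃ c : ι → ℝ, ∀ i, ∃ p q, p ≠ q ∧ (∀ j, a p j - c j ≤ a p i - c i) ∧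
      (∀ j, a q j - c j ≤ a q i - c i) := by
  classical
  set W : (ι → ℝ) → γ → ℝ := fun c p => Finset.univ.sup' Finset.univ_nonempty (fun j => a p j - c j) with hW
  have hWge : ∀ c p j, a p j - c j ≤ W c p := fun c p j =>
    Finset.le_sup' (fun j => a p j - c j) (Finset.mem_univ j)
  have hWle : ∀ c p b, (∀ j, a p j - c j ≤ b) → W c p ≤ b := fun c p b h =>
    Finset.sup'_le _ _ (fun j _ => h j)
  have hWex : ∀ c p, ∃ j, W c p = a p j - c j := fun c p => by
    obtain ⟨j, _, hj⟩ := Finset.exists_mem_eq_sup' (Finset.univ_nonempty (α := ι)) (fun j => a p j - c j)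
    exact ⟨j, hj⟩
  set N : ℝ := (Fintype.card ι : ℝ)
  set G : ℝ := (Fintype.card γ : ℝ)
  have hN : 0 < N := by simp [N, Fintype.card_pos]
  have hGN : 2 * N ≤ G := by simp only [N, G]; exact_mod_cast h2
  have hG : 0 < G := by linarith
  set J : (ι → ℝ) → ℝ := fun c => ∑ p, W c p + (G / N) * ∑ j, c j with hJ
  have hJc : Continuous J := by
    have : ∀ p, Continuous (fun c => W c p) := fun p =>
      Continuous.finset_sup'_apply _ (fun j _ => by fun_prop)
    fun_prop
  obtain ⟨A, hA0, hA⟩ : ∃ A : ℝ, 0 ≤ A ∧ ∀ p j, |a p j| ≤ A := by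
    refine ⟨∑ p, ∑ j, |a p j|, by positivity, fun p j => ?_⟩
    refine le_trans ?_ (Finset.single_le_sum (f := fun p => ∑ j, |a p j|) (fun p _ => by positivity) (Finset.mem_univ p))
    exact Finset.single_le_sum (f := fun j => |a p j|) (fun j _ => by positivity) (Finset.mem_univ j)
  set M := 2 * N * A
  obtain ⟨c, hcm, hc⟩ := (isCompact_Icc (a := (0 : ι → ℝ)) (b := fun _ => M)).exists_isMinOn
    ⟨0, by constructor <;> intro i <;> simp; positivity⟩ hJc.continuousOn
  have hJ0 : J 0 ≤ G * A := by
    simp only [hJ, Pi.zero_apply, Finset.sum_const_zero, mul_zero, add_zero]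
    refine (Finset.sum_le_sum (fun p _ => hWle 0 p A fun j => ?_)).trans ?_
    · simpa using (le_abs_self _).trans (hA p j)
    · simp [G]
  have hglob : ∀ c', J c ≤ J c' := by
    intro c'
    obtain ⟨j0, _, hj0⟩ := Finset.exists_min_image Finset.univ c' Finset.univ_nonempty
    set d : ι → ℝ := fun j => c' j - c' j0
    have hd0 : ∀ j, 0 ≤ d j := fun j => sub_nonneg.2 (hj0 j (Finset.mem_univ j))
    have hJd : J d = J c' := by
      have : ∀ p, W d p = W c' p + c' j0 := by
        intro p
        apply le_antisymm
        · refine hWle _ _ _ fun j => ?_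
          have := hWge c' p j
          simp only [d]; linarith
        · obtain ⟨j, hj⟩ := hWex c' p
          have := hWge d p j
          simp only [d] at this; linarith
      simp only [hJ, this, d, Finset.sum_add_distrib, Finset.sum_sub_distrib, Finset.sum_const,
        Finset.card_univ, nsmul_eq_mul]
      change _ + G * _ + G / N * (_ - N * _) = _
      field_simp
      ring
    rw [← hJd]
    by_cases hdM : ∀ j, d j ≤ M
    · exact hc ⟨fun j => hd0 j, fun j => hdM j⟩
    · push Not at hdM
      obtain ⟨j1, hj1⟩ := hdM
      have hJc0 : J c ≤ J 0 := hc ⟨le_rfl, fun j => by simp; positivity⟩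
      have h1 : -(G * A) ≤ ∑ p, W d p := by
        have : ∑ _p : γ, (-A) ≤ ∑ p, W d p := by
          refine Finset.sum_le_sum fun p _ => ?_
          have h1 := hWge d p j0
          simp only [d, sub_self, sub_zero] at h1
          have := neg_le_of_abs_le (hA p j0)
          linarith
        simpa [G] using this
      have h3 : M ≤ ∑ j, d j := hj1.le.trans (Finset.single_le_sum (fun j _ => hd0 j) (Finset.mem_univ j1))
      have h4 : G / N * M ≤ G / N * ∑ j, d j := by gcongr
      have h5 : G / N * M = 2 * G * A := by simp only [M]; field_simp
      have : J d = ∑ p, W d p + (G / N) * ∑ j, d j := rfl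
      linarith
  refine ⟨c, fun i => ?_⟩
  by_contra hcon
  push Not at hcon
  -- set of p with i in argmax has at most one element
  set P : Finset γ := Finset.univ.filter (fun p => ∀ j, a p j - c j ≤ a p i - c i) with hP
  have hPc : P.card ≤ 1 := by
    rw [Finset.card_le_one]
    intro p hp q hq
    by_contra hne
    rw [hP, Finset.mem_filter] at hp hq
    obtain ⟨j, hj⟩ := hcon p q hne hp.2
    exact absurd (hq.2 j) (not_le.2 hj)
  have hgap : ∃ t > 0, ∀ p ∉ P, t ≤ W c p - (a p i - c i) := by
    have hpos : ∀ p ∉ P, 0 < W c p - (a p i - c i) := by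
      intro p hp
      simp only [hP, Finset.mem_filter, Finset.mem_univ, true_and, not_forall, not_le] at hp
      obtain ⟨j, hj⟩ := hp
      have := hWge c p j
      linarith
    by_cases hne : (Finset.univ \ P).Nonempty
    · obtain ⟨p0, hp0, hmin⟩ := Finset.exists_min_image _ (fun p => W c p - (a p i - c i)) hne
      refine ⟨_, hpos p0 (by simpa using hp0), fun p hp => hmin p (by simpa using hp)⟩
    · refine ⟨1, one_pos, fun p hp => absurd ⟨p, by simpa using hp⟩ hne⟩
  obtain ⟨t, ht, hgap⟩ := hgap
  set c' := Function.update c i (c i - t)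
  have hWP : ∀ p, W c' p ≤ W c p + if p ∈ P then t else 0 := by
    intro p
    refine hWle _ _ _ fun j => ?_
    by_cases hji : j = i
    · subst hji
      simp only [c', Function.update_self]
      split_ifs with hp
      · have := hWge c p j; linarith
      · have := hgap p hp; linarith
    · simp only [c', Function.update_of_ne hji]
      have := hWge c p j
      split_ifs <;> linarith
  have hsum : ∑ j, c' j = ∑ j, c j - t := by
    rw [Finset.sum_update_of_mem (Finset.mem_univ i), ← Finset.add_sum_erase _ c (Finset.mem_univ i),
      Finset.sdiff_singleton_eq_erase]
    ring
  have hs1 : ∑ p, W c' p ≤ ∑ p, W c p + t := by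
    refine (Finset.sum_le_sum fun p _ => hWP p).trans ?_
    rw [Finset.sum_add_distrib, Finset.sum_ite_mem, Finset.univ_inter, Finset.sum_const, nsmul_eq_mul]
    have : (P.card : ℝ) ≤ 1 := by exact_mod_cast hPc
    nlinarith
  have hfin := hglob c'
  have e1 : J c' = ∑ p, W c' p + (G / N) * (∑ j, c j - t) := by rw [← hsum]
  have e2 : J c = ∑ p, W c p + (G / N) * ∑ j, c j := rfl
  have e3 : 2 ≤ G / N := by rwa [le_div_iff₀ hN]
  nlinarith

section softmax
variable {n : ℕ} {γ : Type*} [Fintype γ]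

/-- weight -/
noncomputable def wt (P : γ → Eu n) (b : γ → ℝ) (τ : ℝ) (p : γ) (y : Eu n) : ℝ :=
  Real.exp ((inner ℝ (P p) y - b p) / τ)

/-- softmax probability -/
noncomputable def smp (P : γ → Eu n) (b : γ → ℝ) (τ : ℝ) (p : γ) (y : Eu n) : ℝ :=
  wt P b τ p y / ∑ q, wt P b τ q y

/-- softmax field -/
noncomputable def smf (P : γ → Eu n) (b : γ → ℝ) (τ : ℝ) (y : Eu n) : Eu n :=
  ∑ p, smp P b τ p y • P p

variable (P : γ → Eu n) (b : γ → ℝ) (τ : ℝ)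

lemma wt_pos (p : γ) (y : Eu n) : 0 < wt P b τ p y := Real.exp_pos _

lemma hasFDerivAt_wt (p : γ) (y : Eu n) :
    HasFDerivAt (wt P b τ p) ((wt P b τ p y / τ) • innerSL ℝ (P p)) y := by
  unfold wt
  have h1 : HasFDerivAt (fun y => (inner ℝ (P p) y - b p) / τ) (τ⁻¹ • innerSL ℝ (P p)) y := by
    have := ((innerSL ℝ (P p)).hasFDerivAt (x := y)).sub_const (b p) |>.const_mul τ⁻¹
    refine this.congr_of_eventuallyEq (Filter.Eventually.of_forall fun z => ?_)
    simp; ring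
  refine h1.exp.congr_fderiv ?_
  rw [smul_smul]; rfl

lemma contDiff_wt (p : γ) : ContDiff ℝ 1 (wt P b τ p) := by
  unfold wt
  have : ContDiff ℝ 1 (fun y : Eu n => inner ℝ (P p) y) := (innerSL ℝ (P p)).contDiff
  fun_prop

variable [Nonempty γ]

lemma Z_pos (y : Eu n) : 0 < ∑ q, wt P b τ q y :=
  Finset.sum_pos (fun p _ => wt_pos P b τ p y) Finset.univ_nonempty

lemma smp_nonneg (p : γ) (y : Eu n) : 0 ≤ smp P b τ p y :=
  div_nonneg (wt_pos _ _ _ _ _).le (Z_pos _ _ _ _).le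

lemma smp_sum (y : Eu n) : ∑ p, smp P b τ p y = 1 := by
  unfold smp
  rw [← Finset.sum_div, div_self (Z_pos P b τ y).ne']

lemma contDiff_smp (p : γ) : ContDiff ℝ 1 (smp P b τ p) := by
  unfold smp
  exact (contDiff_wt P b τ p).div (ContDiff.sum fun q _ => contDiff_wt P b τ q) (fun y => (Z_pos P b τ y).ne')

lemma contDiff_smf : ContDiff ℝ 1 (smf P b τ) := by
  unfold smf
  exact ContDiff.sum fun p _ => (contDiff_smp P b τ p).smul contDiff_const

lemma norm_smf_le {R : ℝ} (hR : ∀ p, ‖P p‖ ≤ R) (y : Eu n) : ‖smf P b τ y‖ ≤ R := by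
  unfold smf
  refine (norm_sum_le _ _).trans ?_
  calc ∑ p, ‖smp P b τ p y • P p‖ ≤ ∑ p, smp P b τ p y * R := by
        refine Finset.sum_le_sum fun p _ => ?_
        rw [norm_smul, Real.norm_eq_abs, abs_of_nonneg (smp_nonneg _ _ _ _ _)]
        exact mul_le_mul_of_nonneg_left (hR p) (smp_nonneg _ _ _ _ _)
    _ = R := by rw [← Finset.sum_mul, smp_sum, one_mul]

lemma hasFDerivAt_smp (p : γ) (y : Eu n) :
    HasFDerivAt (smp P b τ p) ((smp P b τ p y / τ) • innerSL ℝ (P p - smf P b τ y)) y := by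
  have hZ := (Z_pos P b τ y).ne'
  have hs : HasFDerivAt (fun y => ∑ q, wt P b τ q y) (∑ q, (wt P b τ q y / τ) • innerSL ℝ (P q)) y :=
    HasFDerivAt.fun_sum fun q _ => hasFDerivAt_wt P b τ q y
  have := (hasFDerivAt_wt P b τ p y).mul ((hasDerivAt_inv hZ).comp_hasFDerivAt y hs)
  refine (this.congr_of_eventuallyEq (Filter.Eventually.of_forall fun z => ?_)).congr_fderiv ?_
  · simp [smp, div_eq_mul_inv]
  · ext h
    have hsm : inner ℝ (smf P b τ y) h = (∑ q, wt P b τ q y * inner ℝ (P q) h) / ∑ q, wt P b τ q y := by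
      rw [smf, sum_inner, Finset.sum_div]
      refine Finset.sum_congr rfl fun q _ => ?_
      rw [real_inner_smul_left, smp]; ring
    have hsum : ∑ q, wt P b τ q y / τ * inner ℝ (P q) h = (∑ q, wt P b τ q y * inner ℝ (P q) h) / τ := by
      rw [Finset.sum_div]; refine Finset.sum_congr rfl fun q _ => ?_; ring
    simp only [smp, ContinuousLinearMap.add_apply, ContinuousLinearMap.smul_apply, smul_eq_mul,
      ContinuousLinearMap.sum_apply, innerSL_apply_apply, inner_sub_left, hsm, hsum, Function.comp]
    field_simp
    ring

lemma hasFDerivAt_smf (y : Eu n) :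
    HasFDerivAt (smf P b τ)
      (∑ p, ((smp P b τ p y / τ) • innerSL ℝ (P p - smf P b τ y)).smulRight (P p)) y := by
  exact HasFDerivAt.fun_sum fun p _ => (hasFDerivAt_smp P b τ p y).smul_const (P p)

lemma fderiv_smf_apply (y h : Eu n) :
    fderiv ℝ (smf P b τ) y h = ∑ p, (smp P b τ p y / τ * inner ℝ (P p - smf P b τ y) h) •
      (P p - smf P b τ y) := by
  rw [(hasFDerivAt_smf P b τ y).fderiv]
  simp only [smul_sub, Finset.sum_sub_distrib]
  rw [← Finset.sum_smul]
  have : ∑ p, smp P b τ p y / τ * inner ℝ (P p - smf P b τ y) h = 0 := by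
    have e : ∀ p, smp P b τ p y / τ * inner ℝ (P p - smf P b τ y) h
        = τ⁻¹ * (inner ℝ (smp P b τ p y • P p) h - smp P b τ p y * inner ℝ (smf P b τ y) h) := by
      intro p; rw [inner_sub_left, real_inner_smul_left]; ring
    simp only [e]
    rw [← Finset.mul_sum, Finset.sum_sub_distrib, ← sum_inner, ← Finset.sum_mul, smp_sum, smf]
    simp
  rw [this]
  simp [inner_sub_left]

lemma dvg_smf (y : Eu n) :
    dvg (smf P b τ) y = ∑ p, smp P b τ p y / τ * ‖P p - smf P b τ y‖ ^ 2 := by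
  unfold dvg
  simp only [fderiv_smf_apply]
  simp only [WithLp.ofLp_sum, Finset.sum_apply, PiLp.smul_apply, smul_eq_mul,
    EuclideanSpace.inner_single_right]
  rw [Finset.sum_comm]
  refine Finset.sum_congr rfl fun p _ => ?_
  rw [EuclideanSpace.norm_sq_eq, Finset.mul_sum]
  refine Finset.sum_congr rfl fun i _ => ?_
  simp
  ring

lemma norm_fderiv_smf_apply_le (hτ : 0 < τ) (y h : Eu n) :
    ‖fderiv ℝ (smf P b τ) y h‖ ≤ dvg (smf P b τ) y * ‖h‖ := by
  rw [fderiv_smf_apply, dvg_smf, Finset.sum_mul]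
  refine (norm_sum_le _ _).trans (Finset.sum_le_sum fun p _ => ?_)
  have h0 : 0 ≤ smp P b τ p y / τ := div_nonneg (smp_nonneg _ _ _ _ _) hτ.le
  rw [norm_smul, Real.norm_eq_abs, abs_mul, abs_of_nonneg h0]
  have := abs_real_inner_le_norm (P p - smf P b τ y) h
  calc _ ≤ smp P b τ p y / τ * (‖P p - smf P b τ y‖ * ‖h‖) * ‖P p - smf P b τ y‖ := by gcongr
    _ = _ := by ring

lemma smf_monotone (hτ : 0 < τ) (p : γ) (x y : Eu n)
    (hp : ∀ q, inner ℝ (P q) x - b q ≤ inner ℝ (P p) x - b p) :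
    inner ℝ (P p) (y - x) - τ * Fintype.card γ ≤ inner ℝ (smf P b τ y) (y - x) := by
  have h1 : ∀ q, smp P b τ q y * (inner ℝ (P p) (y - x) - inner ℝ (P q) (y - x)) ≤ τ := by
    intro q
    set s := ((inner ℝ (P p) y - b p) - (inner ℝ (P q) y - b q)) / τ with hs
    have hsτ : τ * s = (inner ℝ (P p) y - b p) - (inner ℝ (P q) y - b q) := by
      rw [hs]; field_simp
    have h2 : inner ℝ (P p) (y - x) - inner ℝ (P q) (y - x) ≤ τ * s := by
      rw [hsτ, inner_sub_right, inner_sub_right]; linarith [hp q]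
    have h3 : smp P b τ q y ≤ Real.exp (-s) := by
      have hle : wt P b τ p y ≤ ∑ q, wt P b τ q y :=
        Finset.single_le_sum (fun q _ => (wt_pos P b τ q y).le) (Finset.mem_univ p)
      calc smp P b τ q y ≤ wt P b τ q y / wt P b τ p y := by
            unfold smp; gcongr
            · exact (wt_pos _ _ _ _ _).le
            · exact wt_pos _ _ _ _ _
        _ = Real.exp (-s) := by
            unfold wt; rw [← Real.exp_sub, hs]; congr 1; ring
    have h0 := smp_nonneg P b τ q y
    have h4 : smp P b τ q y * (inner ℝ (P p) (y - x) - inner ℝ (P q) (y - x)) ≤ smp P b τ q y * (τ * s) := by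
      gcongr
    rcases le_total s 0 with hs0 | hs0
    · have : smp P b τ q y * (τ * s) ≤ 0 := mul_nonpos_of_nonneg_of_nonpos h0 (mul_nonpos_of_nonneg_of_nonpos hτ.le hs0)
      linarith
    · have h5 : smp P b τ q y * (τ * s) ≤ Real.exp (-s) * (τ * s) := by gcongr
      have h6 : Real.exp (-s) * s ≤ 1 := by
        rw [Real.exp_neg, inv_mul_le_iff₀ (Real.exp_pos _), mul_one]
        linarith [Real.add_one_le_exp s]
      nlinarith
  have h2 : ∑ q, smp P b τ q y * (inner ℝ (P p) (y - x) - inner ℝ (P q) (y - x)) ≤ Fintype.card γ * τ := by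
    refine (Finset.sum_le_sum fun q _ => h1 q).trans ?_
    simp
  have h3 : ∑ q, smp P b τ q y * (inner ℝ (P p) (y - x) - inner ℝ (P q) (y - x))
      = inner ℝ (P p) (y - x) - inner ℝ (smf P b τ y) (y - x) := by
    simp only [mul_sub, Finset.sum_sub_distrib]
    rw [← Finset.sum_mul, smp_sum, one_mul, smf, sum_inner]
    simp only [real_inner_smul_left]
  linarith
end softmax

/-- linear cut-off -/
noncomputable def cut1 {n : ℕ} (x : Eu n) (ρ : ℝ) (y : Eu n) : ℝ := max (1 - ‖y - x‖ ^ 2 / ρ ^ 2) 0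

lemma continuous_cut1 {n : ℕ} (x : Eu n) (ρ : ℝ) : Continuous (cut1 x ρ) := by
  unfold cut1; fun_prop

lemma cut1_nonneg {n : ℕ} (x : Eu n) (ρ : ℝ) (y : Eu n) : 0 ≤ cut1 x ρ y := le_max_right _ _

lemma cut1_le_one {n : ℕ} (x : Eu n) (ρ : ℝ) (y : Eu n) : cut1 x ρ y ≤ 1 := by
  refine max_le ?_ zero_le_one
  have : 0 ≤ ‖y - x‖ ^ 2 / ρ ^ 2 := by positivity
  linarith

lemma cs_of {n : ℕ} {x : Eu n} {ρ : ℝ} {f : Eu n → ℝ}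
    (h : ∀ y ∉ Metric.closedBall x ρ, f y = 0) : HasCompactSupport f :=
  HasCompactSupport.intro (isCompact_closedBall x ρ) h

lemma int_of {n : ℕ} {x : Eu n} {ρ : ℝ} {f : Eu n → ℝ} (hf : Continuous f)
    (h : ∀ y ∉ Metric.closedBall x ρ, f y = 0) : Integrable f :=
  hf.integrable_of_hasCompactSupport (cs_of h)

lemma flux {n : ℕ} {mf : Eu n → Eu n} (hm : ContDiff ℝ 1 mf) (x : Eu n) {ρ : ℝ} (hρ : 0 < ρ) :
    ∫ y, rcut 0 x ρ y * dvg mf y = (4 / ρ ^ 2) * ∫ y, cut1 x ρ y * inner ℝ (mf y) (y - x) := by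
  have hd := hm.continuous_fderiv one_ne_zero
  have hmi : ∀ i, ContDiff ℝ 1 (fun y => mf y i) := fun i => by fun_prop
  have hfd : ∀ i y (v : Eu n), fderiv ℝ (fun y => mf y i) y v = (fderiv ℝ mf y v) i := by
    intro i y v
    have h := (hm.differentiable one_ne_zero y).hasFDerivAt
    have := ((EuclideanSpace.proj (𝕜 := ℝ) i).hasFDerivAt (x := mf y)).comp y h
    have e : HasFDerivAt (fun y => mf y i) ((EuclideanSpace.proj (𝕜 := ℝ) i).comp (fderiv ℝ mf y)) y := this
    rw [e.fderiv]; rfl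
  have hr := contDiff_rcut 0 x ρ
  have hrd := hr.continuous_fderiv one_ne_zero
  have hrc : Continuous (rcut 0 x ρ) := hr.continuous
  have hr0 : ∀ y ∉ Metric.closedBall x ρ, fderiv ℝ (rcut 0 x ρ) y = 0 := by
    intro y hy
    rw [(hasFDerivAt_rcut 0 x ρ y).fderiv, cut_zero hρ hy]; simp
  have hdi : ∀ i : Fin n, Continuous fun y => (fderiv ℝ mf y (EuclideanSpace.single i 1)) i := by
    intro i
    have : Continuous fun y => fderiv ℝ mf y (EuclideanSpace.single i 1) := hd.clm_apply continuous_const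
    fun_prop
  have hI1 : ∀ i : Fin n, Integrable fun y => rcut 0 x ρ y * (fderiv ℝ mf y (EuclideanSpace.single i 1)) i := by
    intro i
    refine int_of (x := x) (ρ := ρ) (hrc.mul (hdi i)) fun y hy => ?_
    rw [rcut_eq_zero 0 hρ hy, zero_mul]
  have hmc : ∀ i, Continuous fun y => mf y i := fun i => (hmi i).continuous
  have hI2 : ∀ i : Fin n, Integrable fun y => fderiv ℝ (rcut 0 x ρ) y (EuclideanSpace.single i 1) * mf y i := by
    intro i
    refine int_of (x := x) (ρ := ρ) ((hrd.clm_apply continuous_const).mul (hmc i)) fun y hy => ?_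
    rw [hr0 y hy]; simp
  have hI3 : ∀ i : Fin n, Integrable fun y => rcut 0 x ρ y * mf y i := by
    intro i
    refine int_of (x := x) (ρ := ρ) (hrc.mul (hmc i)) fun y hy => ?_
    rw [rcut_eq_zero 0 hρ hy, zero_mul]
  have hpart : ∀ i : Fin n, ∫ y, rcut 0 x ρ y * (fderiv ℝ mf y (EuclideanSpace.single i 1)) i
      = - ∫ y, fderiv ℝ (rcut 0 x ρ) y (EuclideanSpace.single i 1) * mf y i := by
    intro i
    have := integral_mul_fderiv_eq_neg_fderiv_mul_of_integrable (μ := (volume : Measure (Eu n)))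
      (f := rcut 0 x ρ) (g := fun y => mf y i) (v := EuclideanSpace.single i 1)
      (hI2 i) (by simpa only [hfd] using hI1 i) (hI3 i)
      (fun y _ => hr.differentiable one_ne_zero y) (fun y _ => (hmi i).differentiable one_ne_zero y)
    simpa only [hfd] using this
  have e1 : ∫ y, rcut 0 x ρ y * dvg mf y = ∑ i, ∫ y, rcut 0 x ρ y * (fderiv ℝ mf y (EuclideanSpace.single i 1)) i := by
    rw [← integral_finsetSum _ (fun i _ => hI1 i)]
    simp only [dvg, Finset.mul_sum]
  rw [e1]
  simp only [hpart]
  rw [Finset.sum_neg_distrib, ← integral_finsetSum _ (fun i _ => hI2 i), ← integral_neg, ← integral_const_mul]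
  refine integral_congr_ae (Filter.Eventually.of_forall fun y => ?_)
  simp only
  rw [← Finset.sum_neg_distrib, real_inner_comm, PiLp.inner_apply, Finset.mul_sum, Finset.mul_sum]
  refine Finset.sum_congr rfl fun i _ => ?_
  rw [(hasFDerivAt_rcut 0 x ρ y).fderiv]
  simp [cut1, EuclideanSpace.inner_single_right, mul_sub]
  ring

lemma setInt_ge_rcut {n : ℕ} {mf : Eu n → Eu n} (hm : ContDiff ℝ 1 mf) (h0 : ∀ y, 0 ≤ dvg mf y)
    (x : Eu n) {ρ : ℝ} (hρ : 0 < ρ) :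
    ∫ y, rcut 0 x ρ y * dvg mf y ≤ ∫ y in Metric.closedBall x ρ, dvg mf y := by
  rw [← integral_indicator Metric.isClosed_closedBall.measurableSet]
  have hc := continuous_dvg hm
  have hrc := (contDiff_rcut 0 x ρ).continuous
  refine integral_mono (int_of (x := x) (ρ := ρ) (hrc.mul hc) fun y hy => ?_) ?_ fun y => ?_
  · rw [rcut_eq_zero 0 hρ hy, zero_mul]
  · rw [integrable_indicator_iff Metric.isClosed_closedBall.measurableSet]
    exact hc.continuousOn.integrableOn_compact (isCompact_closedBall _ _)
  · by_cases hy : y ∈ Metric.closedBall x ρ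
    · simp only [Set.indicator_of_mem hy]
      have := rcut_le_one 0 x ρ y
      nlinarith [h0 y]
    · simp only [Set.indicator_of_notMem hy, rcut_eq_zero 0 hρ hy, zero_mul, le_refl]

lemma vol_cb {n : ℕ} (x : Eu n) {r : ℝ} (hr : 0 ≤ r) : (volume : Measure (Eu n)).real (Metric.closedBall x r)
    = r ^ n * (volume : Measure (Eu n)).real (Metric.ball 0 1) := by
  rw [Measure.real, Measure.addHaar_closedBall _ _ hr, finrank_euclideanSpace, Fintype.card_fin,
    ENNReal.toReal_mul, ENNReal.toReal_ofReal (by positivity)]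
  rfl

lemma flux_upper {n : ℕ} {mf : Eu n → Eu n} (hm : ContDiff ℝ 1 mf) (h0 : ∀ y, 0 ≤ dvg mf y)
    {B : ℝ} (hB : ∀ y, ‖mf y‖ ≤ B) (x : Eu n) {r : ℝ} (hr : 0 < r) :
    (∫ y in Metric.closedBall x r, dvg mf y) * r ≤
      (4 * 2 ^ n * B * (volume : Measure (Eu n)).real (Metric.ball 0 1)) * r ^ n := by
  have hc := continuous_dvg hm
  have hrc := (contDiff_rcut 0 x (2 * r)).continuous
  have hB0 : 0 ≤ B := (norm_nonneg _).trans (hB 0)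
  have hms : MeasurableSet (Metric.closedBall x r) := Metric.isClosed_closedBall.measurableSet
  have h1 : ∫ y in Metric.closedBall x r, dvg mf y ≤ 2 * ∫ y, rcut 0 x (2 * r) y * dvg mf y := by
    rw [← integral_indicator hms, ← integral_const_mul]
    refine integral_mono ?_ ((int_of (x := x) (ρ := 2 * r) (hrc.mul hc) fun y hy => ?_).const_mul 2) fun y => ?_
    · rw [integrable_indicator_iff hms]
      exact hc.continuousOn.integrableOn_compact (isCompact_closedBall _ _)
    · rw [Pi.mul_apply, rcut_eq_zero 0 (by positivity) hy, zero_mul]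
    · by_cases hy : y ∈ Metric.closedBall x r
      · simp only [Set.indicator_of_mem hy]
        have : 1 / 2 ≤ rcut 0 x (2 * r) y := by
          unfold rcut
          rw [Metric.mem_closedBall, dist_eq_norm] at hy
          have : ‖y - x‖ ^ 2 / (2 * r) ^ 2 ≤ 1 / 4 := by
            rw [div_le_iff₀ (by positivity)]; nlinarith [norm_nonneg (y - x)]
          have : 3 / 4 ≤ max (1 - ‖y - x‖ ^ 2 / (2 * r) ^ 2) 0 := le_max_of_le_left (by linarith)
          simp only [zero_add]
          nlinarith
        nlinarith [h0 y]
      · simp only [Set.indicator_of_notMem hy]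
        have := rcut_nonneg 0 x (2 * r) y
        have := h0 y
        positivity
  rw [flux hm x (by positivity)] at h1
  have h2 : ∫ y, cut1 x (2 * r) y * inner ℝ (mf y) (y - x) ≤ (2 * r) ^ n * (volume : Measure (Eu n)).real (Metric.ball 0 1) * (B * (2 * r)) := by
    rw [← vol_cb x (show 0 ≤ 2 * r by positivity)]
    have hms2 : MeasurableSet (Metric.closedBall x (2 * r)) := Metric.isClosed_closedBall.measurableSet
    have hcst : (volume : Measure (Eu n)).real (Metric.closedBall x (2 * r)) * (B * (2 * r)) =
        ∫ _y in Metric.closedBall x (2 * r), B * (2 * r) := by rw [setIntegral_const, smul_eq_mul]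
    rw [hcst, ← integral_indicator hms2]
    refine integral_mono (int_of (x := x) (ρ := 2 * r) ((continuous_cut1 _ _).mul (hm.continuous.inner (by fun_prop))) fun y hy => ?_) ?_ fun y => ?_
    · rw [cut1, cut_zero (by positivity) hy, zero_mul]
    · rw [integrable_indicator_iff hms2]
      exact integrableOn_const measure_closedBall_lt_top.ne
    · by_cases hy : y ∈ Metric.closedBall x (2 * r)
      · simp only [Set.indicator_of_mem hy]
        rw [Metric.mem_closedBall, dist_eq_norm] at hy
        have h3 := real_inner_le_norm (mf y) (y - x)
        have h4 : ‖mf y‖ * ‖y - x‖ ≤ B * (2 * r) := mul_le_mul (hB y) hy (norm_nonneg _) hB0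
        have := cut1_le_one x (2 * r) y
        have := cut1_nonneg x (2 * r) y
        have h5 : 0 ≤ B * (2 * r) := by positivity
        nlinarith
      · simp only [Set.indicator_of_notMem hy, cut1, cut_zero (by positivity) hy, zero_mul, le_refl]
  have h3 := mul_le_mul_of_nonneg_left h2 (show 0 ≤ 2 * (4 / (2 * r) ^ 2) * r by positivity)
  calc _ ≤ (2 * (4 / (2 * r) ^ 2 * ∫ y, cut1 x (2 * r) y * inner ℝ (mf y) (y - x))) * r := by gcongr
    _ = 2 * (4 / (2 * r) ^ 2) * r * ∫ y, cut1 x (2 * r) y * inner ℝ (mf y) (y - x) := by ring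
    _ ≤ _ := h3
    _ = _ := by rw [mul_pow 2 r n]; field_simp

lemma flux_lower {n : ℕ} {mf : Eu n → Eu n} (hm : ContDiff ℝ 1 mf) (h0 : ∀ y, 0 ≤ dvg mf y)
    (x : Eu n) {ρ : ℝ} (hρ : 0 < ρ) (p q : Eu n) (hpq : p ≠ q) {t : ℝ}
    (hp : ∀ y, inner ℝ p (y - x) - t ≤ inner ℝ (mf y) (y - x))
    (hq : ∀ y, inner ℝ q (y - x) - t ≤ inner ℝ (mf y) (y - x)) :
    (volume : Measure (Eu n)).real (Metric.ball 0 1) * ρ ^ n *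
      ((1 / 8) ^ n * ‖p - q‖ / (4 * ρ) - 4 * t / ρ ^ 2) ≤ ∫ y in Metric.closedBall x ρ, dvg mf y := by
  refine le_trans ?_ (setInt_ge_rcut hm h0 x hρ)
  rw [flux hm x hρ]
  set V := (volume : Measure (Eu n)).real (Metric.ball 0 1)
  have hV : 0 ≤ V := measureReal_nonneg
  have ht : 0 ≤ t := by simpa using hp x
  set v := p - q
  have hv : 0 < ‖v‖ := norm_pos_iff.2 (sub_ne_zero.2 hpq)
  have hcut := continuous_cut1 x ρ
  have hz : ∀ y ∉ Metric.closedBall x ρ, cut1 x ρ y = 0 := fun y hy => cut_zero hρ hy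
  set I : ℝ := ∫ y, cut1 x ρ y * inner ℝ (mf y) (y - x)
  set g : Eu n → ℝ := fun y => cut1 x ρ y * max (inner ℝ p (y - x)) (inner ℝ q (y - x)) with hg
  have hgI : Integrable g := int_of (x := x) (ρ := ρ) (by fun_prop) fun y hy => by simp [hg, hz y hy]
  have hcI : Integrable (cut1 x ρ) := int_of (x := x) (ρ := ρ) hcut hz
  have h1 : ∫ y, g y - t * cut1 x ρ y ≤ I := by
    refine integral_mono (hgI.sub (hcI.const_mul t)) (int_of (x := x) (ρ := ρ)
      (hcut.mul (hm.continuous.inner (by fun_prop))) fun y hy => by rw [hz y hy, zero_mul]) fun y => ?_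
    have hc := cut1_nonneg x ρ y
    have : max (inner ℝ p (y - x)) (inner ℝ q (y - x)) ≤ inner ℝ (mf y) (y - x) + t :=
      max_le (by linarith [hp y]) (by linarith [hq y])
    simp only [hg]
    nlinarith
  have hbm : MeasurableSet (Metric.closedBall x ρ) := Metric.isClosed_closedBall.measurableSet
  have h2 : ∫ y, cut1 x ρ y ≤ ρ ^ n * V := by
    rw [← vol_cb x hρ.le]
    have hcst : (volume : Measure (Eu n)).real (Metric.closedBall x ρ) =
        ∫ _y in Metric.closedBall x ρ, (1:ℝ) := by rw [setIntegral_const, smul_eq_mul, mul_one]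
    rw [hcst, ← integral_indicator hbm]
    refine integral_mono hcI ?_ fun y => ?_
    · rw [integrable_indicator_iff hbm]
      exact integrableOn_const measure_closedBall_lt_top.ne
    · by_cases hy : y ∈ Metric.closedBall x ρ
      · simp only [Set.indicator_of_mem hy]; exact cut1_le_one x ρ y
      · simp only [Set.indicator_of_notMem hy, hz y hy, le_refl]
  have h3 : ∫ y, g y = ∫ y, g (2 • x - y) := by
    have := integral_sub_left_eq_self g (volume : Measure (Eu n)) (2 • x)
    exact this.symm
  have hrefl : ∀ y, g y + g (2 • x - y) = cut1 x ρ y * |inner ℝ v (y - x)| := by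
    intro y
    have e1 : (2 • x - y) - x = -(y - x) := by rw [two_smul]; abel
    have e2 : cut1 x ρ (2 • x - y) = cut1 x ρ y := by unfold cut1; rw [e1, norm_neg]
    simp only [hg, e2, e1, inner_neg_right, v, inner_sub_left (E := Eu n) p q]
    rw [← mul_add]
    congr 1
    rcases le_total (inner ℝ p (y - x)) (inner ℝ q (y - x)) with h | h
    · rw [max_eq_right h, max_eq_left (by linarith), abs_of_nonpos (by linarith)]; ring
    · rw [max_eq_left h, max_eq_right (by linarith), abs_of_nonneg (by linarith)]; ring
  have hgI2 : Integrable (fun y => g (2 • x - y)) := hgI.comp_sub_left (2 • x)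
  have h4 : 2 * ∫ y, g y = ∫ y, cut1 x ρ y * |inner ℝ v (y - x)| := by
    rw [two_mul]
    nth_rewrite 2 [h3]
    rw [← integral_add hgI hgI2]
    exact integral_congr_ae (Filter.Eventually.of_forall hrefl)
  set z : Eu n := x + (ρ / (2 * ‖v‖)) • v
  have hbm2 : MeasurableSet (Metric.closedBall z (ρ / 8)) := Metric.isClosed_closedBall.measurableSet
  have h5 : (ρ / 8) ^ n * V * (ρ * ‖v‖ / 8) ≤ ∫ y, cut1 x ρ y * |inner ℝ v (y - x)| := by
    rw [← vol_cb z (show 0 ≤ ρ / 8 by positivity)]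
    have hcst : (volume : Measure (Eu n)).real (Metric.closedBall z (ρ / 8)) * (ρ * ‖v‖ / 8) =
        ∫ _y in Metric.closedBall z (ρ / 8), (ρ * ‖v‖ / 8) := by rw [setIntegral_const, smul_eq_mul]
    rw [hcst, ← integral_indicator hbm2]
    refine integral_mono ?_ (int_of (x := x) (ρ := ρ) (by fun_prop) fun y hy => by rw [hz y hy, zero_mul]) fun y => ?_
    · rw [integrable_indicator_iff hbm2]
      exact integrableOn_const measure_closedBall_lt_top.ne
    · by_cases hy : y ∈ Metric.closedBall z (ρ / 8)
      · simp only [Set.indicator_of_mem hy]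
        rw [Metric.mem_closedBall, dist_eq_norm] at hy
        have e : y - x = (ρ / (2 * ‖v‖)) • v + (y - z) := by simp only [z]; abel
        have n1 : ‖(ρ / (2 * ‖v‖)) • v‖ = ρ / 2 := by
          rw [norm_smul, Real.norm_eq_abs, abs_of_nonneg (by positivity)]; field_simp
        have n2 : ‖y - x‖ ≤ 5 / 8 * ρ := by
          rw [e]; refine (norm_add_le _ _).trans ?_; rw [n1]; linarith
        have n3 : 1 / 2 ≤ cut1 x ρ y := by
          refine le_max_of_le_left ?_
          have : ‖y - x‖ ^ 2 / ρ ^ 2 ≤ 1 / 2 := by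
            rw [div_le_iff₀ (by positivity)]; nlinarith [norm_nonneg (y - x)]
          linarith
        have n4 : 3 / 8 * (ρ * ‖v‖) ≤ inner ℝ v (y - x) := by
          rw [e, inner_add_right, real_inner_smul_right, real_inner_self_eq_norm_sq]
          have := neg_le_of_abs_le (abs_real_inner_le_norm v (y - z))
          have e3 : ρ / (2 * ‖v‖) * ‖v‖ ^ 2 = ρ * ‖v‖ / 2 := by field_simp
          rw [e3]
          nlinarith
        have n5 := le_abs_self (inner ℝ v (y - x))
        have : 0 < ρ * ‖v‖ := by positivity
        nlinarith
      · simp only [Set.indicator_of_notMem hy]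
        exact mul_nonneg (cut1_nonneg _ _ _) (abs_nonneg _)
  rw [integral_sub hgI (hcI.const_mul t), integral_const_mul] at h1
  have h6 : t * ∫ y, cut1 x ρ y ≤ t * (ρ ^ n * V) := by gcongr
  have h7 : (ρ / 8) ^ n * V * (ρ * ‖v‖ / 8) / 2 - t * (ρ ^ n * V) ≤ I := by linarith
  have h8 := mul_le_mul_of_nonneg_left h7 (show 0 ≤ 4 / ρ ^ 2 by positivity)
  refine le_trans (le_of_eq ?_) h8
  rw [div_pow, div_pow, one_pow]
  field_simp
  ring

lemma field_exists {n : ℕ} (hn : 0 < n) {K : Set (Eu n)} (hK : IsCompact K) (hKne : K.Nonempty)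
    (hK0 : (volume : Measure (Eu n)) K = 0) (L δ0 : ℝ) (hL : 0 < L) (hδ0 : 0 < δ0) :
    ∃ δ, 0 < δ ∧ δ < δ0 ∧ ∃ mf : Eu n → Eu n, ContDiff ℝ 1 mf ∧ (∀ y, ‖mf y‖ ≤ n) ∧
      (∀ y h, ‖fderiv ℝ mf y h‖ ≤ dvg mf y * ‖h‖) ∧ (∀ y, 0 ≤ dvg mf y) ∧
      ∀ x ∈ K, L * δ ^ n ≤ ∫ y in Metric.closedBall x δ, dvg mf y := by
  set V := (volume : Measure (Eu n)).real (Metric.ball 0 1) with hVdef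
  have hV : 0 < V := ENNReal.toReal_pos (Metric.measure_ball_pos _ _ one_pos).ne' measure_ball_lt_top.ne
  -- grid parameter
  set κ : ℝ := V * (1 / 16) ^ n / (8 * L) with hκ
  have hκp : 0 < κ := by positivity
  obtain ⟨δ, hδ, hδlt, s, hcov, hcard⟩ := cover_null hn hK hK0 ((κ / 2) ^ n / 2) (min (κ / 2) (δ0 / 2))
    (by positivity) (by positivity)
  have hδκ : δ < κ / 2 := lt_of_lt_of_le hδlt (min_le_left _ _)
  have hδδ0 : δ < δ0 / 2 := lt_of_lt_of_le hδlt (min_le_right _ _)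
  set M : ℕ := ⌊κ / δ⌋₊ with hM
  have hM1 : (M : ℝ) * δ ≤ κ := by
    have := Nat.floor_le (show 0 ≤ κ / δ by positivity)
    rwa [le_div_iff₀ hδ] at this
  have hM2 : κ / 2 ≤ M * δ := by
    have := Nat.lt_floor_add_one (κ / δ)
    rw [div_lt_iff₀ hδ] at this
    change κ < (M + 1) * δ at this
    linarith
  have hMpos : 0 < (M : ℝ) := by
    by_contra h
    nlinarith
  have hM0 : 0 < M := by exact_mod_cast hMpos
  haveI : NeZero M := ⟨hM0.ne'⟩
  have hsne : s.Nonempty := by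
    obtain ⟨x, hx⟩ := hKne
    have := hcov hx
    simp only [Set.mem_iUnion] at this
    obtain ⟨y, hy, _⟩ := this
    exact ⟨y, hy⟩
  haveI : Nonempty s := hsne.to_subtype
  set P : (Fin n → Fin M) → Eu n := fun f => WithLp.toLp 2 (fun i => (f i : ℝ) / M) with hP
  have h2 : 2 * Fintype.card s ≤ Fintype.card (Fin n → Fin M) := by
    have e1 : 2 * (s.card : ℝ) * δ ^ n ≤ M ^ n * δ ^ n := by
      have : (κ / 2) ^ n ≤ (M * δ) ^ n := by gcongr
      rw [mul_pow] at this
      linarith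
    have e2 : 2 * (s.card : ℝ) ≤ M ^ n := le_of_mul_le_mul_right e1 (by positivity)
    simp only [Fintype.card_coe, Fintype.card_pi, Fintype.card_fin, Finset.prod_const, Finset.card_univ]
    exact_mod_cast e2
  obtain ⟨c, hc⟩ := ot (γ := Fin n → Fin M) (ι := s) (fun p j => inner ℝ (P p) (j : Eu n)) h2
  set b : (Fin n → Fin M) → ℝ := fun p => Finset.univ.sup' Finset.univ_nonempty
    (fun j : s => inner ℝ (P p) (j : Eu n) - c j) with hb
  set N : ℝ := (Fintype.card (Fin n → Fin M) : ℝ) with hNdef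
  have hN : 0 < N := by simp only [hNdef]; exact_mod_cast Fintype.card_pos
  set τ : ℝ := (1 / 8) ^ n * δ / (32 * M * N) with hτ
  have hτp : 0 < τ := by positivity
  have hPn : ∀ p, ‖P p‖ ≤ n := by
    intro p
    have h1 : ‖P p‖ ^ 2 ≤ n ^ 2 := by
      rw [EuclideanSpace.norm_sq_eq]
      calc ∑ i, ‖P p i‖ ^ 2 ≤ ∑ _i : Fin n, (1:ℝ) := by
            refine Finset.sum_le_sum fun i _ => ?_
            simp only [hP, Real.norm_eq_abs, sq_abs]
            have : (p i : ℝ) / M ≤ 1 := by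
              rw [div_le_one hMpos]; exact_mod_cast (p i).2.le
            have : 0 ≤ (p i : ℝ) / M := by positivity
            nlinarith
        _ = n := by simp
        _ ≤ n ^ 2 := by exact_mod_cast Nat.le_self_pow two_ne_zero n
    exact (pow_le_pow_iff_left₀ (norm_nonneg _) (by positivity) two_ne_zero).1 h1
  have hPd : ∀ p q, p ≠ q → 1 / (M : ℝ) ≤ ‖P p - P q‖ := by
    intro p q hpq
    obtain ⟨i, hi⟩ := Function.ne_iff.1 hpq
    have h1 := PiLp.norm_apply_le (P p - P q) i
    refine le_trans ?_ h1
    simp only [hP, PiLp.sub_apply, Real.norm_eq_abs, ← sub_div]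
    rw [abs_div, abs_of_pos hMpos]
    gcongr
    have : ((p i : ℕ) : ℤ) - (q i : ℕ) ≠ 0 := by
      intro h
      apply hi; ext; omega
    have := Int.one_le_abs this
    exact_mod_cast this
  refine ⟨2 * δ, by positivity, by linarith, smf P b τ, contDiff_smf P b τ, norm_smf_le P b τ hPn,
    norm_fderiv_smf_apply_le P b τ hτp, ?_, ?_⟩
  · intro y
    rw [dvg_smf]
    exact Finset.sum_nonneg fun p _ => mul_nonneg (div_nonneg (smp_nonneg _ _ _ _ _) hτp.le) (by positivity)
  have h0 : ∀ y, 0 ≤ dvg (smf P b τ) y := by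
    intro y
    rw [dvg_smf]
    exact Finset.sum_nonneg fun p _ => mul_nonneg (div_nonneg (smp_nonneg _ _ _ _ _) hτp.le) (by positivity)
  intro x hx
  have := hcov hx
  simp only [Set.mem_iUnion] at this
  obtain ⟨z, hz, hxz⟩ := this
  obtain ⟨p, q, hpq, hp, hq⟩ := hc ⟨z, hz⟩
  have hmax : ∀ p, (∀ j : s, inner ℝ (P p) (j : Eu n) - c j ≤ inner ℝ (P p) z - c ⟨z, hz⟩) →
      ∀ q, inner ℝ (P q) z - b q ≤ inner ℝ (P p) z - b p := by
    intro p hp q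
    have h1 : b p ≤ inner ℝ (P p) z - c ⟨z, hz⟩ := Finset.sup'_le _ _ fun j _ => hp j
    have h2 : inner ℝ (P q) z - c ⟨z, hz⟩ ≤ b q :=
      Finset.le_sup' (fun j : s => inner ℝ (P q) (j : Eu n) - c j) (Finset.mem_univ ⟨z, hz⟩)
    linarith
  have hPne : P p ≠ P q := by
    intro h
    have := hPd p q hpq
    rw [h, sub_self, norm_zero] at this
    have : 0 < 1 / (M:ℝ) := by positivity
    linarith
  have hfl := flux_lower (contDiff_smf P b τ) h0 z hδ (P p) (P q) hPne (t := τ * N)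
    (fun y => smf_monotone P b τ hτp p z y (hmax p hp)) (fun y => smf_monotone P b τ hτp q z y (hmax q hq))
  have hsub : ∫ y in Metric.closedBall z δ, dvg (smf P b τ) y ≤ ∫ y in Metric.closedBall x (2 * δ), dvg (smf P b τ) y := by
    refine setIntegral_mono_set ?_ (Filter.Eventually.of_forall h0) (Filter.Eventually.of_forall ?_)
    · exact (continuous_dvg (contDiff_smf P b τ)).continuousOn.integrableOn_compact (isCompact_closedBall _ _)
    · refine Metric.closedBall_subset_closedBall' ?_
      rw [Metric.mem_closedBall, dist_comm] at hxz
      linarith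
  refine le_trans ?_ (hfl.trans hsub)
  have e1 : 4 * (τ * N) / δ ^ 2 = (1 / 8) ^ n * (1 / M) / (8 * δ) := by
    rw [hτ]; field_simp; ring
  have e2 : (1 / 8 : ℝ) ^ n * (1 / M) / (4 * δ) ≤ (1 / 8) ^ n * ‖P p - P q‖ / (4 * δ) := by
    gcongr; exact hPd p q hpq
  have e3 : (1 / 8 : ℝ) ^ n / (8 * κ) ≤ (1 / 8) ^ n * (1 / M) / (8 * δ) := by
    rw [mul_one_div, div_div]
    exact div_le_div_of_nonneg_left (by positivity) (by positivity) (by linarith)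
  have e4 : (1 / 8 : ℝ) ^ n * (1 / M) / (4 * δ) = 2 * ((1 / 8) ^ n * (1 / M) / (8 * δ)) := by ring
  have e5 : V * δ ^ n * ((1 / 8 : ℝ) ^ n / (8 * κ)) = L * (2 * δ) ^ n := by
    rw [hκ, mul_pow, div_pow, div_pow, show (16:ℝ) = 2 * 8 by norm_num, mul_pow, one_pow]
    field_simp
  rw [← e5, e1]
  gcongr
  linarith

lemma smooth_lip {n : ℕ} (S0 : Eu n → ℝ) (h : ∀ x y, |S0 x - S0 y| ≤ 1/2 * ‖x - y‖) {σ : ℝ} (hσ : 0 < σ) :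
    ∃ S : Eu n → ℝ, ContDiff ℝ 1 S ∧ (∀ x, ‖fderiv ℝ S x‖ ≤ 1/2) ∧ ∀ x, |S x - S0 x| ≤ σ := by
  have hlip : LipschitzWith (1/2) S0 := by
    refine LipschitzWith.of_dist_le_mul fun x y => ?_
    rw [Real.dist_eq, dist_eq_norm]
    simpa using h x y
  let φ : ContDiffBump (0 : Eu n) := ⟨σ, 2 * σ, hσ, by linarith⟩
  have hcont := hlip.continuous
  have hφc : Continuous (φ.normed (volume : Measure (Eu n))) := φ.continuous_normed
  have hφs : HasCompactSupport (φ.normed (volume : Measure (Eu n))) := φ.hasCompactSupport_normed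
  set S : Eu n → ℝ := convolution (φ.normed volume) S0 (ContinuousLinearMap.lsmul ℝ ℝ) volume with hS
  have hSx : ∀ x, S x = ∫ t, φ.normed volume t * S0 (x - t) := fun x => rfl
  have hintg : ∀ x, Integrable (fun t => φ.normed (volume : Measure (Eu n)) t * S0 (x - t)) := by
    intro x
    refine Continuous.integrable_of_hasCompactSupport (hφc.mul (hcont.comp (continuous_const.sub continuous_id))) ?_
    exact hφs.mul_right
  have hSl : ∀ x y, ‖S x - S y‖ ≤ 1/2 * ‖x - y‖ := by
    intro x y
    rw [hSx, hSx, ← integral_sub (hintg x) (hintg y)]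
    calc _ ≤ ∫ t, φ.normed (volume : Measure (Eu n)) t * (1/2 * ‖x - y‖) := by
          refine norm_integral_le_of_norm_le ?_ (Filter.Eventually.of_forall fun t => ?_)
          · exact (φ.integrable_normed).mul_const _
          · rw [← mul_sub, norm_mul, Real.norm_of_nonneg (φ.nonneg_normed t)]
            refine mul_le_mul_of_nonneg_left ?_ (φ.nonneg_normed t)
            have := h (x - t) (y - t)
            simpa using this
      _ = _ := by rw [integral_mul_const, φ.integral_normed, one_mul]
  refine ⟨S, ?_, ?_, ?_⟩
  · exact hφs.contDiff_convolution_left (n := 1) _ φ.contDiff_normed hcont.locallyIntegrable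
  · intro x
    refine norm_fderiv_le_of_lip' ℝ (by norm_num) (Filter.Eventually.of_forall fun y => hSl y x)
  · intro x
    have := φ.dist_normed_convolution_le (μ := volume) (g := S0) (x₀ := x) (ε := σ) hcont.aestronglyMeasurable ?_
    · rw [Real.dist_eq] at this; simpa [hS] using this
    · intro y hy
      rw [Real.dist_eq]
      have h1 := h y x
      rw [Metric.mem_ball, dist_eq_norm] at hy
      have : ‖y - x‖ < 2 * σ := hy
      linarith

/-- variable radius average -/
noncomputable def vavg {n : ℕ} (mf : Eu n → Eu n) (S : Eu n → ℝ) (x : Eu n) : Eu n :=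
  ∫ z in Metric.closedBall (0 : Eu n) 1, mf (x + S x • z)

noncomputable def vder {n : ℕ} (mf : Eu n → Eu n) (S : Eu n → ℝ) (x z : Eu n) : Eu n →L[ℝ] Eu n :=
  (fderiv ℝ mf (x + S x • z)).comp (ContinuousLinearMap.id ℝ (Eu n) + (fderiv ℝ S x).smulRight z)

lemma continuous_vder {n : ℕ} {mf : Eu n → Eu n} {S : Eu n → ℝ} (hm : ContDiff ℝ 1 mf) (hS : ContDiff ℝ 1 S) :
    Continuous (fun p : Eu n × Eu n => vder mf S p.1 p.2) := by
  unfold vder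
  have h1 := hm.continuous_fderiv one_ne_zero
  have h2 := hS.continuous_fderiv one_ne_zero
  have h3 := hS.continuous
  refine Continuous.clm_comp (h1.comp (by fun_prop)) (continuous_const.add ?_)
  have : Continuous fun p : Eu n × Eu n => ContinuousLinearMap.smulRightL ℝ (Eu n) (Eu n) (fderiv ℝ S p.1) p.2 := by
    fun_prop
  exact this

lemma hasFDerivAt_vavg {n : ℕ} {mf : Eu n → Eu n} {S : Eu n → ℝ} (hm : ContDiff ℝ 1 mf) (hS : ContDiff ℝ 1 S)
    (x : Eu n) : HasFDerivAt (vavg mf S) (∫ z in Metric.closedBall (0 : Eu n) 1, vder mf S x z) x := by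
  have hc := continuous_vder hm hS
  have hmc := hm.continuous
  have hSc := hS.continuous
  obtain ⟨C, hC⟩ := ((isCompact_closedBall x 1).prod (isCompact_closedBall (0 : Eu n) 1)).exists_bound_of_continuousOn
    hc.continuousOn
  refine hasFDerivAt_integral_of_dominated_of_fderiv_le (s := Metric.closedBall x 1) (bound := fun _ => C)
    (F := fun x z => mf (x + S x • z)) (F' := fun x z => vder mf S x z)
    (Metric.closedBall_mem_nhds x one_pos) ?_ ?_ ?_ ?_ ?_ ?_
  · exact Filter.Eventually.of_forall fun y => (by fun_prop : Continuous fun z => mf (y + S y • z)).aestronglyMeasurable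
  · exact (by fun_prop : Continuous fun z => mf (x + S x • z)).continuousOn.integrableOn_compact (isCompact_closedBall _ _)
  · exact (hc.comp (by fun_prop : Continuous fun z : Eu n => (x, z))).aestronglyMeasurable
  · refine (ae_restrict_mem Metric.isClosed_closedBall.measurableSet).mono fun z hz y hy => hC (y, z) ⟨hy, hz⟩
  · exact (integrableOn_const (C := C) (isCompact_closedBall (0 : Eu n) 1).measure_ne_top)
  · refine Filter.Eventually.of_forall fun z y _ => ?_
    have h1 : HasFDerivAt (fun y => y + S y • z) (ContinuousLinearMap.id ℝ (Eu n) + (fderiv ℝ S y).smulRight z) y :=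
      (hasFDerivAt_id y).add ((hS.differentiable one_ne_zero y).hasFDerivAt.smul_const z)
    exact ((hm.differentiable one_ne_zero _).hasFDerivAt).comp y h1

lemma contDiff_vavg {n : ℕ} {mf : Eu n → Eu n} {S : Eu n → ℝ} (hm : ContDiff ℝ 1 mf) (hS : ContDiff ℝ 1 S) :
    ContDiff ℝ 1 (vavg mf S) := by
  rw [contDiff_one_iff_hasFDerivAt]
  exact ⟨_, continuous_parametric_integral_of_continuous (continuous_vder hm hS) (isCompact_closedBall _ _),
    hasFDerivAt_vavg hm hS⟩

lemma int_scale {n : ℕ} (q : Eu n → ℝ) (x : Eu n) {s : ℝ} (hs : 0 < s) :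
    ∫ z in Metric.closedBall (0 : Eu n) 1, q (x + s • z) = (s ^ n)⁻¹ * ∫ y in Metric.closedBall x s, q y := by
  rw [Measure.setIntegral_comp_smul_of_pos volume (fun w => q (x + w)) _ hs, smul_closedBall _ _ zero_le_one]
  simp only [smul_zero, finrank_euclideanSpace, Fintype.card_fin, smul_eq_mul, Real.norm_eq_abs, abs_of_pos hs, mul_one]
  congr 1
  have := (measurePreserving_add_left (volume : Measure (Eu n)) x).setIntegral_preimage_emb
    (measurableEmbedding_addLeft x) q (Metric.closedBall x s)
  rw [← this]
  congr 2
  ext y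
  simp

lemma vavg_props {n : ℕ} {mf : Eu n → Eu n} {S : Eu n → ℝ} (hm : ContDiff ℝ 1 mf) (hS : ContDiff ℝ 1 S)
    (hd : ∀ y h, ‖fderiv ℝ mf y h‖ ≤ dvg mf y * ‖h‖) (h0 : ∀ y, 0 ≤ dvg mf y)
    (hS2 : ∀ x, ‖fderiv ℝ S x‖ ≤ 1/2) (hSp : ∀ x, 0 < S x) (x : Eu n) :
    ‖fderiv ℝ (vavg mf S) x‖ ≤ 3/2 * ((S x ^ n)⁻¹ * ∫ y in Metric.closedBall x (S x), dvg mf y) ∧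
    1/2 * ((S x ^ n)⁻¹ * ∫ y in Metric.closedBall x (S x), dvg mf y) ≤ dvg (vavg mf S) x := by
  have hqc := continuous_dvg hm
  have hvc : Continuous fun z => vder mf S x z := (continuous_vder hm hS).comp (by fun_prop : Continuous fun z : Eu n => (x, z))
  have hvi : IntegrableOn (fun z => vder mf S x z) (Metric.closedBall 0 1) :=
    hvc.continuousOn.integrableOn_compact (isCompact_closedBall _ _)
  have hqi : IntegrableOn (fun z => dvg mf (x + S x • z)) (Metric.closedBall 0 1) :=
    (by fun_prop : Continuous fun z => dvg mf (x + S x • z)).continuousOn.integrableOn_compact (isCompact_closedBall _ _)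
  rw [(hasFDerivAt_vavg hm hS x).fderiv, ← int_scale _ _ (hSp x), ← integral_const_mul, ← integral_const_mul]
  constructor
  · refine norm_integral_le_of_norm_le (hqi.const_mul _) ?_
    refine (ae_restrict_mem Metric.isClosed_closedBall.measurableSet).mono fun z hz => ?_
    have hz1 : ‖z‖ ≤ 1 := by simpa using hz
    refine ContinuousLinearMap.opNorm_le_bound _ (by have := h0 (x + S x • z); positivity) fun h => ?_
    have e1 := hd (x + S x • z) (h + (fderiv ℝ S x h) • z)
    have e2 : ‖h + (fderiv ℝ S x h) • z‖ ≤ 3/2 * ‖h‖ := by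
      have a1 := norm_add_le h ((fderiv ℝ S x h) • z)
      have a2 := (fderiv ℝ S x).le_opNorm h
      rw [norm_smul] at a1
      have a3 := hS2 x
      have a4 : ‖fderiv ℝ S x h‖ ≤ 1/2 * ‖h‖ := a2.trans (by gcongr)
      have a5 : ‖fderiv ℝ S x h‖ * ‖z‖ ≤ ‖fderiv ℝ S x h‖ * 1 := by gcongr
      linarith
    calc _ ≤ dvg mf (x + S x • z) * ‖h + (fderiv ℝ S x h) • z‖ := e1
      _ ≤ dvg mf (x + S x • z) * (3/2 * ‖h‖) := mul_le_mul_of_nonneg_left e2 (h0 _)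
      _ = _ := by ring
  · have e1 : dvg (vavg mf S) x = ∫ z in Metric.closedBall (0 : Eu n) 1, ∑ i, (vder mf S x z (EuclideanSpace.single i 1)) i := by
      unfold dvg
      rw [(hasFDerivAt_vavg hm hS x).fderiv, integral_finsetSum]
      · refine Finset.sum_congr rfl fun i _ => ?_
        rw [ContinuousLinearMap.integral_apply hvi]
        exact ((EuclideanSpace.proj i : Eu n →L[ℝ] ℝ).integral_comp_comm (hvi.apply_continuousLinearMap _)).symm
      · intro i _
        exact (EuclideanSpace.proj i : Eu n →L[ℝ] ℝ).integrable_comp (hvi.apply_continuousLinearMap _)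
    rw [e1]
    refine integral_mono_ae (hqi.const_mul _) ?_ ?_
    · refine integrable_finsetSum _ fun i _ => ?_
      exact (EuclideanSpace.proj i : Eu n →L[ℝ] ℝ).integrable_comp (hvi.apply_continuousLinearMap _)
    refine (ae_restrict_mem Metric.isClosed_closedBall.measurableSet).mono fun z hz => ?_
    have hz1 : ‖z‖ ≤ 1 := by simpa using hz
    set w := fderiv ℝ mf (x + S x • z) z with hw
    have e2 : ∑ i, (vder mf S x z (EuclideanSpace.single i 1)) i = dvg mf (x + S x • z) + fderiv ℝ S x w := by
      have : w = ∑ i, w i • EuclideanSpace.single i (1:ℝ) := by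
        ext j
        simp [Finset.sum_apply, Pi.single_apply]
      rw [this, map_sum]
      unfold dvg vder
      rw [← Finset.sum_add_distrib]
      refine Finset.sum_congr rfl fun i _ => ?_
      simp [hw, mul_comm]
    have e3 : |fderiv ℝ S x w| ≤ 1/2 * dvg mf (x + S x • z) := by
      have a1 := (fderiv ℝ S x).le_opNorm w
      have a2 := hd (x + S x • z) z
      rw [Real.norm_eq_abs] at a1
      have a3 : ‖w‖ ≤ dvg mf (x + S x • z) := a2.trans (mul_le_of_le_one_right (h0 _) hz1)
      calc _ ≤ _ := a1
        _ ≤ 1/2 * dvg mf (x + S x • z) := mul_le_mul (hS2 x) a3 (norm_nonneg _) (by norm_num)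
    simp only [e2]
    have := (abs_le.1 e3).1
    linarith

lemma norm_vavg_le {n : ℕ} {mf : Eu n → Eu n} {S : Eu n → ℝ} {B : ℝ}
    (hB : ∀ y, ‖mf y‖ ≤ B) (x : Eu n) : ‖vavg mf S x‖ ≤ B * volume.real (Metric.closedBall (0 : Eu n) 1) :=
  norm_setIntegral_le_of_norm_le_const (isCompact_closedBall (0 : Eu n) 1).measure_lt_top fun z _ => hB _

lemma dvg_const_smul {n : ℕ} {Φ : Eu n → Eu n} (h : ContDiff ℝ 1 Φ) (c : ℝ) (x : Eu n) :
    dvg (fun y => c • Φ y) x = c * dvg Φ x := by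
  unfold dvg
  rw [fderiv_fun_const_smul (h.differentiable one_ne_zero x)]
  simp [Finset.mul_sum]

lemma field2 {n : ℕ} (hn : 0 < n) {K : Set (Eu n)} (hK : IsCompact K) (hK0 : volume K = 0)
    {F : Set (Eu n)} (hFK : F ⊆ K) (hF : F.Nonempty) {L : ℝ} (hL : 0 < L) :
    ∃ Φ : Eu n → Eu n, ContDiff ℝ 1 Φ ∧ (∀ x, ‖fderiv ℝ Φ x‖ ≤ 3/2 * 6^n) ∧
      (∀ x, ‖Φ x‖ ≤ n * volume.real (Metric.closedBall (0 : Eu n) 1) / L) ∧ (∀ x, 0 ≤ dvg Φ x) ∧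
      ∀ x0 ∈ F, ∃ y ∈ F, ∃ r, 0 < r ∧ r ≤ 4*2^n*n*volume.real (Metric.ball (0 : Eu n) 1) / L ∧ dist x0 y ≤ 8 * r ∧
        ∀ x ∈ Metric.closedBall y (r/2), 1/2 * (1/7)^n ≤ dvg Φ x := by
  obtain ⟨δ, hδ, -, mf, hm, hmB, hd, h0, hlow⟩ := field_exists hn hK (hF.mono hFK) hK0 L 1 hL one_pos
  set Q : Eu n → ℝ → ℝ := fun y r => ∫ z in Metric.closedBall y r, dvg mf z with hQ
  have hqc := continuous_dvg hm
  have hQmono : ∀ x s y r, dist x y + s ≤ r → Q x s ≤ Q y r := by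
    intro x s y r h
    refine setIntegral_mono_set ?_ (Filter.Eventually.of_forall h0) (Filter.Eventually.of_forall ?_)
    · exact hqc.continuousOn.integrableOn_compact (isCompact_closedBall _ _)
    · refine Metric.closedBall_subset_closedBall' ?_
      linarith
  set C : ℝ := 4*2^n*n*volume.real (Metric.ball (0 : Eu n) 1) with hC
  let P : Type := {p : Eu n × ℝ // p.1 ∈ F ∧ 0 < p.2 ∧ L * p.2 ^ n ≤ Q p.1 p.2}
  have hPr : ∀ p : P, p.1.2 ≤ C / L := by
    rintro ⟨⟨y, r⟩, hy, hr, hq⟩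
    simp only at hr hq ⊢
    have := flux_upper hm h0 hmB y hr
    have h1 : L * r ^ n * r ≤ C * r ^ n := (mul_le_mul_of_nonneg_right hq hr.le).trans this
    rw [le_div_iff₀ hL]
    have h2 : 0 < r ^ n := by positivity
    have : (r * L) * r ^ n ≤ C * r ^ n := by linarith
    exact le_of_mul_le_mul_right this h2
  have hPF : ∀ x ∈ F, ∃ p : P, p.1 = (x, δ) := fun x hx => ⟨⟨(x, δ), hx, hδ, hlow x (hFK hx)⟩, rfl⟩
  obtain ⟨x1, hx1⟩ := hF
  have : Nonempty P := ⟨(hPF x1 hx1).choose⟩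
  set S1 : Eu n → ℝ := fun x => ⨆ p : P, (4 * p.1.2 - 1/2 * dist x p.1.1) with hS1
  have hbdd : ∀ x, BddAbove (Set.range fun p : P => (4 * p.1.2 - 1/2 * dist x p.1.1)) := by
    intro x
    refine ⟨4 * (C / L), ?_⟩
    rintro _ ⟨p, rfl⟩
    have := hPr p
    have := dist_nonneg (x := x) (y := p.1.1)
    simp only; linarith
  have hle : ∀ x (p : P), 4 * p.1.2 - 1/2 * dist x p.1.1 ≤ S1 x := fun x p => le_ciSup (hbdd x) p
  have hS1l : ∀ x y, S1 x ≤ S1 y + 1/2 * dist x y := by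
    intro x y
    refine ciSup_le fun p => ?_
    have h1 := hle y p
    have h2 := dist_triangle y x p.1.1
    rw [dist_comm y x] at h2
    linarith
  set S0 : Eu n → ℝ := fun x => max (max (S1 x) δ) (1/2 * Metric.infDist x F) with hS0
  have hS0l' : ∀ x y, S0 x ≤ S0 y + 1/2 * dist x y := by
    intro x y
    have a1 : S1 y ≤ S0 y := (le_max_left _ _).trans (le_max_left _ _)
    have a2 : δ ≤ S0 y := (le_max_right _ _).trans (le_max_left _ _)
    have a3 : 1/2 * Metric.infDist y F ≤ S0 y := le_max_right _ _
    have a4 := Metric.infDist_le_infDist_add_dist (s := F) (x := x) (y := y)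
    have a5 := hS1l x y
    have a6 := dist_nonneg (x := x) (y := y)
    refine max_le (max_le ?_ ?_) ?_ <;> linarith
  have hS0l : ∀ x y, |S0 x - S0 y| ≤ 1/2 * ‖x - y‖ := by
    intro x y
    have a1 := hS0l' x y
    have a2 := hS0l' y x
    rw [dist_comm] at a2
    rw [← dist_eq_norm, abs_le]
    constructor <;> linarith
  obtain ⟨S, hS, hSd, hSS⟩ := smooth_lip S0 hS0l (σ := δ / 16) (by positivity)
  have hδS : ∀ x, δ ≤ S0 x := fun x => (le_max_right _ _).trans (le_max_left _ _)
  have hSlo : ∀ x, 15/16 * S0 x ≤ S x := fun x => by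
    have := (abs_le.1 (hSS x)).1; have := hδS x; linarith
  have hShi : ∀ x, S x ≤ 17/16 * S0 x := fun x => by
    have := (abs_le.1 (hSS x)).2; have := hδS x; linarith
  have hSp : ∀ x, 0 < S x := fun x => by
    have := hSlo x; have := hδS x; linarith
  have hprop := vavg_props hm hS hd h0 hSd hSp
  have hvC := contDiff_vavg hm hS
  have hQ0 : ∀ x r, 0 ≤ Q x r := fun x r => integral_nonneg fun z => h0 z
  refine ⟨fun x => L⁻¹ • vavg mf S x, hvC.const_smul _, ?_, ?_, ?_, ?_⟩
  · intro x
    rw [fderiv_fun_const_smul (hvC.differentiable one_ne_zero x), norm_smul, Real.norm_of_nonneg (by positivity)]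
    rw [inv_mul_le_iff₀ hL]
    refine (hprop x).1.trans ?_
    have hd2 : Metric.infDist x F < 3 * S0 x := by
      have : 1/2 * Metric.infDist x F ≤ S0 x := le_max_right _ _
      have := hδS x
      linarith
    obtain ⟨y, hy, hxy⟩ := (Metric.infDist_lt_iff ⟨x1, hx1⟩).1 hd2
    have hd0 := dist_nonneg (x := x) (y := y)
    have hδx := hδS x
    have hlt : Q y (2 * S0 x + dist x y) < L * (2 * S0 x + dist x y) ^ n := by
      by_contra hcon
      push Not at hcon
      have := hle x ⟨(y, 2 * S0 x + dist x y), hy, by positivity, hcon⟩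
      have h2 : S1 x ≤ S0 x := (le_max_left _ _).trans (le_max_left _ _)
      simp only at this
      linarith
    have h3 : Q x (S x) ≤ L * (6 * S x) ^ n := by
      have a1 := hQmono x (S x) y (2 * S0 x + dist x y) (by have := hShi x; linarith)
      refine a1.trans (hlt.le.trans ?_)
      gcongr
      have := hSlo x; linarith
    have : (S x ^ n)⁻¹ * Q x (S x) ≤ L * 6 ^ n := by
      rw [inv_mul_le_iff₀ (pow_pos (hSp x) n)]
      rw [mul_pow] at h3
      linarith
    have : 3/2 * ((S x ^ n)⁻¹ * Q x (S x)) ≤ 3/2 * (L * 6 ^ n) := by linarith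
    refine this.trans (le_of_eq (by ring))
  · intro x
    rw [norm_smul, Real.norm_of_nonneg (by positivity), inv_mul_eq_div]
    gcongr
    exact norm_vavg_le hmB x
  · intro x
    rw [dvg_const_smul hvC]
    have h1 := (hprop x).2
    have h2 := hQ0 x (S x)
    have h3 := hSp x
    have : 0 ≤ 1/2 * ((S x ^ n)⁻¹ * Q x (S x)) := by positivity
    have : 0 ≤ dvg (vavg mf S) x := this.trans h1
    positivity
  · intro x0 hx0
    obtain ⟨p0, hp0⟩ := hPF x0 hx0
    have h4 : 4 * δ ≤ S1 x0 := by
      have := hle x0 p0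
      rw [hp0] at this
      simpa using this
    obtain ⟨p, hp⟩ := exists_lt_of_lt_ciSup (show S1 x0 - δ < ⨆ p : P, (4 * p.1.2 - 1/2 * dist x0 p.1.1) by
      change S1 x0 - δ < S1 x0; linarith)
    have hpr := hPr p
    have hpl := fun x => hle x p
    obtain ⟨⟨y, r⟩, hy, hr, hq⟩ := p
    simp only at hp hpr hr hq hpl
    have hd0 := dist_nonneg (x := x0) (y := y)
    refine ⟨y, hy, r, hr, hpr, by linarith, ?_⟩
    intro x hx
    rw [Metric.mem_closedBall] at hx
    rw [dvg_const_smul hvC]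
    have b1 : S1 x ≤ S0 x := (le_max_left _ _).trans (le_max_left _ _)
    have b2 := hpl x
    have b3 := hSlo x
    have b4 : S0 x ≤ 5.6 * r := by
      have c1 := hS1l x x0
      have c2 := dist_triangle x y x0
      rw [dist_comm y x0] at c2
      have c3 := Metric.infDist_le_dist_of_mem hy (x := x)
      refine max_le (max_le ?_ ?_) ?_ <;> linarith
    have b5 := hShi x
    have b6 : Q y r ≤ Q x (S x) := hQmono _ _ _ _ (by rw [dist_comm]; linarith)
    have b7 : S x ≤ 7 * r := by linarith
    have b8 := (hprop x).2
    have b9 : L * (1/7)^n ≤ (S x ^ n)⁻¹ * Q x (S x) := by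
      rw [inv_mul_eq_div, le_div_iff₀ (pow_pos (hSp x) n)]
      calc L * (1/7)^n * S x ^ n ≤ L * (1/7)^n * (7 * r) ^ n := by
            have := (hSp x).le
            gcongr
        _ = L * r ^ n := by rw [mul_pow, div_pow, one_pow]; field_simp
        _ ≤ _ := hq.trans b6
    have b10 : 1/2 * (L * (1/7)^n) ≤ dvg (vavg mf S) x := le_trans (by linarith) b8
    rw [inv_mul_eq_div, le_div_iff₀ hL]
    linarith

lemma part2 {n : ℕ} (hn : 0 < n) (ν : Measure (Eu n)) [IsFiniteMeasure ν] {K : Set (Eu n)} (hK : IsCompact K)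
    (hK0 : volume K = 0) (hνK : ν Kᶜ = 0) (hcl : CLv ν) : ν = 0 := by
  by_contra hne
  obtain ⟨C, hC1, hdoub⟩ := ae_doubling hn ν ⟨K, hK.measurableSet, hK0, hνK⟩ hcl
  set Fk : ℕ → Set (Eu n) := fun k => {x | x ∈ K ∧ ∀ r, 0 < r → r < 1 / ((k:ℝ) + 1) →
    ν.real (Metric.closedBall x (2*r)) ≤ C * ν.real (Metric.closedBall x r)} with hFk
  have hex : ∃ k, ν (Fk k) ≠ 0 := by
    by_contra hcon
    push Not at hcon
    have h1 := measure_iUnion_null hcon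
    apply hne
    rw [← Measure.measure_univ_eq_zero]
    have h2 : ν (⋃ k, Fk k)ᶜ = 0 := by
      have h3 : ∀ᵐ x ∂ν, x ∈ K := by rw [ae_iff]; exact hνK
      have : ∀ᵐ x ∂ν, x ∈ ⋃ k, Fk k := by
        filter_upwards [h3, hdoub] with x hx hx2
        obtain ⟨r0, hr0, h⟩ := hx2
        obtain ⟨k, hk⟩ := exists_nat_one_div_lt hr0
        exact Set.mem_iUnion.2 ⟨k, hx, fun r hr hr2 => h r hr (hr2.trans hk)⟩
      rw [ae_iff] at this; exact this
    rw [← Set.union_compl_self (⋃ k, Fk k)]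
    exact measure_union_null h1 h2
  obtain ⟨k, hk⟩ := hex
  set F := Fk k with hF
  set ρ : ℝ := 1 / ((k:ℝ) + 1) with hρ
  have hρp : 0 < ρ := by positivity
  have hFne : F.Nonempty := nonempty_of_measure_ne_zero hk
  have hFp : 0 < ν.real F := ENNReal.toReal_pos hk (measure_ne_top _ _)
  set c1 : ℝ := 1/2 * (1/7)^n with hc1
  have hc1p : 0 < c1 := by positivity
  set η := c1 * (ν.real F / C^6) / 2 with hη
  have hηp : 0 < η := by positivity
  obtain ⟨τ, hτ, hcl⟩ := hcl (3/2 * 6^n) (by positivity) η hηp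
  set A1 : ℝ := n * volume.real (Metric.closedBall (0 : Eu n) 1) with hA1
  set A2 : ℝ := 4*2^n*n*volume.real (Metric.ball (0 : Eu n) 1) with hA2
  have hA1p : 0 ≤ A1 := by positivity
  have hA2p : 0 ≤ A2 := by positivity
  set L : ℝ := A1 / τ + 16 * A2 / ρ + 1 with hL
  have hLp : 0 < L := by positivity
  have hL1 : A1 / L ≤ τ := by
    rw [div_le_iff₀ hLp, hL]
    have : τ * (A1 / τ + 16 * A2 / ρ + 1) = A1 + τ * (16 * A2 / ρ) + τ := by field_simp
    rw [this]
    have : 0 ≤ τ * (16 * A2 / ρ) := by positivity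
    linarith
  have hL2 : 16 * (A2 / L) < ρ := by
    rw [← mul_div_assoc, div_lt_iff₀ hLp, hL]
    have : ρ * (A1 / τ + 16 * A2 / ρ + 1) = ρ * (A1 / τ) + 16 * A2 + ρ := by field_simp
    rw [this]
    have : 0 ≤ ρ * (A1 / τ) := by positivity
    linarith
  obtain ⟨Φ, hΦ, hΦd, hΦn, hΦ0, hΦF⟩ := field2 hn hK hK0 (F := F) (fun x hx => hx.1) hFne hLp
  have hintg := hcl Φ hΦ hΦd fun x => (hΦn x).trans hL1
  -- Vitali
  set T : Set (Eu n × ℝ) := {p | p.1 ∈ F ∧ 0 < p.2 ∧ p.2 ≤ A2 / L ∧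
    ∀ x ∈ Metric.closedBall p.1 (p.2/2), c1 ≤ dvg Φ x} with hT
  obtain ⟨u, huT, hud, hcov⟩ := Vitali.exists_disjoint_subfamily_covering_enlargement_closedBall
    T (fun p => p.1) (fun p => 8 * p.2) (8 * (A2 / L)) (fun p hp => by have := hp.2.2.1; linarith) 4 (by norm_num)
  have huc : u.Countable := by
    refine hud.countable_of_nonempty_interior fun p hp => ?_
    have : 0 < 8 * p.2 := by have := (huT hp).2.1; linarith
    exact ⟨p.1, mem_interior_iff_mem_nhds.2 (Metric.closedBall_mem_nhds _ this)⟩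
  have hFcov : F ⊆ ⋃ p ∈ u, Metric.closedBall p.1 (32 * p.2) := by
    intro x hx
    obtain ⟨y, hy, r, hr, hrl, hxy, hball⟩ := hΦF x hx
    obtain ⟨b, hb, hsub⟩ := hcov (y, r) ⟨hy, hr, hrl, hball⟩
    have := hsub (show x ∈ Metric.closedBall y (8 * r) from hxy)
    simp only [Set.mem_iUnion]
    refine ⟨b, hb, ?_⟩
    rwa [show (32:ℝ) * b.2 = 4 * (8 * b.2) by ring]
  have hdb : ∀ p ∈ u, ν (Metric.closedBall p.1 (32 * p.2)) ≤ ENNReal.ofReal (C^6) * ν (Metric.closedBall p.1 (p.2/2)) := by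
    intro p hp
    obtain ⟨h1, h2, h3, -⟩ := huT hp
    have hC0 : 0 ≤ C := by linarith
    have key : ∀ j : ℕ, j ≤ 6 → ν.real (Metric.closedBall p.1 (2^j * (p.2/2))) ≤ C^j * ν.real (Metric.closedBall p.1 (p.2/2)) := by
      intro j
      induction j with
      | zero => intro _; simp
      | succ j ih =>
        intro hj
        have h4 := h1.2 (2^j * (p.2/2)) (by positivity) (by
          have : (2:ℝ)^j ≤ 2^5 := pow_le_pow_right₀ (by norm_num) (by omega)
          have : (2:ℝ)^j * (p.2/2) ≤ 2^5 * (p.2/2) := by gcongr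
          linarith)
        have h5 := ih (by omega)
        rw [pow_succ, pow_succ, mul_comm (2^j) (2:ℝ), mul_assoc]
        refine h4.trans ?_
        calc _ ≤ C * (C ^ j * ν.real (Metric.closedBall p.1 (p.2/2))) := by gcongr
          _ = _ := by ring
    have h6 := key 6 le_rfl
    rw [show (2:ℝ)^6 * (p.2/2) = 32 * p.2 by ring] at h6
    rw [← ofReal_measureReal (measure_ne_top ν (Metric.closedBall p.1 (32 * p.2))),
      ← ofReal_measureReal (measure_ne_top ν (Metric.closedBall p.1 (p.2/2))), ← ENNReal.ofReal_mul (by positivity)]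
    exact ENNReal.ofReal_le_ofReal h6
  set U : Set (Eu n) := ⋃ p ∈ u, Metric.closedBall p.1 (p.2/2) with hU
  have hUm : MeasurableSet U := MeasurableSet.biUnion huc fun p _ => Metric.isClosed_closedBall.measurableSet
  have hFU : ν F ≤ ENNReal.ofReal (C^6) * ν U := by
    calc ν F ≤ ν (⋃ p ∈ u, Metric.closedBall p.1 (32 * p.2)) := measure_mono hFcov
      _ ≤ ∑' p : u, ν (Metric.closedBall p.1.1 (32 * p.1.2)) := measure_biUnion_le _ huc _
      _ ≤ ∑' p : u, ENNReal.ofReal (C^6) * ν (Metric.closedBall p.1.1 (p.1.2/2)) :=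
          ENNReal.tsum_le_tsum fun p => hdb p.1 p.2
      _ = ENNReal.ofReal (C^6) * ∑' p : u, ν (Metric.closedBall p.1.1 (p.1.2/2)) := ENNReal.tsum_mul_left
      _ = _ := by
        rw [hU, measure_biUnion huc _ fun p _ => Metric.isClosed_closedBall.measurableSet]
        refine hud.mono_on fun p hp => ?_
        have := (huT hp).2.1
        exact Metric.closedBall_subset_closedBall (by linarith)
  have hFU' : ν.real F ≤ C^6 * ν.real U := by
    have := ENNReal.toReal_mono (ENNReal.mul_ne_top ENNReal.ofReal_ne_top (measure_ne_top ν U)) hFU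
    rwa [ENNReal.toReal_mul, ENNReal.toReal_ofReal (by positivity)] at this
  have hdi := integrable_dvg (ν := ν) hΦ hΦd
  have h1 : c1 * ν.real U ≤ ∫ x, dvg Φ x ∂ν := by
    calc c1 * ν.real U ≤ ∫ x in U, dvg Φ x ∂ν := by
          refine setIntegral_ge_of_const_le_real hUm (measure_ne_top _ _) (fun x hx => ?_) hdi.integrableOn
          simp only [hU, Set.mem_iUnion] at hx
          obtain ⟨p, hp, hx⟩ := hx
          exact (huT hp).2.2.2 x hx
      _ ≤ _ := setIntegral_le_integral hdi (Filter.Eventually.of_forall hΦ0)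
  have h2 : ν.real F / C^6 ≤ ν.real U := by
    rw [div_le_iff₀ (by positivity)]; linarith
  have h3 : c1 * (ν.real F / C^6) ≤ c1 * ν.real U := by gcongr
  have : 2 * η = c1 * (ν.real F / C^6) := by rw [hη]; ring
  linarith

def Lc {X : Type*} [MetricSpace X] (f : X → ℝ) (x : X) (c : ℝ) : Prop :=
  ∀ ε > 0, ∃ t > 0, ∀ y, dist y x < t → |f y - f x| ≤ (c + ε) * dist y x

lemma lip_le_iff {X : Type*} [MetricSpace X] {f : X → ℝ} {K : ℝ≥0} (hf : LipschitzWith K f) (x : X) {c : ℝ}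
    (hc : 0 ≤ c) : lip f x ≤ c ↔ Lc f x c := by
  unfold lip
  have key : ∀ a, (∀ᶠ y in nhdsWithin x {x}ᶜ, |f y - f x| / dist y x ≤ a) ↔
      ∃ t > 0, ∀ y, dist y x < t → |f y - f x| ≤ a * dist y x := by
    intro a
    rw [eventually_nhdsWithin_iff, Metric.eventually_nhds_iff]
    refine exists_congr fun t => and_congr_right fun ht => forall_congr' fun y => imp_congr_right fun hy => ?_
    by_cases h : y = x
    · simp [h]
    · simp only [Set.mem_compl_iff, Set.mem_singleton_iff, h, not_false_eq_true, true_imp_iff]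
      rw [div_le_iff₀ (dist_pos.2 h)]
  have hub : ∀ y, |f y - f x| / dist y x ≤ K := by
    intro y
    refine div_le_of_le_mul₀ dist_nonneg K.2 ?_
    have := hf.dist_le_mul y x
    rwa [Real.dist_eq] at this
  by_cases hbot : nhdsWithin x {x}ᶜ = ⊥
  · have h1 : Filter.limsup (fun y => |f y - f x| / dist y x) (nhdsWithin x {x}ᶜ) = 0 := by
      rw [hbot]; simp [Filter.limsup, Filter.limsSup]
    rw [h1]
    refine ⟨fun _ ε hε => ?_, fun _ => hc⟩
    rw [← key]
    rw [hbot]; exact Filter.eventually_bot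
  · have : (nhdsWithin x {x}ᶜ).NeBot := ⟨hbot⟩
    have hb : Filter.IsBoundedUnder (· ≤ ·) (nhdsWithin x {x}ᶜ) (fun y => |f y - f x| / dist y x) :=
      Filter.isBoundedUnder_of ⟨K, hub⟩
    have hcb : Filter.IsCoboundedUnder (· ≤ ·) (nhdsWithin x {x}ᶜ) (fun y => |f y - f x| / dist y x) :=
      (Filter.isBoundedUnder_of ⟨0, fun y => by positivity⟩ :
        Filter.IsBoundedUnder (· ≥ ·) (nhdsWithin x {x}ᶜ) (fun y => |f y - f x| / dist y x)).isCoboundedUnder_le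
    constructor
    · intro h ε hε
      rw [← key]
      exact (Filter.eventually_lt_of_limsup_lt (lt_of_le_of_lt h (by linarith : c < c + ε)) hb).mono fun y hy => hy.le
    · intro h
      refine le_of_forall_pos_le_add fun ε hε => ?_
      exact Filter.limsup_le_of_le hcb ((key _).2 (h ε hε))

lemma lip_nonneg {X : Type*} [MetricSpace X] {f : X → ℝ} {K : ℝ≥0} (hf : LipschitzWith K f) (x : X) : 0 ≤ lip f x := by
  by_contra h
  push Not at h
  unfold lip at h
  have hub : ∀ y, |f y - f x| / dist y x ≤ K := by
    intro y
    refine div_le_of_le_mul₀ dist_nonneg K.2 ?_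
    have := hf.dist_le_mul y x
    rwa [Real.dist_eq] at this
  by_cases hbot : nhdsWithin x {x}ᶜ = ⊥
  · have h1 : Filter.limsup (fun y => |f y - f x| / dist y x) (nhdsWithin x {x}ᶜ) = 0 := by
      rw [hbot]; simp [Filter.limsup, Filter.limsSup]
    linarith
  · have : (nhdsWithin x {x}ᶜ).NeBot := ⟨hbot⟩
    have hb : Filter.IsBoundedUnder (· ≤ ·) (nhdsWithin x {x}ᶜ) (fun y => |f y - f x| / dist y x) :=
      Filter.isBoundedUnder_of ⟨K, hub⟩
    obtain ⟨y, hy⟩ := (Filter.eventually_lt_of_limsup_lt h hb).exists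
    have : 0 ≤ |f y - f x| / dist y x := by positivity
    linarith

def Smol {X : Type*} [MetricSpace X] (f : X → ℝ) (x : X) : Prop :=
  ∀ ε > 0, ∃ t > 0, ∀ y, dist y x < t → |f y - f x| ≤ ε * dist y x

lemma lip_eq_zero_iff {X : Type*} [MetricSpace X] {f : X → ℝ} {K : ℝ≥0} (hf : LipschitzWith K f) (x : X) :
    lip f x = 0 ↔ Smol f x := by
  have h1 := lip_le_iff hf x le_rfl
  have h2 := lip_nonneg hf x
  have : Lc f x 0 ↔ Smol f x := by simp [Lc, Smol]
  rw [← this, ← h1]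
  exact ⟨fun h => h.le, fun h => le_antisymm h h2⟩

lemma lip_add_le {X : Type*} [MetricSpace X] {f g : X → ℝ} {K K' : ℝ≥0} (hf : LipschitzWith K f)
    (hg : LipschitzWith K' g) (x : X) : lip (fun y => f y + g y) x ≤ lip f x + lip g x := by
  have h1 := (lip_le_iff hf x (lip_nonneg hf x)).1 le_rfl
  have h2 := (lip_le_iff hg x (lip_nonneg hg x)).1 le_rfl
  rw [lip_le_iff (hf.add hg) x (add_nonneg (lip_nonneg hf x) (lip_nonneg hg x))]
  intro ε hε
  obtain ⟨t1, ht1, H1⟩ := h1 (ε/2) (by positivity)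
  obtain ⟨t2, ht2, H2⟩ := h2 (ε/2) (by positivity)
  refine ⟨min t1 t2, lt_min ht1 ht2, fun y hy => ?_⟩
  have a1 := H1 y (hy.trans_le (min_le_left _ _))
  have a2 := H2 y (hy.trans_le (min_le_right _ _))
  have a3 := abs_add_le (f y - f x) (g y - g x)
  rw [show f y + g y - (f x + g x) = (f y - f x) + (g y - g x) by ring]
  linarith

lemma lip_const_mul_le {X : Type*} [MetricSpace X] {f : X → ℝ} {K K' : ℝ≥0} (hf : LipschitzWith K f) (a : ℝ)
    (hg : LipschitzWith K' (fun y => a * f y)) (x : X) : lip (fun y => a * f y) x ≤ |a| * lip f x := by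
  have h0 := lip_nonneg hf x
  have h1 := (lip_le_iff hf x h0).1 le_rfl
  rw [lip_le_iff hg x (by positivity)]
  intro ε hε
  obtain ⟨t1, ht1, H1⟩ := h1 (ε/(|a|+1)) (by positivity)
  refine ⟨t1, ht1, fun y hy => ?_⟩
  have a1 := H1 y hy
  rw [← mul_sub, abs_mul]
  have a2 : |a| * (ε/(|a|+1)) ≤ ε := by
    rw [← mul_div_assoc, div_le_iff₀ (by positivity)]; linarith
  calc |a| * |f y - f x| ≤ |a| * ((lip f x + ε/(|a|+1)) * dist y x) := by gcongr
    _ = (|a| * lip f x + |a| * (ε/(|a|+1))) * dist y x := by ring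
    _ ≤ _ := by gcongr

lemma lipW_const_mul {X : Type*} [MetricSpace X] {f : X → ℝ} {K : ℝ≥0} (hf : LipschitzWith K f) (a : ℝ) :
    LipschitzWith (‖a‖₊ * K) (fun y => a * f y) := by
  refine LipschitzWith.of_dist_le_mul fun x y => ?_
  have := hf.dist_le_mul x y
  rw [Real.dist_eq] at this ⊢
  rw [← mul_sub, abs_mul]
  simp only [NNReal.coe_mul, coe_nnnorm, Real.norm_eq_abs, mul_assoc]
  gcongr

lemma lip_const_mul {X : Type*} [MetricSpace X] {f : X → ℝ} {K : ℝ≥0} (hf : LipschitzWith K f) (a : ℝ)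
    (x : X) : lip (fun y => a * f y) x = |a| * lip f x := by
  refine le_antisymm (lip_const_mul_le hf a (lipW_const_mul hf a) x) ?_
  by_cases ha : a = 0
  · subst ha
    simp only [abs_zero, zero_mul]
    exact lip_nonneg (LipschitzWith.const (0:ℝ)) x
  have e : (fun y => a⁻¹ * (a * f y)) = f := by ext y; field_simp
  have h := lip_const_mul_le (K' := K) (lipW_const_mul hf a) a⁻¹ (by rw [e]; exact hf) x
  rw [e, abs_inv] at h
  have : 0 < |a| := abs_pos.2 ha
  rwa [inv_mul_eq_div, le_div_iff₀ this, mul_comm] at h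

lemma lipW_sum {X : Type*} [MetricSpace X] {k : ℕ} {f : Fin k → X → ℝ} (hf : ∀ i, ∃ K : ℝ≥0, LipschitzWith K (f i))
    (a : Fin k → ℝ) : ∃ K : ℝ≥0, LipschitzWith K (fun y => ∑ i, a i * f i y) := by
  choose K hK using hf
  refine ⟨∑ i, ‖a i‖₊ * K i, LipschitzWith.of_dist_le_mul fun x y => ?_⟩
  rw [Real.dist_eq, ← Finset.sum_sub_distrib]
  refine (Finset.abs_sum_le_sum_abs _ _).trans ?_
  push_cast
  rw [Finset.sum_mul]
  refine Finset.sum_le_sum fun i _ => ?_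
  have := (lipW_const_mul (hK i) (a i)).dist_le_mul x y
  rwa [Real.dist_eq] at this

lemma isNormOn_of {X : Type*} [MetricSpace X] {k : ℕ} {f : Fin k → X → ℝ}
    (hf : ∀ i, ∃ K : ℝ≥0, LipschitzWith K (f i)) (x : X)
    (h : ∀ a : Fin k → ℝ, Smol (fun y => ∑ i, a i * f i y) x → a = 0) :
    IsNormOn (fun a : Fin k → ℝ => lip (fun y => ∑ i, a i * f i y) x) := by
  refine ⟨fun a => ?_, fun a => ?_, fun c a => ?_, fun a b => ?_⟩
  · obtain ⟨K, hK⟩ := lipW_sum hf a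
    exact lip_nonneg hK x
  · obtain ⟨K, hK⟩ := lipW_sum hf a
    rw [lip_eq_zero_iff hK]
    refine ⟨h a, ?_⟩
    rintro rfl ε hε
    exact ⟨1, one_pos, fun y _ => by simp; positivity⟩
  · obtain ⟨K, hK⟩ := lipW_sum hf a
    have e : (fun y => ∑ i, (c • a) i * f i y) = fun y => c * ∑ i, a i * f i y := by
      ext y
      simp [Finset.mul_sum, mul_assoc]
    simp only [e]
    exact lip_const_mul hK c x
  · obtain ⟨K, hK⟩ := lipW_sum hf a
    obtain ⟨K', hK'⟩ := lipW_sum hf b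
    have e : (fun y => ∑ i, (a + b) i * f i y) = fun y => ∑ i, a i * f i y + ∑ i, b i * f i y := by
      ext y
      simp [add_mul, Finset.sum_add_distrib]
    simp only [e]
    exact lip_add_le hK hK' x

def Reg {X : Type*} [MetricSpace X] {n : ℕ} (F : X → Eu n) (x : X) : Prop :=
  ∀ α : Eu n, Smol (fun y => inner ℝ α (F y)) x → α = 0

def HDim {X : Type*} [MetricSpace X] [MeasurableSpace X] (n : ℕ) (μ : Measure X) : Prop :=
  ∀ (f : Fin (n + 1) → X → ℝ) (B : Set X), MeasurableSet B →
      0 < μ B → (∀ i, ∃ K : ℝ≥0, LipschitzWith K (f i)) → ¬ IndependentOn μ f B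

lemma reg_of_isNormOn {X : Type*} [MetricSpace X] {n : ℕ} {F : X → Eu n} {x : X} 
    (hf : ∀ i, ∃ K : ℝ≥0, LipschitzWith K (fun y => F y i))
    (h : IsNormOn (fun a : Fin n → ℝ => lip (fun y => ∑ i, a i * F y i) x)) : Reg F x := by
  intro α hα
  obtain ⟨K, hK⟩ := lipW_sum hf α
  have h1 := (h.2.1 α).1
  simp only at h1
  have e : (fun y => inner ℝ α (F y)) = fun y => ∑ i, α i * F y i := by
    ext y; simp [PiLp.inner_apply, mul_comm]
  rw [e, ← lip_eq_zero_iff hK] at hα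
  have := h1 hα
  ext i
  exact congrFun this i

lemma p2 {X : Type*} [MetricSpace X] [MeasurableSpace X] {n : ℕ} {μ : Measure X} (hd : HDim n μ)
    {F : X → Eu n} (hF : ∀ i, ∃ K : ℝ≥0, LipschitzWith K (fun y => F y i)) {B : Set X} (hB : MeasurableSet B)
    (hB0 : 0 < μ B) (hreg : ∀ x ∈ B, Reg F x) {h : X → ℝ} (hh : ∃ K : ℝ≥0, LipschitzWith K h)
    (hs : ∀ x ∈ B, ∀ α : Eu n, ¬ Smol (fun y => h y - inner ℝ α (F y)) x) : False := by
  set f : Fin (n+1) → X → ℝ := Fin.cons h (fun i y => F y i) with hf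
  have hfl : ∀ i, ∃ K : ℝ≥0, LipschitzWith K (f i) := by
    intro i
    refine Fin.cases ?_ (fun j => ?_) i
    · simpa [hf] using hh
    · simpa [hf] using hF j
  refine hd f B hB hB0 hfl ?_
  refine (ae_restrict_mem hB).mono fun x hx => isNormOn_of hfl x fun a ha => ?_
  have e : (fun y => ∑ i, a i * f i y) = fun y => a 0 * h y + ∑ i : Fin n, a i.succ * F y i := by
    ext y; rw [Fin.sum_univ_succ]; simp [hf]
  rw [e] at ha
  have e2 : ∀ (c : ℝ) y, inner ℝ (WithLp.toLp 2 (fun i : Fin n => c * a i.succ) : Eu n) (F y) = c * ∑ i : Fin n, a i.succ * F y i := by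
    intro c y; simp [PiLp.inner_apply, Finset.mul_sum, mul_comm, mul_assoc]
  by_cases h0 : a 0 = 0
  · have := hreg x hx (WithLp.toLp 2 (fun i : Fin n => 1 * a i.succ)) (by
      simp only [e2]; simpa [h0] using ha)
    ext i
    refine Fin.cases h0 (fun j => ?_) i
    have := congrFun (congrArg WithLp.ofLp this) j
    simpa using this
  · exfalso
    refine hs x hx (WithLp.toLp 2 (fun i : Fin n => (-(a 0)⁻¹) * a i.succ)) ?_
    simp only [e2]
    intro ε hε
    obtain ⟨t, ht, H⟩ := ha (ε * |a 0|) (by have := abs_pos.2 h0; positivity)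
    refine ⟨t, ht, fun y hy => ?_⟩
    have := H y hy
    have hp := abs_pos.2 h0
    have e3 : ∀ y, h y - -(a 0)⁻¹ * ∑ i : Fin n, a i.succ * F y i = (a 0)⁻¹ * (a 0 * h y + ∑ i : Fin n, a i.succ * F y i) := by
      intro y; field_simp; ring
    simp only at this ⊢
    rw [e3, e3, ← mul_sub, abs_mul, abs_inv, inv_mul_le_iff₀ hp]
    linarith

def spanW {X : Type*} [MetricSpace X] {n : ℕ} (F : X → Eu n) (Y : Set X) (κ s t : ℝ) : Set X :=
  {x | ∀ v ∈ Metric.sphere (0 : Eu n) 1, ∃ y ∈ Y, s < dist y x ∧ dist y x < t ∧ κ * dist y x < |inner ℝ v (F y - F x)|}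

def SpanAt {X : Type*} [MetricSpace X] {n : ℕ} (F : X → Eu n) (Y : Set X) (κ : ℝ) (x : X) : Prop :=
  ∀ t > 0, ∀ v ∈ Metric.sphere (0 : Eu n) 1, ∃ y ∈ Y, 0 < dist y x ∧ dist y x < t ∧ κ * dist y x < |inner ℝ v (F y - F x)|

lemma isOpen_spanW {X : Type*} [MetricSpace X] {n : ℕ} {F : X → Eu n} (hF : Continuous F) (Y : Set X) (κ s t : ℝ) :
    IsOpen (spanW F Y κ s t) := by
  rw [isOpen_iff_eventually]
  intro x hx
  refine IsCompact.eventually_forall_of_forall_eventually (isCompact_sphere (0 : Eu n) 1) (fun v hv => ?_)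
  obtain ⟨y, hy, h1, h2, h3⟩ := hx v hv
  have : ∀ᶠ p : X × Eu n in nhds (x, v), s < dist y p.1 ∧ dist y p.1 < t ∧ κ * dist y p.1 < |inner ℝ p.2 (F y - F p.1)| := by
    have c1 : Continuous fun p : X × Eu n => dist y p.1 := by fun_prop
    have c2 : Continuous fun p : X × Eu n => |inner ℝ p.2 (F y - F p.1)| := by fun_prop
    refine ((c1.tendsto (x, v)).eventually_const_lt h1).and (((c1.tendsto (x, v)).eventually_lt_const h2).and ?_)
    exact (continuous_const.mul c1).continuousAt.eventually_lt c2.continuousAt h3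
  exact this.mono fun p hp => ⟨y, hy, hp⟩

lemma spanW_mono {X : Type*} [MetricSpace X] {n : ℕ} (F : X → Eu n) (Y : Set X) (κ : ℝ) {s s' t : ℝ} (h : s ≤ s') :
    spanW F Y κ s' t ⊆ spanW F Y κ s t := by
  intro x hx v hv
  obtain ⟨y, hy, h1, h2⟩ := hx v hv
  exact ⟨y, hy, by linarith, h2⟩

lemma spanW_exists {X : Type*} [MetricSpace X] {n : ℕ} {F : X → Eu n} {Y : Set X} {κ t : ℝ} {x : X}
    (h : ∀ v ∈ Metric.sphere (0 : Eu n) 1, ∃ y ∈ Y, 0 < dist y x ∧ dist y x < t ∧ κ * dist y x < |inner ℝ v (F y - F x)|) :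
    ∃ m : ℕ, x ∈ spanW F Y κ (1 / ((m:ℝ) + 1)) t := by
  have h1 : ∀ m : ℕ, IsOpen {v : Eu n | ∃ y ∈ Y, 1 / ((m:ℝ) + 1) < dist y x ∧ dist y x < t ∧ κ * dist y x < |inner ℝ v (F y - F x)|} := by
    intro m
    have : {v : Eu n | ∃ y ∈ Y, 1 / ((m:ℝ) + 1) < dist y x ∧ dist y x < t ∧ κ * dist y x < |inner ℝ v (F y - F x)|} =
        ⋃ y ∈ {y | y ∈ Y ∧ 1 / ((m:ℝ) + 1) < dist y x ∧ dist y x < t}, {v | κ * dist y x < |inner ℝ v (F y - F x)|} := by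
      ext v
      simp only [Set.mem_iUnion, Set.mem_ofPred_eq, exists_prop, and_assoc]
    rw [this]
    exact isOpen_biUnion fun y _ => isOpen_lt continuous_const (by fun_prop)
  have h2 : Metric.sphere (0 : Eu n) 1 ⊆ ⋃ m : ℕ, {v : Eu n | ∃ y ∈ Y, 1 / ((m:ℝ) + 1) < dist y x ∧ dist y x < t ∧ κ * dist y x < |inner ℝ v (F y - F x)|} := by
    intro v hv
    obtain ⟨y, hy, h1, h2⟩ := h v hv
    obtain ⟨m, hm⟩ := exists_nat_one_div_lt h1
    exact Set.mem_iUnion.2 ⟨m, y, hy, hm, h2⟩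
  obtain ⟨m, hm⟩ := (isCompact_sphere (0 : Eu n) 1).elim_directed_cover _ h1 h2 (by
    refine Monotone.directed_le fun m m' hmm v => ?_
    rintro ⟨y, hy, h1, h2⟩
    exact ⟨y, hy, (Nat.one_div_le_one_div hmm).trans_lt h1, h2⟩)
  exact ⟨m, fun v hv => hm hv⟩

lemma measurableSet_spanAt {X : Type*} [MetricSpace X] [MeasurableSpace X] [BorelSpace X] {n : ℕ} {F : X → Eu n}
    (hF : Continuous F) (Y : Set X) (κ : ℝ) : MeasurableSet {x | SpanAt F Y κ x} := by
  have : {x | SpanAt F Y κ x} = ⋂ k : ℕ, ⋃ m : ℕ, spanW F Y κ (1 / ((m:ℝ) + 1)) (1 / ((k:ℝ) + 1)) := by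
    ext x
    simp only [Set.mem_iInter, Set.mem_iUnion]
    constructor
    · intro h k
      exact spanW_exists (h _ (by positivity))
    · intro h t ht v hv
      obtain ⟨k, hk⟩ := exists_nat_one_div_lt ht
      obtain ⟨m, hm⟩ := h k
      obtain ⟨y, hy, h1, h2, h3⟩ := hm v hv
      exact ⟨y, hy, lt_trans (by positivity) h1, h2.trans hk, h3⟩
  rw [this]
  exact MeasurableSet.iInter fun k => MeasurableSet.iUnion fun m => (isOpen_spanW hF _ _ _ _).measurableSet

lemma spanAt_mono {X : Type*} [MetricSpace X] {n : ℕ} {F : X → Eu n} {Y : Set X} {κ κ' : ℝ} (h : κ ≤ κ') {x : X}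
    (hx : SpanAt F Y κ' x) : SpanAt F Y κ x := by
  intro t ht v hv
  obtain ⟨y, hy, h1, h2, h3⟩ := hx t ht v hv
  exact ⟨y, hy, h1, h2, lt_of_le_of_lt (by gcongr) h3⟩

lemma reg_span {X : Type*} [MetricSpace X] {n : ℕ} {F : X → Eu n} {L : ℝ≥0} (hF : LipschitzWith L F) {x : X}
    (h : Reg F x) : ∃ k : ℕ, SpanAt F Set.univ (1 / ((k:ℝ) + 1)) x := by
  by_contra hcon
  simp only [SpanAt, not_exists, not_forall] at hcon
  choose t ht v hv hy using hcon
  obtain ⟨w, hw, φ, hφ, hlim⟩ := (isCompact_sphere (0 : Eu n) 1).tendsto_subseq hv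
  have hw0 : w ≠ 0 := by
    rintro rfl
    simp at hw
  apply hw0
  refine h w fun ε hε => ?_
  have e1 : ∀ᶠ k in Filter.atTop, ‖v (φ k) - w‖ * (L + 1) < ε / 2 := by
    have : Filter.Tendsto (fun k => ‖v (φ k) - w‖ * (L + 1)) Filter.atTop (nhds (‖w - w‖ * (L + 1))) :=
      ((hlim.sub_const w).norm).mul_const _
    simp only [sub_self, norm_zero, zero_mul] at this
    exact this.eventually_lt_const (by positivity)
  have e2 : ∀ᶠ k in Filter.atTop, 1 / ((φ k : ℝ) + 1) < ε / 2 :=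
    (tendsto_one_div_add_atTop_nhds_zero_nat.comp hφ.tendsto_atTop).eventually_lt_const (by positivity)
  obtain ⟨k, h1, h2⟩ := (e1.and e2).exists
  refine ⟨t (φ k), ht _, fun y hyt => ?_⟩
  by_cases hyx : y = x
  · simp [hyx]
  have h3 : |inner ℝ (v (φ k)) (F y - F x)| ≤ 1 / ((φ k : ℝ) + 1) * dist y x := by
    by_contra hlt
    exact hy (φ k) y ⟨Set.mem_univ _, dist_pos.2 hyx, hyt, not_le.1 hlt⟩
  have h4 : |inner ℝ (v (φ k) - w) (F y - F x)| ≤ ‖v (φ k) - w‖ * (L * dist y x) := by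
    refine (abs_real_inner_le_norm _ _).trans ?_
    gcongr
    rw [← dist_eq_norm]
    exact hF.dist_le_mul y x
  simp only
  rw [← inner_sub_right]
  have h5 : inner ℝ w (F y - F x) = inner ℝ (v (φ k)) (F y - F x) - inner ℝ (v (φ k) - w) (F y - F x) := by
    rw [← inner_sub_left]; congr 1; abel
  rw [h5]
  refine (abs_sub _ _).trans ?_
  have hd := dist_nonneg (x := y) (y := x)
  have h6 : ‖v (φ k) - w‖ * (L * dist y x) ≤ ε / 2 * dist y x := by
    have : ‖v (φ k) - w‖ * L ≤ ε / 2 := by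
      have := norm_nonneg (v (φ k) - w); linarith
    rw [← mul_assoc]; gcongr
  have h7 : 1 / ((φ k : ℝ) + 1) * dist y x ≤ ε / 2 * dist y x := by gcongr
  linarith

lemma window_one {X : Type*} [MeasurableSpace X] {μ : Measure X} {U : Set X} (hU : MeasurableSet U) (hUt : μ U ≠ ⊤)
    (W : ℝ → Set X) (hW : ∀ s, MeasurableSet (W s)) (hmono : ∀ s s', s ≤ s' → W s' ⊆ W s)
    (hex : ∀ x ∈ U, ∃ m : ℕ, x ∈ W (1 / ((m:ℝ) + 1))) {b : ℝ} (hb : 0 < b) {ε : ℝ≥0∞} (hε : 0 < ε) :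
    ∃ s, 0 < s ∧ s < b ∧ μ (U \ W s) ≤ ε := by
  have hanti : Antitone fun m : ℕ => U \ W (1 / ((m:ℝ) + 1)) := by
    intro m m' h
    exact Set.sdiff_subset_sdiff_right (hmono _ _ (Nat.one_div_le_one_div h))
  have h1 := tendsto_measure_iInter_atTop (μ := μ) (fun m : ℕ => (hU.diff (hW (1 / ((m:ℝ) + 1)))).nullMeasurableSet) hanti
    ⟨0, measure_ne_top_of_subset Set.sdiff_subset hUt⟩
  have h2 : ⋂ m : ℕ, U \ W (1 / ((m:ℝ) + 1)) = ∅ := by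
    ext x
    simp only [Set.mem_iInter, Set.mem_sdiff, Set.mem_empty_iff_false, iff_false, not_forall]
    by_cases hx : x ∈ U
    · obtain ⟨m, hm⟩ := hex x hx
      exact ⟨m, fun h => h.2 hm⟩
    · exact ⟨0, fun h => hx h.1⟩
  rw [h2, measure_empty] at h1
  have e1 := h1.eventually_lt_const hε
  have e2 : ∀ᶠ m : ℕ in Filter.atTop, 1 / ((m : ℝ) + 1) < b :=
    tendsto_one_div_add_atTop_nhds_zero_nat.eventually_lt_const hb
  obtain ⟨m, h3, h4⟩ := (e1.and e2).exists
  exact ⟨_, by positivity, h4, h3.le⟩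

lemma window_choice {X : Type*} [MeasurableSpace X] {μ : Measure X} {U : Set X} (hU : MeasurableSet U) (hUt : μ U ≠ ⊤)
    (hU0 : 0 < μ U) (W : ℕ → ℝ → ℝ → Set X) (hW : ∀ j s t, MeasurableSet (W j s t))
    (hmono : ∀ j s s' t, s ≤ s' → W j s' t ⊆ W j s t)
    (hex : ∀ j t, 0 < t → ∀ x ∈ U, ∃ m : ℕ, x ∈ W j (1 / ((m:ℝ) + 1)) t) (b : ℕ → ℝ → ℝ)
    (hb : ∀ j s, 0 < s → 0 < b j s) {b0 : ℝ} (hb0 : 0 < b0) :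
    ∃ t s : ℕ → ℝ, (∀ j, 0 < s j ∧ s j < t j ∧ t (j+1) ≤ b j (s j) ∧ t (j+1) ≤ s j ∧ t j ≤ (1/2)^j) ∧ t 0 ≤ b0 ∧
      0 < μ (U ∩ ⋂ j, W j (s j) (t j)) := by
  obtain ⟨ε, hε, hεs⟩ := ENNReal.exists_pos_sum_of_countable hU0.ne' ℕ
  have step : ∀ j (t : ℝ), 0 < t → ∃ s, 0 < s ∧ s < t ∧ μ (U \ W j s t) ≤ ε j := fun j t ht =>
    window_one hU hUt (fun s => W j s t) (fun s => hW j s t) (fun s s' => hmono j s s' t) (hex j t ht) ht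
      (by exact_mod_cast hε j)
  choose! sf hs1 hs2 hs3 using step
  let t : ℕ → ℝ := fun j => Nat.rec (min b0 1)
    (fun j tj => min (min (b j (sf j tj)) (sf j tj)) ((1/2)^(j+1))) j
  have ht0 : t 0 = min b0 1 := rfl
  have htS : ∀ j, t (j+1) = min (min (b j (sf j (t j))) (sf j (t j))) ((1/2)^(j+1)) := fun j => rfl
  have htp : ∀ j, 0 < t j := by
    intro j
    induction j with
    | zero => rw [ht0]; exact lt_min hb0 one_pos
    | succ j ih =>
      rw [htS]
      have := hs1 j _ ih
      exact lt_min (lt_min (hb j _ this) this) (by positivity)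
  refine ⟨t, fun j => sf j (t j), fun j => ⟨hs1 _ _ (htp j), hs2 _ _ (htp j), ?_, ?_, ?_⟩, ?_, ?_⟩
  · rw [htS]; exact (min_le_left _ _).trans (min_le_left _ _)
  · rw [htS]; exact (min_le_left _ _).trans (min_le_right _ _)
  · cases j with
    | zero => rw [ht0]; simp
    | succ j => rw [htS]; exact min_le_right _ _
  · rw [ht0]; exact min_le_left _ _
  · by_contra hcon
    have h0 : μ (U ∩ ⋂ j, W j (sf j (t j)) (t j)) = 0 := by simpa using hcon
    have h1 : U ⊆ (U ∩ ⋂ j, W j (sf j (t j)) (t j)) ∪ ⋃ j, (U \ W j (sf j (t j)) (t j)) := by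
      intro x hx
      by_cases h : x ∈ ⋂ j, W j (sf j (t j)) (t j)
      · exact Or.inl ⟨hx, h⟩
      · rw [Set.mem_iInter, not_forall] at h
        obtain ⟨j, hj⟩ := h
        exact Or.inr (Set.mem_iUnion.2 ⟨j, hx, hj⟩)
    have h2 : μ U ≤ ∑' j, (ε j : ℝ≥0∞) := by
      calc μ U ≤ _ := measure_mono h1
        _ ≤ _ := measure_union_le _ _
        _ ≤ 0 + ∑' j, μ (U \ W j (sf j (t j)) (t j)) := by
            rw [h0]; gcongr; exact measure_iUnion_le _
        _ ≤ _ := by rw [zero_add]; exact ENNReal.tsum_le_tsum fun j => hs3 _ _ (htp j)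
    exact absurd h2 (not_le.2 hεs)

lemma p5core {X : Type*} [MetricSpace X] [MeasurableSpace X] [BorelSpace X] {n : ℕ} {μ : Measure X} (hd : HDim n μ)
    {F : X → Eu n} {L : ℝ≥0} (hFL : LipschitzWith L F)
    (hF : ∀ i, ∃ K : ℝ≥0, LipschitzWith K (fun y => F y i)) {B U : Set X} (hUB : U ⊆ B)
    (hU : MeasurableSet U) (hU0 : 0 < μ U) (hUt : μ U ≠ ⊤) (hreg : ∀ x ∈ U, Reg F x) {κ ε : ℝ} (hκ : 0 < κ)
    (hε : 0 < ε) (hε1 : ε ≤ 1)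
    (hspan : ∀ x ∈ U, SpanAt F Set.univ κ x)
    (hbad : ∀ x ∈ U, ∀ t > 0, ∃ y, dist y x < t ∧ ε * dist y x < Metric.infDist y B) : False := by
  set g : X → ℝ := fun y => Metric.infDist y B with hg
  have hgc : Continuous g := Metric.continuous_infDist_pt B
  set W : ℕ → ℝ → ℝ → Set X := fun j s t => if Even j then {x | ∃ y, s < dist y x ∧ dist y x < t/2 ∧ ε * dist y x < g y}
    else spanW F Set.univ κ s (t/2) with hW
  have hWm : ∀ j s t, MeasurableSet (W j s t) := by
    intro j s t
    simp only [hW]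
    split_ifs
    · have : {x | ∃ y, s < dist y x ∧ dist y x < t/2 ∧ ε * dist y x < g y} =
          ⋃ y, ({x | s < dist y x} ∩ ({x | dist y x < t/2} ∩ {x | ε * dist y x < g y})) := by
        ext x; simp
      rw [this]
      refine (isOpen_iUnion fun y => ?_).measurableSet
      exact (isOpen_lt continuous_const (by fun_prop)).inter ((isOpen_lt (by fun_prop) continuous_const).inter
        (isOpen_lt (by fun_prop) continuous_const))
    · exact (isOpen_spanW hFL.continuous _ _ _ _).measurableSet
  have hWmono : ∀ j s s' t, s ≤ s' → W j s' t ⊆ W j s t := by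
    intro j s s' t h
    simp only [hW]
    split_ifs
    · rintro x ⟨y, h1, h2⟩
      exact ⟨y, by linarith, h2⟩
    · exact spanW_mono _ _ _ h
  have hWex : ∀ j t, 0 < t → ∀ x ∈ U, ∃ m : ℕ, x ∈ W j (1 / ((m:ℝ) + 1)) t := by
    intro j t ht x hx
    simp only [hW]
    split_ifs
    · obtain ⟨y, h1, h2⟩ := hbad x hx (t/2) (by positivity)
      have hyx : y ≠ x := by
        rintro rfl
        have : Metric.infDist y B = 0 := Metric.infDist_zero_of_mem (hUB hx)
        rw [this, dist_self, mul_zero] at h2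
        exact lt_irrefl _ h2
      obtain ⟨m, hm⟩ := exists_nat_one_div_lt (dist_pos.2 hyx)
      exact ⟨m, y, hm, h1, h2⟩
    · exact spanW_exists (hspan x hx (t/2) (by positivity))
  obtain ⟨t, s, hts, -, hpos⟩ := window_choice hU hUt hU0 W hWm hWmono hWex (fun j s => (1/2)^j * s)
    (fun j s hs => by positivity) one_pos
  set Z : Set ℝ := {z | z = 0 ∨ ∃ j, ¬ Even j ∧ t (j+1) ≤ z ∧ z ≤ t j} with hZ
  have hZ0 : (0:ℝ) ∈ Z := Or.inl rfl
  set h : X → ℝ := fun y => Metric.infDist (g y) Z with hh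
  have htmono : Antitone t := antitone_nat_of_succ_le fun j => by
    have := hts j; linarith
  have htp : ∀ j, 0 < t j := fun j => by have := hts j; linarith
  refine p2 hd hF (hU.inter (MeasurableSet.iInter fun j => hWm j (s j) (t j))) hpos (fun x hx => hreg x hx.1)
    (h := h) ⟨1 * 1, (Metric.lipschitz_infDist_pt Z).comp (Metric.lipschitz_infDist_pt B)⟩ ?_
  rintro x ⟨hxU, hxW⟩ α hsm
  rw [Set.mem_iInter] at hxW
  have hgx : g x = 0 := Metric.infDist_zero_of_mem (hUB hxU)
  have hhx : h x = 0 := by simp only [hh, hgx]; exact Metric.infDist_zero_of_mem hZ0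
  have hgd : ∀ y, g y ≤ dist y x := fun y => Metric.infDist_le_dist_of_mem (hUB hxU)
  have hg0 : ∀ y, 0 ≤ g y := fun y => Metric.infDist_nonneg
  have hpow : ∀ c : ℝ, 0 < c → ∃ N : ℕ, ∀ j ≥ N, (1/2:ℝ)^j < c := by
    intro c hc
    obtain ⟨N, hN⟩ := exists_pow_lt_of_lt_one hc (by norm_num : (1/2:ℝ) < 1)
    exact ⟨N, fun j hj => (pow_le_pow_of_le_one (by norm_num) (by norm_num) hj).trans_lt hN⟩
  have hα : α = 0 := by
    by_contra hα
    have hα' : 0 < ‖α‖ := norm_pos_iff.2 hα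
    obtain ⟨τ, hτ, hsm⟩ := hsm (κ * ‖α‖ / 2) (by positivity)
    obtain ⟨N, hN⟩ := hpow (min τ (κ * ‖α‖ / 2)) (lt_min hτ (by positivity))
    set j := 2 * N + 1 with hj
    have hodd : ¬ Even j := by simp [hj]
    have hjN := hN j (by omega)
    have hx := hxW j
    simp only [hW, hodd, if_false] at hx
    obtain ⟨y, -, h1, h2, h3⟩ := hx (‖α‖⁻¹ • α) (by simp [norm_smul, hα'.ne'])
    obtain ⟨a1, a2, a3, a4, a5⟩ := hts j
    have hdp : 0 < dist y x := by linarith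
    rw [real_inner_smul_left, abs_mul, abs_of_pos (inv_pos.2 hα'), inv_mul_eq_div, lt_div_iff₀ hα'] at h3
    have h4 := hsm y (by have := min_le_left τ (κ * ‖α‖ / 2); have := htp j; linarith)
    simp only [hhx] at h4
    have h5 : h y ≤ (1/2)^j * dist y x := by
      by_cases hgt : t (j+1) ≤ g y
      · have : g y ∈ Z := Or.inr ⟨j, hodd, hgt, by have := hgd y; have := htp j; linarith⟩
        have : h y = 0 := Metric.infDist_zero_of_mem this
        rw [this]; positivity
      · push Not at hgt
        have : h y ≤ dist (g y) 0 := Metric.infDist_le_dist_of_mem hZ0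
        rw [Real.dist_eq, sub_zero, abs_of_nonneg (hg0 y)] at this
        have : (1/2:ℝ)^j * s j ≤ (1/2)^j * dist y x := by gcongr
        linarith
    have h6 : 0 ≤ h y := Metric.infDist_nonneg
    rw [inner_sub_right] at h3
    have h7 : |inner ℝ α (F y) - inner ℝ α (F x)| ≤ |h y - inner ℝ α (F y) - (0 - inner ℝ α (F x))| + h y := by
      have := abs_sub (h y) (h y - inner ℝ α (F y) - (0 - inner ℝ α (F x)))
      rw [abs_of_nonneg h6] at this
      refine le_trans (le_of_eq ?_) (this.trans (le_of_eq (add_comm _ _)))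
      congr 1; ring
    have h8 : (1/2:ℝ)^j * dist y x < κ * ‖α‖ / 2 * dist y x := by
      have := min_le_right τ (κ * ‖α‖ / 2)
      gcongr
      linarith
    nlinarith
  subst hα
  obtain ⟨τ, hτ, hsm⟩ := hsm (ε / 2) (by positivity)
  obtain ⟨N, hN⟩ := hpow (min τ (ε / 2)) (lt_min hτ (by positivity))
  set j := 2 * N with hj
  have heven : Even j := by simp [hj]
  have hjN := hN j (by omega)
  have hx := hxW j
  simp only [hW, heven, if_true] at hx
  obtain ⟨y, h1, h2, h3⟩ := hx
  obtain ⟨a1, a2, a3, a4, a5⟩ := hts j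
  have hdp : 0 < dist y x := by linarith
  have h4 := hsm y (by have := min_le_left τ (ε / 2); have := htp j; linarith)
  simp only [hhx, inner_zero_left, sub_zero] at h4
  have h5 : (ε - (1/2)^j) * dist y x ≤ h y := by
    have hs' : (1/2:ℝ)^j * s j ≤ (1/2)^j * dist y x := by gcongr
    have hpp : (0:ℝ) ≤ (1/2)^j * dist y x := by positivity
    refine (Metric.le_infDist ⟨0, hZ0⟩).2 ?_
    intro z hz
    rw [Real.dist_eq]
    have hgdy := hgd y
    have hlow : z ≤ t (j+1) → (ε - (1/2)^j) * dist y x ≤ |g y - z| := by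
      intro hz'
      refine le_trans ?_ (le_abs_self _)
      linarith
    rcases hz with rfl | ⟨i, hi, hi1, hi2⟩
    · exact hlow (htp _).le
    · rcases lt_trichotomy i j with hij | hij | hij
      · have : t j ≤ t (i+1) := htmono hij
        rw [abs_sub_comm]
        refine le_trans ?_ (le_abs_self _)
        have : ε * dist y x ≤ 1 * dist y x := by gcongr
        linarith
      · exact absurd heven (hij ▸ hi)
      · exact hlow (hi2.trans (htmono hij))
  have h6 : (1/2:ℝ)^j * dist y x < ε / 2 * dist y x := by
    have := min_le_right τ (ε / 2)
    gcongr
    linarith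
  have := le_abs_self (h y)
  linarith

lemma p5 {X : Type*} [MetricSpace X] [MeasurableSpace X] [BorelSpace X] {n : ℕ} {μ : Measure X} (hd : HDim n μ)
    {F : X → Eu n} {L : ℝ≥0} (hFL : LipschitzWith L F)
    (hF : ∀ i, ∃ K : ℝ≥0, LipschitzWith K (fun y => F y i)) {B : Set X}
    (hB : MeasurableSet B) (hBt : μ B ≠ ⊤) (hreg : ∀ x ∈ B, Reg F x) :
    μ {x | x ∈ B ∧ ¬ Smol (fun y => Metric.infDist y B) x} = 0 := by
  set Bad : ℕ → Set X := fun m => {x | ∀ t > 0, ∃ y, dist y x < t ∧ (1 / ((m:ℝ)+1)) * dist y x < Metric.infDist y B} with hBad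
  have hBadm : ∀ m, MeasurableSet (Bad m) := by
    intro m
    have : Bad m = ⋂ k : ℕ, ⋃ y, ({x | dist y x < 1 / ((k:ℝ)+1)} ∩ {x | (1 / ((m:ℝ)+1)) * dist y x < Metric.infDist y B}) := by
      ext x
      simp only [hBad, Set.mem_iInter, Set.mem_iUnion, Set.mem_ofPred_eq, Set.mem_inter_iff]
      constructor
      · intro h k
        exact h _ (by positivity)
      · intro h t ht
        obtain ⟨k, hk⟩ := exists_nat_one_div_lt ht
        obtain ⟨y, h1, h2⟩ := h k
        exact ⟨y, h1.trans hk, h2⟩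
    rw [this]
    refine MeasurableSet.iInter fun k => (isOpen_iUnion fun y => ?_).measurableSet
    exact (isOpen_lt (by fun_prop) continuous_const).inter (isOpen_lt (by fun_prop) continuous_const)
  have hnull : ∀ m k : ℕ, μ (B ∩ (Bad m ∩ {x | SpanAt F Set.univ (1 / ((k:ℝ)+1)) x})) = 0 := by
    intro m k
    by_contra hne
    refine p5core hd hFL hF (U := B ∩ (Bad m ∩ {x | SpanAt F Set.univ (1 / ((k:ℝ)+1)) x})) Set.inter_subset_left
      (hB.inter ((hBadm m).inter (measurableSet_spanAt hFL.continuous _ _))) (pos_iff_ne_zero.2 hne)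
      (measure_ne_top_of_subset Set.inter_subset_left hBt) (fun x hx => hreg x hx.1) (κ := 1 / ((k:ℝ)+1)) (ε := 1 / ((m:ℝ)+1))
      (by positivity) (by positivity) ?_ (fun x hx => hx.2.2) (fun x hx => hx.2.1)
    rw [div_le_one (by positivity)]
    have : (0:ℝ) ≤ m := by positivity
    linarith
  refine measure_mono_null ?_ (measure_iUnion_null fun m => measure_iUnion_null (hnull m))
  rintro x ⟨hx, hns⟩
  obtain ⟨k, hk⟩ := reg_span hFL (hreg x hx)
  simp only [Smol, not_forall] at hns
  obtain ⟨ε, hε, hns⟩ := hns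
  obtain ⟨m, hm⟩ := exists_nat_one_div_lt hε
  refine Set.mem_iUnion.2 ⟨m, Set.mem_iUnion.2 ⟨k, hx, ?_, hk⟩⟩
  intro t ht
  by_contra hcon
  push Not at hcon
  refine hns ⟨t, ht, fun y hy => ?_⟩
  rw [Metric.infDist_zero_of_mem hx, sub_zero, abs_of_nonneg Metric.infDist_nonneg]
  refine (hcon y hy).trans ?_
  gcongr

lemma p6 {X : Type*} [MetricSpace X] {n : ℕ} {F : X → Eu n} {L : ℝ≥0} (hFL : LipschitzWith L F) {B : Set X} {x : X}
    (hx : x ∈ B) {κ : ℝ} (hκ : 0 < κ) (hsp : SpanAt F Set.univ κ x) (hsm : Smol (fun y => Metric.infDist y B) x) :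
    SpanAt F B (κ/2) x := by
  intro t ht v hv
  set ε : ℝ := min (1/4) (κ / (8 * (L + κ + 1))) with hε
  have hL : (0:ℝ) ≤ L := L.2
  have hεp : 0 < ε := lt_min (by norm_num) (by positivity)
  have hε1 : ε ≤ 1/4 := min_le_left _ _
  have hε2 : ε * (8 * (L + κ + 1)) ≤ κ := by
    rw [← le_div_iff₀ (by positivity)]; exact min_le_right _ _
  obtain ⟨t1, ht1, H⟩ := hsm ε hεp
  obtain ⟨y, -, h1, h2, h3⟩ := hsp (min t1 (t/2)) (lt_min ht1 (by positivity)) v hv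
  have h4 := H y (h2.trans_le (min_le_left _ _))
  simp only at h4
  rw [Metric.infDist_zero_of_mem hx, sub_zero, abs_of_nonneg Metric.infDist_nonneg] at h4
  have h5 : Metric.infDist y B < 2 * ε * dist y x := by nlinarith [mul_pos hεp h1]
  obtain ⟨z, hz, hyz⟩ := (Metric.infDist_lt_iff ⟨x, hx⟩).1 h5
  have e1 := dist_triangle z y x
  have e2 := dist_triangle y z x
  rw [dist_comm z y] at e1
  have e3 : 2 * ε * dist y x ≤ 1/2 * dist y x := by gcongr; linarith
  have e4 := h2.trans_le (min_le_right t1 (t/2))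
  refine ⟨z, hz, by linarith, by linarith, ?_⟩
  have e5 : |inner ℝ v (F y - F z)| ≤ L * dist y z := by
    refine (abs_real_inner_le_norm _ _).trans ?_
    rw [mem_sphere_zero_iff_norm.1 hv, one_mul, ← dist_eq_norm]
    exact hFL.dist_le_mul y z
  have e6 : |inner ℝ v (F y - F x)| ≤ |inner ℝ v (F z - F x)| + |inner ℝ v (F y - F z)| := by
    rw [show F y - F x = (F z - F x) + (F y - F z) by abel, inner_add_right]
    exact abs_add_le _ _
  have e7 : (L:ℝ) * dist y z ≤ L * (2 * ε * dist y x) := by gcongr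
  have e8 : κ/2 * dist z x ≤ κ/2 * ((1 + 2 * ε) * dist y x) := by gcongr; linarith
  have e9 : ε * L * 8 + ε * κ * 8 ≤ κ := by nlinarith
  have e10 : (2 * (ε * L) + κ / 2 + ε * κ) * dist y x ≤ κ * dist y x := by gcongr; linarith [mul_pos hεp hκ, mul_nonneg hεp.le hL]
  nlinarith

lemma reg_rel {X : Type*} [MetricSpace X] [MeasurableSpace X] [BorelSpace X] {n : ℕ} {μ : Measure X} (hd : HDim n μ)
    {F : X → Eu n} {L : ℝ≥0} (hFL : LipschitzWith L F)
    (hF : ∀ i, ∃ K : ℝ≥0, LipschitzWith K (fun y => F y i)) {B : Set X}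
    (hB : MeasurableSet B) (hBt : μ B ≠ ⊤) (hB0 : 0 < μ B) (hreg : ∀ x ∈ B, Reg F x) :
    ∃ κ > 0, ∃ U ⊆ B, MeasurableSet U ∧ 0 < μ U ∧ ∀ x ∈ U, SpanAt F B κ x := by
  have h1 : ∃ k : ℕ, μ (B ∩ {x | SpanAt F B (1 / ((k:ℝ)+1) / 2) x}) ≠ 0 := by
    by_contra hcon
    push Not at hcon
    have h2 := measure_union_null (p5 hd hFL hF hB hBt hreg) (measure_iUnion_null hcon)
    refine hB0.ne' (measure_mono_null ?_ h2)
    intro x hx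
    by_cases hs : Smol (fun y => Metric.infDist y B) x
    · obtain ⟨k, hk⟩ := reg_span hFL (hreg x hx)
      exact Or.inr (Set.mem_iUnion.2 ⟨k, hx, p6 hFL hx (by positivity) hk hs⟩)
    · exact Or.inl ⟨hx, hs⟩
  obtain ⟨k, hk⟩ := h1
  exact ⟨1 / ((k:ℝ)+1) / 2, by positivity, _, Set.inter_subset_left, hB.inter (measurableSet_spanAt hFL.continuous _ _),
    pos_iff_ne_zero.2 hk, fun x hx => hx.2⟩

lemma tail_est {u s : ℕ → ℝ} (hs : ∀ j, 0 < s j) (hs' : Antitone s) (hu : ∀ j, |u (j+1)| ≤ (1/2)^j * s j) (J : ℕ) :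
    |(∑' i, u i) - ∑ i ∈ Finset.range (J+1), u i| ≤ 2 * (1/2)^J * s J := by
  have hg : ∀ J : ℕ, HasSum (fun i : ℕ => (1/2:ℝ)^(i+J) * s J) (2 * (1/2)^J * s J) := by
    intro J
    have := ((hasSum_geometric_two).mul_right ((1/2:ℝ)^J * s J))
    have e1 : (fun i : ℕ => (1/2:ℝ)^(i+J) * s J) = fun i : ℕ => (1/2:ℝ)^i * ((1/2:ℝ)^J * s J) := by
      funext i; rw [pow_add]; ring
    rw [e1, mul_assoc]
    exact this
  have hb : ∀ J i : ℕ, ‖u (i + (J+1))‖ ≤ (1/2:ℝ)^(i+J) * s J := by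
    intro J i
    have := hu (i+J)
    rw [Real.norm_eq_abs]
    refine this.trans ?_
    gcongr
    exact hs' (by omega)
  have hsum : Summable u := by
    rw [← summable_nat_add_iff 1]
    exact Summable.of_norm_bounded (hg 0).summable (hb 0)
  rw [← hsum.sum_add_tsum_nat_add (J+1), add_sub_cancel_left]
  have := tsum_of_norm_bounded (hg J) (hb J)
  rwa [Real.norm_eq_abs] at this

lemma alt_est {V : Type*} [NormedAddCommGroup V] [NormedSpace ℝ V] (a : ℕ → V) (h1 : ∀ j, ‖a j‖ ≤ 1)
    (h2 : ∀ j, ‖a (j+1) - a j‖ ≤ 2 * (1/2)^j) (J : ℕ) :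
    ‖∑ i ∈ Finset.range (J+1), (-1:ℝ)^i • a i‖ ≤ 3 := by
  have key : ∀ J : ℕ, ‖∑ i ∈ Finset.range (J+1), (-1:ℝ)^i • a i - ((-1:ℝ)^J * (1/2)) • a J‖ ≤ 1/2 + (2 - 2 * (1/2)^J) := by
    intro J
    induction J with
    | zero =>
      have : (a 0 - (1/2:ℝ) • a 0) = (1/2:ℝ) • a 0 := by
        rw [sub_eq_iff_eq_add, ← add_smul]; norm_num
      simp only [zero_add, Finset.sum_range_one, pow_zero, one_smul, one_mul]
      rw [this, norm_smul]
      have := h1 0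
      norm_num
      linarith
    | succ J ih =>
      rw [Finset.sum_range_succ]
      have e : ∑ i ∈ Finset.range (J+1), (-1:ℝ)^i • a i + (-1:ℝ)^(J+1) • a (J+1) - ((-1:ℝ)^(J+1) * (1/2)) • a (J+1)
         = (∑ i ∈ Finset.range (J+1), (-1:ℝ)^i • a i - ((-1:ℝ)^J * (1/2)) • a J) + ((-1:ℝ)^(J+1) * (1/2)) • (a (J+1) - a J) := by
        rw [pow_succ]; module
      rw [e]
      refine (norm_add_le _ _).trans ?_
      rw [norm_smul]
      have h3 : ‖(-1:ℝ)^(J+1) * (1/2)‖ = 1/2 := by rw [norm_mul, norm_pow]; norm_num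
      rw [h3]
      have := h2 J
      rw [pow_succ]
      linarith
  have h := key J
  have e : ∑ i ∈ Finset.range (J+1), (-1:ℝ)^i • a i = (∑ i ∈ Finset.range (J+1), (-1:ℝ)^i • a i - ((-1:ℝ)^J * (1/2)) • a J) + ((-1:ℝ)^J * (1/2)) • a J := by abel
  rw [e]
  refine (norm_add_le _ _).trans ?_
  rw [norm_smul ((-1:ℝ)^J * (1/2))]
  have h3 : ‖(-1:ℝ)^J * (1/2)‖ = 1/2 := by rw [norm_mul, norm_pow]; norm_num
  rw [h3]
  have := h1 J
  have : (0:ℝ) < (1/2)^J := by positivity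
  linarith

lemma p8core {X : Type*} [MetricSpace X] {n : ℕ} {F : X → Eu n} {L : ℝ≥0} (hFL : LipschitzWith L F) {B : Set X}
    (g : ℕ → Eu n → ℝ) (a : ℕ → Eu n → Eu n) (t s : ℕ → ℝ) {κ c0 : ℝ} (hκ : 0 < κ) (hc0 : 0 < c0)
    (h1 : ∀ j, ∀ x ∈ B, ‖a j (F x)‖ ≤ 1) (h2 : ∀ j w z, |g j w - g j z| ≤ ‖w - z‖)
    (h3 : ∀ j w, |g (j+1) w| ≤ (1/2)^j * s j)
    (h4 : ∀ j, ∀ x ∈ B, ‖a (j+1) (F x) - a j (F x)‖ ≤ 2 * (1/2)^j)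
    (h5 : ∀ j, ∀ i ≤ j, ∀ x ∈ B, ∀ w, ‖w - F x‖ ≤ L * t j →
      |g i w - g i (F x) - inner ℝ (a i (F x)) (w - F x)| ≤ (1/2)^j / (j+1) * ‖w - F x‖)
    (h6 : ∀ j, ∀ x ∈ B, c0 ≤ ‖a j (F x)‖)
    (hst : ∀ j, 0 < s j ∧ s j < t j ∧ t (j+1) ≤ s j ∧ t j ≤ (1/2)^j) :
    ∃ f : X → ℝ, (∃ K : ℝ≥0, LipschitzWith K f) ∧ ∀ x ∈ B, (∀ j, x ∈ spanW F B κ (s j) (t j)) →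
      ∀ α, ¬ Smol (fun y => f y - inner ℝ α (F y)) x := by
  have hL : (0:ℝ) ≤ L := L.2
  set f0 : X → ℝ := fun x => ∑' i, (-1:ℝ)^i * g i (F x) with hf0
  set S : ℕ → X → ℝ := fun J x => ∑ i ∈ Finset.range (J+1), (-1:ℝ)^i * g i (F x) with hS
  set A : ℕ → X → Eu n := fun J x => ∑ i ∈ Finset.range (J+1), (-1:ℝ)^i • a i (F x) with hA
  have hsA : Antitone s := antitone_nat_of_succ_le fun j => by
    have := hst j; have := hst (j+1); linarith
  have htail : ∀ J x y, |(f0 y - f0 x) - (S J y - S J x)| ≤ 4 * (1/2)^J * s J := by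
    intro J x y
    have hh : ∀ x, |f0 x - S J x| ≤ 2 * (1/2)^J * s J := by
      intro x
      refine tail_est (fun j => (hst j).1) hsA (fun j => ?_) J
      rw [abs_mul, abs_pow]; simpa using h3 j (F x)
    have hx := hh x
    have hy := hh y
    rw [abs_le] at *
    constructor <;> linarith [hx.1, hx.2, hy.1, hy.2]
  have hlin : ∀ J, ∀ x ∈ B, ∀ y, dist y x ≤ t J → |(S J y - S J x) - inner ℝ (A J x) (F y - F x)| ≤ (1/2)^J * (L * dist y x) := by
    intro J x hx y hd
    have hFd : ‖F y - F x‖ ≤ L * dist y x := by rw [← dist_eq_norm]; exact hFL.dist_le_mul y x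
    have e : (S J y - S J x) - inner ℝ (A J x) (F y - F x) =
        ∑ i ∈ Finset.range (J+1), (-1:ℝ)^i * (g i (F y) - g i (F x) - inner ℝ (a i (F x)) (F y - F x)) := by
      simp only [hS, hA]
      rw [sum_inner, ← Finset.sum_sub_distrib, ← Finset.sum_sub_distrib]
      refine Finset.sum_congr rfl fun i _ => ?_
      rw [real_inner_smul_left]; ring
    rw [e]
    refine (Finset.abs_sum_le_sum_abs _ _).trans ?_
    have : ∀ i ∈ Finset.range (J+1), |(-1:ℝ)^i * (g i (F y) - g i (F x) - inner ℝ (a i (F x)) (F y - F x))| ≤ (1/2)^J / (J+1) * (L * dist y x) := by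
      intro i hi
      rw [abs_mul, abs_pow]
      simp only [abs_neg, abs_one, one_pow, one_mul]
      refine (h5 J i (by simpa [Nat.lt_succ_iff] using hi) x hx (F y) (hFd.trans (by gcongr))).trans ?_
      gcongr
    refine (Finset.sum_le_sum this).trans ?_
    simp only [Finset.sum_const, Finset.card_range, nsmul_eq_mul]
    push_cast
    have : ((J:ℝ)+1) ≠ 0 := by positivity
    apply le_of_eq
    field_simp
  have hLip : ∀ x ∈ B, ∀ y ∈ B, |f0 y - f0 x| ≤ (5 * L + 4) * dist y x := by
    intro x hx y hy
    have hFd : ‖F y - F x‖ ≤ L * dist y x := by rw [← dist_eq_norm]; exact hFL.dist_le_mul y x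
    have hd0 : 0 ≤ dist y x := dist_nonneg
    by_cases hxy : y = x
    · simp [hxy]
    have hd : 0 < dist y x := dist_pos.2 hxy
    have hLd : 0 ≤ L * dist y x := by positivity
    by_cases h0 : t 0 ≤ dist y x
    · have e1 := htail 0 x y
      have e2 : S 0 y - S 0 x = g 0 (F y) - g 0 (F x) := by simp [hS]
      rw [e2] at e1
      have e3 := h2 0 (F y) (F x)
      have := (hst 0).2.1
      simp only [pow_zero, mul_one] at e1
      rw [abs_le] at *
      constructor <;> nlinarith [e1.1, e1.2, e3.1, e3.2]
    · push Not at h0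
      have hex : ∃ j, t j ≤ dist y x := by
        obtain ⟨j, hj⟩ := exists_pow_lt_of_lt_one hd (by norm_num : (1/2:ℝ) < 1)
        exact ⟨j, ((hst j).2.2.2).trans hj.le⟩
      classical
      obtain ⟨J, hJ⟩ : ∃ J, Nat.find hex = J + 1 := by
        refine Nat.exists_eq_succ_of_ne_zero fun h => ?_
        have := Nat.find_spec hex
        rw [h] at this; linarith
      have hJ1 : t (J+1) ≤ dist y x := hJ ▸ Nat.find_spec hex
      have hJ2 : dist y x < t J := by
        have := Nat.find_min hex (m := J) (by omega)
        push Not at this; exact this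
      have e1 := htail (J+1) x y
      have e2 := hlin J x hx y hJ2.le
      have e3 := h2 (J+1) (F y) (F x)
      have e4 : S (J+1) y - S (J+1) x = (S J y - S J x) + (-1:ℝ)^(J+1) * (g (J+1) (F y) - g (J+1) (F x)) := by
        simp only [hS]
        rw [Finset.sum_range_succ _ (J+1), Finset.sum_range_succ _ (J+1)]; ring
      have e5 : |(-1:ℝ)^(J+1) * (g (J+1) (F y) - g (J+1) (F x))| ≤ L * dist y x := by
        rw [abs_mul, abs_pow]
        simp only [abs_neg, abs_one, one_pow, one_mul]
        exact e3.trans hFd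
      have e6 : |inner ℝ (A J x) (F y - F x)| ≤ 3 * (L * dist y x) := by
        refine (abs_real_inner_le_norm _ _).trans ?_
        have := alt_est (fun j => a j (F x)) (fun j => h1 j x hx) (fun j => h4 j x hx) J
        gcongr
      have e7 : 4 * (1/2)^(J+1) * s (J+1) ≤ 4 * dist y x := by
        have := (hst (J+1)).2.1
        have h8 : (1/2:ℝ)^(J+1) ≤ 1 := pow_le_one₀ (by norm_num) (by norm_num)
        have := (hst (J+1)).1
        nlinarith
      have e8 : (1/2:ℝ)^J * (L * dist y x) ≤ L * dist y x := by
        have h8 : (1/2:ℝ)^J ≤ 1 := pow_le_one₀ (by norm_num) (by norm_num)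
        nlinarith
      rw [e4] at e1
      rw [abs_le] at *
      constructor <;> linarith [e1.1, e1.2, e2.1, e2.2, e5.1, e5.2, e6.1, e6.2]
  have hLO : LipschitzOnWith (5 * L + 4) f0 B := by
    refine LipschitzOnWith.of_dist_le_mul fun y hy x hx => ?_
    rw [Real.dist_eq]; push_cast; exact hLip x hx y hy
  obtain ⟨f, hf, hfe⟩ := hLO.extend_real
  refine ⟨f, ⟨_, hf⟩, fun x hx hwin α hsm => ?_⟩
  obtain ⟨r, hr, hsm⟩ := hsm (κ * c0 / 8) (by positivity)
  obtain ⟨j1, hj1⟩ := exists_pow_lt_of_lt_one hr (by norm_num : (1/2:ℝ) < 1)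
  obtain ⟨j2, hj2⟩ := exists_pow_lt_of_lt_one (show 0 < κ * c0 / (8 * (L + 4)) by positivity) (by norm_num : (1/2:ℝ) < 1)
  have hclose : ∀ J ≥ max j1 j2, ‖A J x - α‖ ≤ c0 / 4 := by
    intro J hJ
    by_contra hcon
    push Not at hcon
    have hpos : 0 < ‖A J x - α‖ := by linarith
    obtain ⟨y, hy, hs1, hs2, hs3⟩ := hwin J (‖A J x - α‖⁻¹ • (A J x - α)) (by
      rw [mem_sphere_zero_iff_norm, norm_smul, norm_inv, norm_norm, inv_mul_cancel₀ hpos.ne'])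
    rw [real_inner_smul_left, abs_mul, abs_inv, abs_norm, inv_mul_eq_div, lt_div_iff₀ hpos] at hs3
    have hd : 0 < dist y x := (hst J).1.trans hs1
    have hJ1 : (1/2:ℝ)^J ≤ (1/2)^j1 := pow_le_pow_of_le_one (by norm_num) (by norm_num) ((le_max_left _ _).trans hJ)
    have hJ2 : (1/2:ℝ)^J ≤ (1/2)^j2 := pow_le_pow_of_le_one (by norm_num) (by norm_num) ((le_max_right _ _).trans hJ)
    have e1 := hsm y (by have := (hst J).2.2.2; linarith)
    simp only at e1
    rw [← hfe hy, ← hfe hx] at e1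
    have e2 := htail J x y
    have e3 := hlin J x hx y hs2.le
    have e4 : 4 * (1/2)^J * s J ≤ 4 * (1/2)^J * dist y x := by gcongr
    have e5 : inner ℝ (A J x - α) (F y - F x) = inner ℝ (A J x) (F y - F x) - (inner ℝ α (F y) - inner ℝ α (F x)) := by
      rw [inner_sub_left, inner_sub_right α]
    have e6 : (1/2)^J * (L + 4) ≤ κ * c0 / 8 := by
      have := hJ2.trans hj2.le
      rw [le_div_iff₀ (by positivity)] at this
      linarith
    have e7 : |inner ℝ (A J x - α) (F y - F x)| ≤ (κ * c0 / 4) * dist y x := by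
      rw [e5]
      have : (1/2)^J * (L * dist y x) + 4 * (1/2)^J * dist y x ≤ κ * c0 / 8 * dist y x := by
        have := mul_le_mul_of_nonneg_right e6 hd.le
        linarith
      rw [abs_le] at *
      constructor <;> linarith [e1.1, e1.2, e2.1, e2.2, e3.1, e3.2]
    have : κ * dist y x * (c0/4) < κ * dist y x * ‖A J x - α‖ := by gcongr
    linarith
  set J := max j1 j2
  have h7 := hclose J le_rfl
  have h8 := hclose (J+1) (by omega)
  have h9 := h6 (J+1) x hx
  have e : A (J+1) x - A J x = (-1:ℝ)^(J+1) • a (J+1) (F x) := by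
    simp only [hA]
    rw [Finset.sum_range_succ _ (J+1)]; abel
  have e' : ‖a (J+1) (F x)‖ = ‖(A (J+1) x - α) - (A J x - α)‖ := by
    rw [sub_sub_sub_cancel_right, e, norm_smul, norm_pow]; simp
  have := norm_sub_le (A (J+1) x - α) (A J x - α)
  linarith

lemma unif_diff {n : ℕ} {ψ : Eu n → ℝ} (h : ContDiff ℝ 1 ψ) {K : Set (Eu n)} (hK : IsCompact K) {ε : ℝ} (hε : 0 < ε) :
    ∃ ρ > 0, ∀ z ∈ K, ∀ w, ‖w - z‖ ≤ ρ → |ψ w - ψ z - fderiv ℝ ψ z (w - z)| ≤ ε * ‖w - z‖ := by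
  have hc := h.continuous_fderiv one_ne_zero
  have hu := hK.uniformContinuousAt_of_continuousAt (fderiv ℝ ψ) (fun a _ => hc.continuousAt)
    (Metric.dist_mem_uniformity hε)
  obtain ⟨δ, hδ, hd⟩ := Metric.mem_uniformity_dist.1 hu
  refine ⟨δ / 2, by positivity, fun z hz w hw => ?_⟩
  have := (convex_closedBall z (δ/2)).norm_image_sub_le_of_norm_fderiv_le' (f := ψ) (φ := fderiv ℝ ψ z) (C := ε)
    (x := z) (y := w) (𝕜 := ℝ)
    (fun x _ => h.differentiable one_ne_zero x) (fun x hx => by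
      have h1 : dist z x < δ := by
        rw [dist_comm]; rw [Metric.mem_closedBall] at hx; linarith
      have := hd h1 hz
      simp only [Set.mem_ofPred_eq] at this
      rw [← dist_eq_norm, dist_comm]; exact this.le)
    (Metric.mem_closedBall_self (by positivity)) (by rwa [Metric.mem_closedBall, dist_eq_norm])
  simpa using this

lemma unif_diff_fin {n : ℕ} {ψ : ℕ → Eu n → ℝ} (h : ∀ k, ContDiff ℝ 1 (ψ k)) {K : Set (Eu n)} (hK : IsCompact K) {ε : ℝ} (hε : 0 < ε)
    (N : ℕ) : ∃ ρ > 0, ∀ l < N, ∀ z ∈ K, ∀ w, ‖w - z‖ ≤ ρ → |ψ l w - ψ l z - fderiv ℝ (ψ l) z (w - z)| ≤ ε * ‖w - z‖ := by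
  induction N with
  | zero => exact ⟨1, one_pos, fun l hl => absurd hl (Nat.not_lt_zero _)⟩
  | succ N ih =>
    obtain ⟨ρ, hρ, h1⟩ := ih
    obtain ⟨ρ', hρ', h2⟩ := unif_diff (h N) hK hε
    refine ⟨min ρ ρ', lt_min hρ hρ', fun l hl z hz w hw => ?_⟩
    rcases Nat.lt_succ_iff_lt_or_eq.1 hl with hl | rfl
    · exact h1 l hl z hz w (hw.trans (min_le_left _ _))
    · exact h2 z hz w (hw.trans (min_le_right _ _))

lemma geo_diff {V : Type*} [NormedAddCommGroup V] (a : ℕ → V) (h : ∀ k, ‖a (k+1) - a k‖ ≤ (1/2)^k) (j k l : ℕ) (hk : j ≤ k)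
    (hkl : k ≤ l) : ‖a l - a k‖ ≤ 2 * (1/2)^j := by
  have key : ∀ m, ‖a (k+m) - a k‖ ≤ 2 * (1/2)^k - 2 * (1/2)^(k+m) := by
    intro m
    induction m with
    | zero => simp
    | succ m ih =>
      have := norm_sub_le_norm_sub_add_norm_sub (a (k+(m+1))) (a (k+m)) (a k)
      have h2 := h (k+m)
      have e : (1/2:ℝ)^(k+(m+1)) = (1/2)^(k+m) * (1/2) := by rw [← add_assoc, pow_succ]
      rw [e]
      rw [← add_assoc] at *
      linarith
  obtain ⟨m, rfl⟩ := Nat.exists_eq_add_of_le hkl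
  have h1 := key m
  have h2 : (1/2:ℝ)^k ≤ (1/2)^j := pow_le_pow_of_le_one (by norm_num) (by norm_num) hk
  have h3 : (0:ℝ) < (1/2)^(k+m) := by positivity
  linarith

lemma p8 {X : Type*} [MetricSpace X] [MeasurableSpace X] [BorelSpace X] {n : ℕ} {μ : Measure X} (hd : HDim n μ)
    {F : X → Eu n} {L : ℝ≥0} (hFL : LipschitzWith L F)
    (hF : ∀ i, ∃ K : ℝ≥0, LipschitzWith K (fun y => F y i)) {B : Set X}
    (hB : MeasurableSet B) (hBt : μ B ≠ ⊤) (hB0 : 0 < μ B) (hreg : ∀ x ∈ B, Reg F x)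
    {K : Set (Eu n)} (hK : IsCompact K) (hFK : ∀ x ∈ B, F x ∈ K)
    {ψ : ℕ → Eu n → ℝ} (hψ : ∀ k, ContDiff ℝ 1 (ψ k)) (hψ1 : ∀ k x, ‖fderiv ℝ (ψ k) x‖ ≤ 1)
    {τ : ℕ → ℝ} (hτ : Filter.Tendsto τ Filter.atTop (nhds 0)) (hψτ : ∀ k x, |ψ k x| ≤ τ k)
    (hdif : ∀ k, ∀ x ∈ B, ‖fderiv ℝ (ψ (k+1)) (F x) - fderiv ℝ (ψ k) (F x)‖ ≤ (1/2)^k)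
    {c0 : ℝ} (hc0 : 0 < c0) (hlow : ∀ k, ∀ x ∈ B, c0 ≤ ‖fderiv ℝ (ψ k) (F x)‖) : False := by
  classical
  obtain ⟨κ, hκ, U, hUB, hU, hU0, hsp⟩ := reg_rel hd hFL hF hB hBt hB0 hreg
  have hρ : ∀ k : ℕ, ∃ ρ > 0, ∀ l < k+1, ∀ z ∈ K, ∀ w, ‖w - z‖ ≤ ρ →
      |ψ l w - ψ l z - fderiv ℝ (ψ l) z (w - z)| ≤ ((1/2)^k / (k+1)) * ‖w - z‖ := fun k =>
    unif_diff_fin hψ hK (by positivity) (k+1)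
  choose ρ hρ0 hρ using hρ
  have hkex : ∀ (j : ℕ) (s : ℝ), 0 < s → ∃ k, j + 1 ≤ k ∧ ∀ k' ≥ k, τ k' ≤ (1/2)^j * s := by
    intro j s hs
    obtain ⟨k, hk⟩ := Filter.eventually_atTop.1 (hτ.eventually_le_const (show (0:ℝ) < (1/2)^j * s by positivity))
    exact ⟨max k (j+1), le_max_right _ _, fun k' hk' => hk k' ((le_max_left _ _).trans hk')⟩
  let kf : ℕ → ℝ → ℕ := fun j s => if hs : 0 < s then Nat.find (hkex j s hs) else 0
  have hkf : ∀ j s, 0 < s → j + 1 ≤ kf j s ∧ ∀ k' ≥ kf j s, τ k' ≤ (1/2)^j * s := by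
    intro j s hs
    simp only [kf, dif_pos hs]
    exact Nat.find_spec (hkex j s hs)
  have hkm : ∀ j s s', 0 < s' → s' ≤ s → kf j s ≤ kf (j+1) s' := by
    intro j s s' hs' hss
    have hs := hs'.trans_le hss
    have h1 := hkf (j+1) s' hs'
    have : kf j s = Nat.find (hkex j s hs) := by simp only [kf, dif_pos hs]
    rw [this]
    refine Nat.find_min' _ ⟨by omega, fun k' hk' => (h1.2 k' hk').trans ?_⟩
    have : (1/2:ℝ)^(j+1) ≤ (1/2)^j := pow_le_pow_of_le_one (by norm_num) (by norm_num) (by omega)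
    gcongr
  obtain ⟨t, s, hst, ht0, hpos⟩ := window_choice (μ := μ) hU (ne_top_of_le_ne_top hBt (measure_mono hUB)) hU0
    (fun _ s t => spanW F B κ s t) (fun _ s t => (isOpen_spanW hFL.continuous B κ s t).measurableSet)
    (fun _ s s' t h => spanW_mono F B κ h) (fun _ t ht x hx => spanW_exists (hsp x hx t ht))
    (fun j s => ρ (kf j s) / (L + 1)) (fun j s hs => div_pos (hρ0 _) (by positivity)) (b0 := ρ 0 / (L+1))
    (div_pos (hρ0 _) (by positivity))
  let kk : ℕ → ℕ := fun j => Nat.casesOn j 0 (fun i => kf i (s i))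
  have hkk0 : kk 0 = 0 := rfl
  have hkkS : ∀ j, kk (j+1) = kf j (s j) := fun j => rfl
  have hkkj : ∀ j, j ≤ kk j := by
    intro j
    cases j with
    | zero => exact Nat.zero_le _
    | succ j => rw [hkkS]; exact (hkf j (s j) (hst j).1).1
  have hkkm : Monotone kk := by
    refine monotone_nat_of_le_succ fun j => ?_
    cases j with
    | zero => rw [hkk0]; exact Nat.zero_le _
    | succ j =>
      rw [hkkS, hkkS]
      refine hkm j _ _ (hst (j+1)).1 ?_
      have := hst j; have := hst (j+1); linarith
  have htρ : ∀ j, L * t j ≤ ρ (kk j) := by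
    intro j
    have h1 : t j ≤ ρ (kk j) / (L + 1) := by
      cases j with
      | zero => exact ht0
      | succ j => exact (hst j).2.2.1
    have hL : (0:ℝ) ≤ L := L.2
    have := (hst j)
    rw [le_div_iff₀ (by positivity)] at h1
    nlinarith
  let D := (InnerProductSpace.toDual ℝ (Eu n)).symm
  obtain ⟨f, hf, hns⟩ := p8core hFL (B := B) (fun j => ψ (kk j)) (fun j z => D (fderiv ℝ (ψ (kk j)) z)) t s hκ hc0
    (fun j x _ => by rw [LinearIsometryEquiv.norm_map]; exact hψ1 _ _)
    (fun j w z => by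
      have := convex_univ.norm_image_sub_le_of_norm_fderiv_le (𝕜 := ℝ) (f := ψ (kk j)) (C := 1) (x := z) (y := w)
        (fun x _ => (hψ _).differentiable one_ne_zero x) (fun x _ => hψ1 _ x) (Set.mem_univ _) (Set.mem_univ _)
      simpa using this)
    (fun j w => (hψτ _ w).trans ((hkf j (s j) (hst j).1).2 _ le_rfl))
    (fun j x hx => by
      rw [← map_sub, LinearIsometryEquiv.norm_map]
      exact geo_diff (fun k => fderiv ℝ (ψ k) (F x)) (fun k => hdif k x hx) j _ _ (hkkj j) (hkkm (Nat.le_succ j)))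
    (fun j i hi x hx w hw => by
      have := hρ (kk j) (kk i) (Nat.lt_succ_of_le (hkkm hi)) (F x) (hFK x hx) w (hw.trans (htρ j))
      simp only [D]
      rw [InnerProductSpace.toDual_symm_apply]
      refine this.trans ?_
      have h1 : (1/2:ℝ)^(kk j) ≤ (1/2)^j := pow_le_pow_of_le_one (by norm_num) (by norm_num) (hkkj j)
      have h2 : (j:ℝ) ≤ kk j := by exact_mod_cast hkkj j
      gcongr)
    (fun j x hx => by rw [LinearIsometryEquiv.norm_map]; exact hlow _ x hx)
    (fun j => ⟨(hst j).1, (hst j).2.1, (hst j).2.2.2⟩)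
  refine p2 hd hF (hU.inter (MeasurableSet.iInter fun j => (isOpen_spanW hFL.continuous B κ (s j) (t j)).measurableSet)) hpos
    (fun x hx => hreg x (hUB hx.1)) hf (fun x hx => hns x (hUB hx.1) (Set.mem_iInter.1 hx.2))

lemma min_seq {W : Type*} [AddCommGroup W] [Module ℝ W] (C : ℕ → Set W) (hC : Antitone C) (hne : ∀ k, (C k).Nonempty)
    (En : W → ℝ) (h0 : ∀ φ, 0 ≤ En φ) {M : ℝ} (hM : ∀ φ ∈ C 0, En φ ≤ M)
    (hmid : ∀ k, ∀ φ ∈ C k, ∀ φ' ∈ C k, (1/2:ℝ) • (φ + φ') ∈ C k)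
    (hpar : ∀ φ ∈ C 0, ∀ φ' ∈ C 0, En (φ - φ') = 2 * En φ + 2 * En φ' - 4 * En ((1/2:ℝ) • (φ + φ')))
    (δ : ℕ → ℝ) (hδ : ∀ k, 0 < δ k) (hδ' : Antitone δ) :
    ∃ ψ : ℕ → W, (∀ k, ψ k ∈ C k) ∧ ∀ k, En (ψ (k+1) - ψ k) ≤ 8 * δ k := by
  set d : ℕ → ℝ := fun k => sInf (En '' C k) with hd
  have hbdd : ∀ k, BddBelow (En '' C k) := fun k => ⟨0, by rintro _ ⟨φ, _, rfl⟩; exact h0 φ⟩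
  have hdm : Monotone d := fun k l hkl => csInf_le_csInf (hbdd k) ((hne l).image _) (Set.image_mono (hC hkl))
  have hle : ∀ k, ∀ φ ∈ C k, d k ≤ En φ := fun k φ hφ => csInf_le (hbdd k) ⟨φ, hφ, rfl⟩
  have hdM : BddAbove (Set.range d) := by
    refine ⟨M, ?_⟩
    rintro _ ⟨k, rfl⟩
    obtain ⟨φ, hφ⟩ := hne k
    exact (hle k φ hφ).trans (hM φ (hC (Nat.zero_le k) hφ))
  set D : ℝ := ⨆ k, d k with hD
  have hdD : ∀ k, d k ≤ D := fun k => le_ciSup hdM k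
  have h1 : ∀ k, ∃ N, D - δ k < d N := fun k => exists_lt_of_lt_ciSup (by linarith [hδ k])
  choose N hN using h1
  set m : ℕ → ℕ := fun k => ∑ i ∈ Finset.range (k+1), N i + k with hm
  have hmN : ∀ k, N k ≤ m k := fun k => by
    have : N k ≤ ∑ i ∈ Finset.range (k+1), N i := Finset.single_le_sum (fun _ _ => Nat.zero_le _) (by simp)
    simp only [hm]; omega
  have hmm : ∀ k, m k ≤ m (k+1) := fun k => by
    simp only [hm]; rw [Finset.sum_range_succ _ (k+1)]; omega
  have h2 : ∀ k, ∃ φ ∈ C (m k), En φ < D + δ k := by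
    intro k
    have : sInf (En '' C (m k)) < D + δ k := by
      have := hdD (m k); have := hδ k
      simp only [hd] at *; linarith
    obtain ⟨_, ⟨φ, hφ, rfl⟩, h⟩ := exists_lt_of_csInf_lt ((hne _).image _) this
    exact ⟨φ, hφ, h⟩
  choose ψ hψ hψE using h2
  refine ⟨ψ, fun k => hC (by simp only [hm]; omega) (hψ k), fun k => ?_⟩
  have a1 : ψ k ∈ C (N k) := hC (hmN k) (hψ k)
  have a2 : ψ (k+1) ∈ C (N k) := hC ((hmN k).trans (hmm k)) (hψ (k+1))
  have a3 := hle _ _ (hmid _ _ a2 _ a1)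
  rw [hpar _ (hC (Nat.zero_le _) a2) _ (hC (Nat.zero_le _) a1)]
  have := hN k
  have := hψE k
  have := hψE (k+1)
  have := hδ' (Nat.le_succ k)
  simp only [Nat.succ_eq_add_one] at this
  linarith

lemma geo_diff2 {V : Type*} [NormedAddCommGroup V] (a : ℕ → V) {C : ℝ} (h : ∀ k, ‖a (k+1) - a k‖ ≤ C * (1/2)^k) (m : ℕ) :
    ‖a m - a 0‖ ≤ 2 * C - 2 * C * (1/2)^m := by
  induction m with
  | zero => simp
  | succ m ih =>
    have := norm_sub_le_norm_sub_add_norm_sub (a (m+1)) (a m) (a 0)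
    have h2 := h m
    rw [pow_succ]
    linarith

def Cls {n : ℕ} (ν : Measure (Eu n)) (i : Fin n) (η : ℝ) (k : ℕ) : Set (Eu n → ℝ) :=
  {φ | ContDiff ℝ 1 φ ∧ (∀ x, ‖fderiv ℝ φ x‖ ≤ 1) ∧ (∀ x, |φ x| ≤ 1 / ((k:ℝ)+1)) ∧
    η < ∫ x, fderiv ℝ φ x (EuclideanSpace.single i 1) ∂ν}

lemma cls_int {n : ℕ} {ν : Measure (Eu n)} [IsFiniteMeasure ν] {φ : Eu n → ℝ} (h : ContDiff ℝ 1 φ)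
    (h1 : ∀ x, ‖fderiv ℝ φ x‖ ≤ 1) (i : Fin n) :
    Integrable (fun x => fderiv ℝ φ x (EuclideanSpace.single i 1)) ν := by
  have hc := h.continuous_fderiv one_ne_zero
  refine Integrable.of_bound (hc.clm_apply continuous_const).aestronglyMeasurable 1
    (Filter.Eventually.of_forall fun x => ?_)
  have := (fderiv ℝ φ x).le_opNorm (EuclideanSpace.single i (1:ℝ))
  simp only [PiLp.norm_single, norm_one, mul_one] at this
  exact this.trans (h1 x)

lemma sq_int {n : ℕ} {ν : Measure (Eu n)} [IsFiniteMeasure ν] {φ : Eu n → ℝ} (h : ContDiff ℝ 1 φ) {c : ℝ}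
    (h1 : ∀ x, ‖fderiv ℝ φ x‖ ≤ c) :
    Integrable (fun x => ‖fderiv ℝ φ x‖^2) ν := by
  have hc := h.continuous_fderiv one_ne_zero
  refine Integrable.of_bound (hc.norm.pow 2).aestronglyMeasurable (c^2)
    (Filter.Eventually.of_forall fun x => ?_)
  rw [Real.norm_eq_abs, abs_of_nonneg (by positivity)]
  have := h1 x
  gcongr

lemma dual_par {n : ℕ} (a b : Eu n →L[ℝ] ℝ) : ‖a - b‖^2 = 2 * ‖a‖^2 + 2 * ‖b‖^2 - 4 * ‖(1/2:ℝ) • (a + b)‖^2 := by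
  let D := (InnerProductSpace.toDual ℝ (Eu n)).symm
  have h := parallelogram_law_with_norm ℝ (D a) (D b)
  rw [← map_add, ← map_sub, LinearIsometryEquiv.norm_map, LinearIsometryEquiv.norm_map, LinearIsometryEquiv.norm_map,
    LinearIsometryEquiv.norm_map] at h
  rw [norm_smul, mul_pow]
  norm_num
  nlinarith

lemma p7seq {n : ℕ} {ν : Measure (Eu n)} [IsFiniteMeasure ν] (i : Fin n) {η : ℝ} (hne : ∀ k, (Cls ν i η k).Nonempty)
    (δ : ℕ → ℝ) (hδ : ∀ k, 0 < δ k) (hδ' : Antitone δ) :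
    ∃ ψ : ℕ → Eu n → ℝ, (∀ k, ψ k ∈ Cls ν i η k) ∧
      ∀ k, ∫ x, ‖fderiv ℝ (ψ (k+1)) x - fderiv ℝ (ψ k) x‖^2 ∂ν ≤ 8 * δ k := by
  have fsub : ∀ φ φ' : Eu n → ℝ, ContDiff ℝ 1 φ → ContDiff ℝ 1 φ' → ∀ x,
      fderiv ℝ (φ - φ') x = fderiv ℝ φ x - fderiv ℝ φ' x := fun φ φ' h h' x =>
    fderiv_sub (h.differentiable one_ne_zero x) (h'.differentiable one_ne_zero x)
  have fmid : ∀ φ φ' : Eu n → ℝ, ContDiff ℝ 1 φ → ContDiff ℝ 1 φ' → ∀ x,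
      fderiv ℝ ((1/2:ℝ) • (φ + φ')) x = (1/2:ℝ) • (fderiv ℝ φ x + fderiv ℝ φ' x) := fun φ φ' h h' x => by
    have hd : DifferentiableAt ℝ (φ + φ') x := (h.add h').differentiable one_ne_zero x
    rw [fderiv_const_smul hd, fderiv_add (h.differentiable one_ne_zero x) (h'.differentiable one_ne_zero x)]
  have fmid1 : ∀ φ φ' : Eu n → ℝ, ContDiff ℝ 1 φ → ContDiff ℝ 1 φ' → (∀ x, ‖fderiv ℝ φ x‖ ≤ 1) →
      (∀ x, ‖fderiv ℝ φ' x‖ ≤ 1) → ∀ x, ‖fderiv ℝ ((1/2:ℝ) • (φ + φ')) x‖ ≤ 1 := fun φ φ' h h' h1 h1' x => by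
    rw [fmid φ φ' h h' x, norm_smul]
    have := norm_add_le (fderiv ℝ φ x) (fderiv ℝ φ' x)
    have := h1 x
    have := h1' x
    norm_num
    linarith
  have cmid : ∀ φ φ' : Eu n → ℝ, ContDiff ℝ 1 φ → ContDiff ℝ 1 φ' → ContDiff ℝ 1 ((1/2:ℝ) • (φ + φ')) :=
    fun φ φ' h h' => by
      have := (h.add h').const_smul (1/2:ℝ)
      exact this
  obtain ⟨ψ, h1, h2⟩ := min_seq (Cls ν i η) (by
      intro k l hkl φ hφ
      refine ⟨hφ.1, hφ.2.1, fun x => (hφ.2.2.1 x).trans (Nat.one_div_le_one_div hkl), hφ.2.2.2⟩) hne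
    (fun φ => ∫ x, ‖fderiv ℝ φ x‖^2 ∂ν) (fun φ => integral_nonneg fun x => by positivity) (M := ∫ x, 1 ∂ν)
    (fun φ hφ => integral_mono (sq_int hφ.1 hφ.2.1) (integrable_const _) (fun x => by
      have := hφ.2.1 x
      simp only
      exact pow_le_one₀ (norm_nonneg _) this))
    (by
      rintro k φ ⟨a1, a2, a3, a4⟩ φ' ⟨b1, b2, b3, b4⟩
      refine ⟨cmid _ _ a1 b1, fmid1 _ _ a1 b1 a2 b2, fun x => ?_, ?_⟩
      · have := a3 x
        have := b3 x
        simp only [Pi.smul_apply, Pi.add_apply, smul_eq_mul]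
        rw [abs_le] at *
        constructor <;> linarith
      · have e : (fun x => fderiv ℝ ((1/2:ℝ) • (φ + φ')) x (EuclideanSpace.single i 1)) =
            fun x => (1/2:ℝ) * (fderiv ℝ φ x (EuclideanSpace.single i 1) + fderiv ℝ φ' x (EuclideanSpace.single i 1)) := by
          funext x
          rw [fmid _ _ a1 b1]; simp; ring
        rw [e, integral_const_mul, integral_add (cls_int a1 a2 i) (cls_int b1 b2 i)]
        linarith)
    (by
      rintro φ ⟨a1, a2, a3, a4⟩ φ' ⟨b1, b2, b3, b4⟩
      have i1 := sq_int (ν := ν) a1 a2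
      have i2 := sq_int (ν := ν) b1 b2
      have i3 := sq_int (ν := ν) (cmid _ _ a1 b1) (fmid1 _ _ a1 b1 a2 b2)
      have i4 : Integrable (fun x => 2 * ‖fderiv ℝ φ x‖^2 + 2 * ‖fderiv ℝ φ' x‖^2) ν := (i1.const_mul 2).add (i2.const_mul 2)
      rw [← integral_const_mul, ← integral_const_mul, ← integral_const_mul, ← integral_add (i1.const_mul 2) (i2.const_mul 2),
        ← integral_sub i4 (i3.const_mul 4)]
      refine integral_congr_ae (Filter.Eventually.of_forall fun x => ?_)
      simp only
      rw [fsub _ _ a1 b1, fmid _ _ a1 b1, dual_par])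
    δ hδ hδ'
  refine ⟨ψ, h1, fun k => ?_⟩
  have := h2 k
  refine le_trans (le_of_eq ?_) this
  refine integral_congr_ae (Filter.Eventually.of_forall fun x => ?_)
  simp only
  rw [fsub _ _ (h1 (k+1)).1 (h1 k).1]

lemma p7 {n : ℕ} {ν : Measure (Eu n)} [IsFiniteMeasure ν] (i : Fin n) {η : ℝ} (hη : 0 < η) (hne : ∀ k, (Cls ν i η k).Nonempty) :
    ∃ (ψ : ℕ → Eu n → ℝ) (c0 : ℝ) (Z : Set (Eu n)), 0 < c0 ∧ MeasurableSet Z ∧ 0 < ν Z ∧ (∀ k, ContDiff ℝ 1 (ψ k)) ∧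
      (∀ k x, ‖fderiv ℝ (ψ k) x‖ ≤ 1) ∧ (∀ k x, |ψ k x| ≤ 1 / ((k:ℝ)+1)) ∧
      (∀ k, ∀ z ∈ Z, ‖fderiv ℝ (ψ (k+1)) z - fderiv ℝ (ψ k) z‖ ≤ (1/2)^k) ∧ (∀ k, ∀ z ∈ Z, c0 ≤ ‖fderiv ℝ (ψ k) z‖) := by
  obtain ⟨ψ, h1, h2⟩ := p7seq i hne (fun k => (1/8)^k) (fun k => by positivity)
    (fun k l h => pow_le_pow_of_le_one (by norm_num) (by norm_num) h)
  set bad : ℕ → Set (Eu n) := fun k => {x | ((1/2)^k)^2 ≤ ‖fderiv ℝ (ψ (k+1)) x - fderiv ℝ (ψ k) x‖^2} with hbad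
  have hcf : ∀ k, Continuous (fderiv ℝ (ψ k)) := fun k => (h1 k).1.continuous_fderiv one_ne_zero
  have hbm : ∀ k, MeasurableSet (bad k) := fun k =>
    (isClosed_le continuous_const (((hcf (k+1)).sub (hcf k)).norm.pow 2)).measurableSet
  have hbν : ∀ k, ν (bad k) ≤ ENNReal.ofReal (8 * (1/2)^k) := by
    intro k
    have hintg : Integrable (fun x => ‖fderiv ℝ (ψ (k+1)) x - fderiv ℝ (ψ k) x‖^2) ν := by
      have := sq_int (ν := ν) ((h1 (k+1)).1.sub (h1 k).1) (c := 2) (fun x => by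
        rw [fderiv_fun_sub ((h1 (k+1)).1.differentiable one_ne_zero x) ((h1 k).1.differentiable one_ne_zero x)]
        refine (norm_sub_le _ _).trans ?_
        have := (h1 (k+1)).2.1 x
        have := (h1 k).2.1 x
        linarith)
      refine this.congr (Filter.Eventually.of_forall fun x => ?_)
      simp only
      rw [fderiv_fun_sub ((h1 (k+1)).1.differentiable one_ne_zero x) ((h1 k).1.differentiable one_ne_zero x)]
    have h3 := mul_meas_ge_le_integral_of_nonneg (Filter.Eventually.of_forall fun x => by positivity) hintg (((1/2)^k)^2)
    have h4 := h3.trans (h2 k)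
    have h5 : ν.real (bad k) ≤ 8 * (1/2)^k := by
      have e : (8:ℝ) * (1/8)^k = ((1/2)^k)^2 * (8 * (1/2)^k) := by
        rw [show (1/8:ℝ) = (1/2)^3 by norm_num, ← pow_mul, ← pow_mul, mul_comm 3 k, pow_mul, pow_mul]; ring
      rw [e] at h4
      exact le_of_mul_le_mul_left h4 (by positivity)
    rw [← ENNReal.ofReal_toReal (measure_ne_top ν (bad k))]
    exact ENNReal.ofReal_le_ofReal h5
  set c1 : ℝ := η / (2 * (ν.real Set.univ + 1)) with hc1
  have hνp : 0 ≤ ν.real Set.univ := measureReal_nonneg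
  have hc1p : 0 < c1 := by positivity
  set P : ℕ → Set (Eu n) := fun k => {x | c1 ≤ fderiv ℝ (ψ k) x (EuclideanSpace.single i 1)} with hP
  have hPm : ∀ k, MeasurableSet (P k) := fun k =>
    (isClosed_le continuous_const ((hcf k).clm_apply continuous_const)).measurableSet
  have hPν : ∀ k, η / 2 ≤ ν.real (P k) := by
    intro k
    have hintg := cls_int (ν := ν) (h1 k).1 (h1 k).2.1 i
    have h3 := (h1 k).2.2.2
    have h4 : ∫ x, fderiv ℝ (ψ k) x (EuclideanSpace.single i 1) ∂ν ≤ ∫ x, ((P k).indicator (fun _ => (1:ℝ)) x + c1) ∂ν := by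
      refine integral_mono hintg (((integrable_const _).indicator (hPm k)).add (integrable_const _)) fun x => ?_
      simp only
      by_cases hx : x ∈ P k
      · rw [Set.indicator_of_mem hx]
        have h5 := (fderiv ℝ (ψ k) x).le_opNorm (EuclideanSpace.single i (1:ℝ))
        simp only [PiLp.norm_single, norm_one, mul_one] at h5
        have h6 := (h1 k).2.1 x
        have h7 := le_abs_self (fderiv ℝ (ψ k) x (EuclideanSpace.single i (1:ℝ)))
        rw [Real.norm_eq_abs] at h5
        linarith
      · rw [Set.indicator_of_notMem hx]
        simp only [hP, Set.mem_ofPred_eq, not_le] at hx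
        linarith
    rw [integral_add ((integrable_const _).indicator (hPm k)) (integrable_const _), integral_indicator (hPm k)] at h4
    simp only [integral_const, smul_eq_mul, mul_one, measureReal_restrict_apply_univ] at h4
    have h8 : ν.real Set.univ * c1 ≤ η / 2 := by
      rw [hc1, ← mul_div_assoc, div_le_div_iff₀ (by positivity) (by norm_num)]
      nlinarith
    linarith
  obtain ⟨k0, hk0⟩ := exists_pow_lt_of_lt_one (show 0 < min (η/64) (c1/4) by positivity) (by norm_num : (1/2:ℝ) < 1)
  have hk1 := hk0.trans_le (min_le_left _ _)
  have hk2 := hk0.trans_le (min_le_right _ _)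
  have hbU : ν (⋃ k, bad (k0 + k)) ≤ ENNReal.ofReal (16 * (1/2)^k0) := by
    refine (measure_iUnion_le _).trans ?_
    have hs : HasSum (fun k : ℕ => 8 * (1/2:ℝ)^(k0+k)) (16 * (1/2)^k0) := by
      have := (hasSum_geometric_two).mul_left (8 * (1/2:ℝ)^k0)
      have e : (fun k : ℕ => 8 * (1/2:ℝ)^(k0+k)) = fun k : ℕ => 8 * (1/2:ℝ)^k0 * (1/2)^k := by
        funext k; rw [pow_add]; ring
      rw [e, show 16 * (1/2:ℝ)^k0 = 8 * (1/2:ℝ)^k0 * 2 by ring]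
      exact this
    rw [← hs.tsum_eq, ENNReal.ofReal_tsum_of_nonneg (fun k => by positivity) hs.summable]
    exact ENNReal.tsum_le_tsum fun k => hbν (k0 + k)
  refine ⟨fun k => ψ (k0 + k), c1 / 2, P k0 \ ⋃ k, bad (k0 + k), by positivity,
    (hPm k0).diff (MeasurableSet.iUnion fun k => hbm _), ?_, fun k => (h1 _).1, fun k => (h1 _).2.1, fun k x => ?_, ?_, ?_⟩
  · rw [pos_iff_ne_zero]
    intro h0
    have h3 : ν (P k0) ≤ ν (⋃ k, bad (k0 + k)) := by
      have := measure_mono (μ := ν) (show P k0 ⊆ (P k0 \ ⋃ k, bad (k0 + k)) ∪ ⋃ k, bad (k0 + k) from fun x hx => by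
        by_cases h : x ∈ ⋃ k, bad (k0 + k)
        · exact Or.inr h
        · exact Or.inl ⟨hx, h⟩)
      refine this.trans ((measure_union_le _ _).trans ?_)
      rw [h0, zero_add]
    have h4 := ENNReal.toReal_mono ENNReal.ofReal_ne_top (h3.trans hbU)
    rw [ENNReal.toReal_ofReal (by positivity)] at h4
    have h5 := hPν k0
    simp only [Measure.real] at h5
    linarith
  · refine ((h1 (k0+k)).2.2.1 x).trans (Nat.one_div_le_one_div (by omega))
  · rintro k z ⟨_, hz⟩
    simp only [Set.mem_iUnion, not_exists] at hz
    have := hz k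
    simp only [hbad, Set.mem_ofPred_eq, not_le] at this
    have h3 := lt_of_pow_lt_pow_left₀ 2 (by positivity) this
    refine h3.le.trans (pow_le_pow_of_le_one (by norm_num) (by norm_num) (by omega))
  · rintro k z ⟨hzP, hz⟩
    simp only [Set.mem_iUnion, not_exists] at hz
    have h3 := geo_diff2 (fun k => fderiv ℝ (ψ (k0 + k)) z) (C := (1/2)^k0) (fun k => by
      have := hz k
      simp only [hbad, Set.mem_ofPred_eq, not_le] at this
      have h3 := lt_of_pow_lt_pow_left₀ 2 (by positivity) this
      rw [← pow_add]
      exact h3.le) k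
    simp only [add_zero] at h3
    have h4 : c1 ≤ ‖fderiv ℝ (ψ k0) z‖ := by
      have h5 := (fderiv ℝ (ψ k0) z).le_opNorm (EuclideanSpace.single i (1:ℝ))
      simp only [PiLp.norm_single, norm_one, mul_one] at h5
      have h7 := le_abs_self (fderiv ℝ (ψ k0) z (EuclideanSpace.single i (1:ℝ)))
      rw [Real.norm_eq_abs] at h5
      simp only [hP, Set.mem_ofPred_eq] at hzP
      linarith
    have h6 := norm_sub_norm_le (fderiv ℝ (ψ k0) z) (fderiv ℝ (ψ (k0+k)) z)
    rw [norm_sub_rev] at h6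
    have : (0:ℝ) < 2 * (1/2)^k0 * (1/2)^k := by positivity
    linarith

lemma scalar_cl {X : Type*} [MetricSpace X] [MeasurableSpace X] [BorelSpace X] {n : ℕ} {μ : Measure X} (hd : HDim n μ)
    {F : X → Eu n} {L : ℝ≥0} (hFL : LipschitzWith L F)
    (hF : ∀ i, ∃ K : ℝ≥0, LipschitzWith K (fun y => F y i)) {B : Set X}
    (hB : MeasurableSet B) (hBt : μ B ≠ ⊤) (hreg : ∀ x ∈ B, Reg F x)
    {K : Set (Eu n)} (hK : IsCompact K) (hFK : ∀ x ∈ B, F x ∈ K) (i : Fin n) {η : ℝ} (hη : 0 < η) :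
    ∃ k : ℕ, ¬ (Cls ((μ.restrict B).map F) i η k).Nonempty := by
  by_contra hcon
  push Not at hcon
  have : IsFiniteMeasure (μ.restrict B) := isFiniteMeasure_restrict.2 hBt
  obtain ⟨ψ, c0, Z, hc0, hZ, hZ0, h1, h2, h3, h4, h5⟩ := p7 i hη hcon
  have hFm : Measurable F := hFL.continuous.measurable
  rw [Measure.map_apply hFm hZ, Measure.restrict_apply (hFm hZ)] at hZ0
  exact p8 hd hFL hF (B := F ⁻¹' Z ∩ B) ((hFm hZ).inter hB) (ne_top_of_le_ne_top hBt (measure_mono Set.inter_subset_right)) hZ0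
    (fun x hx => hreg x hx.2) hK (fun x hx => hFK x hx.2) h1 h2 tendsto_one_div_add_atTop_nhds_zero_nat h3
    (fun k x hx => h4 k _ hx.1) hc0 (fun k x hx => h5 k _ hx.1)

lemma clv_of {n : ℕ} {ν : Measure (Eu n)} [IsFiniteMeasure ν] (h : ∀ i : Fin n, ∀ η > (0:ℝ), ∃ k : ℕ, ¬ (Cls ν i η k).Nonempty) :
    CLv ν := by
  intro Λ hΛ η hη
  have hη' : 0 < η / (Λ * (n + 1)) := by positivity
  choose k hk using fun i => h i _ hη'
  set N : ℕ := ∑ i, k i with hN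
  refine ⟨Λ / ((N:ℝ) + 1), by positivity, fun Φ hΦ hΦ1 hΦ2 => ?_⟩
  have key : ∀ i : Fin n, ∫ x, (fderiv ℝ Φ x (EuclideanSpace.single i 1)) i ∂ν ≤ η / (n+1) := by
    intro i
    by_contra hcon
    push Not at hcon
    set φ : Eu n → ℝ := fun x => Λ⁻¹ * (Φ x) i with hφ
    have hf : ∀ x, HasFDerivAt φ (Λ⁻¹ • ((EuclideanSpace.proj i : Eu n →L[ℝ] ℝ).comp (fderiv ℝ Φ x))) x := by
      intro x
      have h1 := (hΦ.differentiable one_ne_zero x).hasFDerivAt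
      have h2 := ((EuclideanSpace.proj i : Eu n →L[ℝ] ℝ).hasFDerivAt.comp x h1).const_mul Λ⁻¹
      exact h2
    refine hk i ⟨φ, ?_, fun x => ?_, fun x => ?_, ?_⟩
    · exact contDiff_const.mul ((EuclideanSpace.proj i : Eu n →L[ℝ] ℝ).contDiff.comp hΦ)
    · rw [(hf x).fderiv]
      refine ContinuousLinearMap.opNorm_le_bound _ zero_le_one fun v => ?_
      simp only [smul_apply, ContinuousLinearMap.comp_apply, smul_eq_mul, PiLp.proj_apply,
        norm_mul, norm_inv, one_mul]
      have h1 := PiLp.norm_apply_le (fderiv ℝ Φ x v) i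
      have h2 := (fderiv ℝ Φ x).le_opNorm v
      have h3 : ‖fderiv ℝ Φ x‖ * ‖v‖ ≤ Λ * ‖v‖ := by have := hΦ1 x; gcongr
      rw [Real.norm_of_nonneg hΛ.le, inv_mul_le_iff₀ hΛ]
      linarith
    · have h1 := PiLp.norm_apply_le (Φ x) i
      have h2 := hΦ2 x
      rw [Real.norm_eq_abs] at h1
      simp only [hφ]
      rw [abs_mul, abs_inv, abs_of_pos hΛ, inv_mul_le_iff₀ hΛ]
      have h3 : k i ≤ N := Finset.single_le_sum (f := k) (fun _ _ => Nat.zero_le _) (Finset.mem_univ i)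
      have h4 := mul_le_mul_of_nonneg_left (Nat.one_div_le_one_div (α := ℝ) h3) hΛ.le
      rw [mul_one_div] at h4
      linarith
    · have e : (fun x => fderiv ℝ φ x (EuclideanSpace.single i 1)) = fun x => Λ⁻¹ * (fderiv ℝ Φ x (EuclideanSpace.single i 1)) i := by
        funext x
        rw [(hf x).fderiv]; simp
      rw [e, integral_const_mul]
      rw [mul_comm Λ, ← div_div, div_eq_inv_mul _ Λ]
      gcongr
  have hintg : ∀ i ∈ (Finset.univ : Finset (Fin n)), Integrable (fun x => (fderiv ℝ Φ x (EuclideanSpace.single i 1)) i) ν := by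
    intro i _
    have hc := hΦ.continuous_fderiv one_ne_zero
    have h2 : Continuous fun x => fderiv ℝ Φ x (EuclideanSpace.single i 1) := hc.clm_apply continuous_const
    refine Integrable.of_bound (C := Λ) (Continuous.aestronglyMeasurable (by fun_prop)) (Filter.Eventually.of_forall fun x => ?_)
    have h1 := PiLp.norm_apply_le (fderiv ℝ Φ x (EuclideanSpace.single i 1)) i
    have h2 := (fderiv ℝ Φ x).le_opNorm (EuclideanSpace.single i (1:ℝ))
    simp only [PiLp.norm_single, norm_one, mul_one] at h2
    have := hΦ1 x
    linarith
  unfold dvg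
  rw [integral_finsetSum _ hintg]
  refine (Finset.sum_le_sum fun i _ => key i).trans ?_
  simp only [Finset.sum_const, Finset.card_univ, Fintype.card_fin, nsmul_eq_mul]
  rw [← mul_div_assoc, div_le_iff₀ (by positivity)]
  nlinarith

lemma vol_image_null {n : ℕ} {G : Eu n → Eu n} {L : ℝ≥0} (hG : LipschitzWith L G) {K : Set (Eu n)} (hK : volume K = 0) :
    volume (G '' K) = 0 := by
  have hH : (μH[(Module.finrank ℝ (Eu n) : ℝ)] : Measure (Eu n)).IsAddHaarMeasure := isAddHaarMeasure_hausdorffMeasure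
  have h1 : (volume : Measure (Eu n)) ≪ μH[(Module.finrank ℝ (Eu n) : ℝ)] := Measure.absolutelyContinuous_isAddHaarMeasure _ _
  have h2 : (μH[(Module.finrank ℝ (Eu n) : ℝ)] : Measure (Eu n)) ≪ volume := Measure.absolutelyContinuous_isAddHaarMeasure _ _
  refine h1 ?_
  have := hG.hausdorffMeasure_image_le (d := (Module.finrank ℝ (Eu n) : ℝ)) (by positivity) K
  rw [h2 hK, mul_zero] at this
  exact le_antisymm this (zero_le)

lemma ext_map {n : ℕ} {A : Set (Eu n)} {f : Fin n → A → ℝ} (hf : ∀ i, ∃ K : ℝ≥0, LipschitzWith K (f i)) :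
    ∃ (G : Eu n → Eu n) (L : ℝ≥0), LipschitzWith L G ∧ ∀ (x : A) i, G x i = f i x := by
  classical
  have h1 : ∀ i, ∃ (g : Eu n → ℝ) (K : ℝ≥0), LipschitzWith K g ∧ ∀ x : A, g x = f i x := by
    intro i
    obtain ⟨K, hK⟩ := hf i
    have : LipschitzOnWith K (fun x => if h : x ∈ A then f i ⟨x, h⟩ else 0) A := by
      refine LipschitzOnWith.of_dist_le_mul fun x hx y hy => ?_
      simp only [dif_pos hx, dif_pos hy]
      exact hK.dist_le_mul ⟨x, hx⟩ ⟨y, hy⟩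
    obtain ⟨g, hg, he⟩ := this.extend_real
    refine ⟨g, K, hg, fun x => ?_⟩
    rw [← he x.2]; simp
  choose g K hg he using h1
  have h2 : LipschitzWith (∑ i, K i) (fun x i => g i x) := by
    refine LipschitzWith.of_dist_le_mul fun x y => ?_
    rw [dist_pi_le_iff (by positivity)]
    intro i
    refine ((hg i).dist_le_mul x y).trans ?_
    have : K i ≤ ∑ i, K i := Finset.single_le_sum (f := K) (fun _ _ => zero_le) (Finset.mem_univ i)
    gcongr
  refine ⟨fun x => WithLp.toLp 2 (fun i => g i x), _, (PiLp.lipschitzWith_toLp 2 (fun _ : Fin n => ℝ)).comp h2, fun x i => he i x⟩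

lemma main_ac {n : ℕ} {A : Set (Eu n)} (hA : MeasurableSet A)
    (m : Measure (Eu n)) [IsFiniteMeasureOnCompacts m] [m.Regular]
    (hconc : m Aᶜ = 0)
    (hd : HDim n (m.comap (Subtype.val : A → Eu n)))
    (hdim_ge : ∀ B : Set A, MeasurableSet B → 0 < m.comap Subtype.val B →
      ∃ B' ⊆ B, MeasurableSet B' ∧ 0 < m.comap Subtype.val B' ∧
        ∃ f : Fin n → A → ℝ, (∀ i, ∃ K : ℝ≥0, LipschitzWith K (f i)) ∧
          IndependentOn (m.comap Subtype.val) f B') :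
    m ≪ (volume : Measure (Eu n)) := by
  refine Measure.AbsolutelyContinuous.mk fun N hN hN0 => ?_
  by_contra hne
  rcases Nat.eq_zero_or_pos n with rfl | hn
  · have : N = ∅ := by
      rw [volume_euclideanSpace_eq_dirac, Measure.dirac_apply' _ hN] at hN0
      by_contra hcon
      obtain ⟨x, hx⟩ := Set.nonempty_iff_ne_empty.2 hcon
      rw [Subsingleton.elim x 0] at hx
      simp [hx] at hN0
    rw [this] at hne; simp at hne
  set μ := m.comap (Subtype.val : A → Eu n) with hμ
  have hemb : MeasurableEmbedding (Subtype.val : A → Eu n) := MeasurableEmbedding.subtype_coe hA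
  have hNA : 0 < m (N ∩ A) := by
    rw [pos_iff_ne_zero]
    intro h0
    refine hne (measure_mono_null (t := (N ∩ A) ∪ Aᶜ) (fun x hx => ?_) (measure_union_null h0 hconc))
    by_cases h : x ∈ A
    · exact Or.inl ⟨hx, h⟩
    · exact Or.inr h
  obtain ⟨K0, hK0s, hK0c, hK0p⟩ := (hN.inter hA).exists_lt_isCompact hNA
  have hK00 : volume K0 = 0 := measure_mono_null (hK0s.trans Set.inter_subset_left) hN0
  have hKim : Subtype.val '' (Subtype.val ⁻¹' K0 : Set A) = K0 := by
    rw [Subtype.image_preimage_coe]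
    exact Set.inter_eq_right.2 (hK0s.trans Set.inter_subset_right)
  have hB0m : MeasurableSet (Subtype.val ⁻¹' K0 : Set A) := measurable_subtype_coe hK0c.measurableSet
  have hB0e : μ (Subtype.val ⁻¹' K0 : Set A) = m K0 := by rw [hμ, hemb.comap_apply, hKim]
  obtain ⟨B', hB'0, hB'm, hB'p, f, hf, hind⟩ := hdim_ge _ hB0m (by rw [hB0e]; exact hK0p)
  obtain ⟨G, L, hG, hGf⟩ := ext_map hf
  obtain ⟨T, hTs, hTm, hT0⟩ := exists_measurable_superset_of_null (ae_iff.1 hind)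
  rw [Measure.restrict_apply hTm] at hT0
  have hBp : 0 < μ (B' \ T) := by
    rw [pos_iff_ne_zero]
    intro h0
    refine hB'p.ne' (measure_mono_null (t := (B' \ T) ∪ (T ∩ B')) (fun x hx => ?_) (measure_union_null h0 hT0))
    by_cases h : x ∈ T
    · exact Or.inr ⟨h, hx⟩
    · exact Or.inl ⟨hx, h⟩
  have hBm : MeasurableSet (B' \ T) := hB'm.diff hTm
  have hBt : μ (B' \ T) ≠ ⊤ := ne_top_of_le_ne_top (hB0e ▸ hK0c.measure_lt_top.ne)
    (measure_mono (Set.sdiff_subset.trans hB'0))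
  set F : A → Eu n := fun x => G x with hF
  have hFL : LipschitzWith (L * 1) F := hG.comp (LipschitzWith.subtype_val A)
  have hFf : ∀ i, (fun y => F y i) = f i := fun i => by funext y; exact hGf y i
  have hFc : ∀ i, ∃ K : ℝ≥0, LipschitzWith K (fun y => F y i) := fun i => by rw [hFf]; exact hf i
  have hreg : ∀ x ∈ B' \ T, Reg F x := by
    intro x hx
    refine reg_of_isNormOn hFc ?_
    have h1 : IsNormOn (fun a : Fin n → ℝ => lip (fun y => ∑ i, a i * f i y) x) := by
      by_contra h
      exact hx.2 (hTs h)
    have e : (fun a : Fin n → ℝ => lip (fun y => ∑ i, a i * F y i) x) = (fun a : Fin n → ℝ => lip (fun y => ∑ i, a i * f i y) x) := by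
      funext a
      congr 1
      funext y
      exact Finset.sum_congr rfl fun i _ => by rw [← hFf i]
    rw [e]; exact h1
  have hFK : ∀ x ∈ B' \ T, F x ∈ G '' K0 := fun x hx => ⟨x, hB'0 hx.1, rfl⟩
  have hKc : IsCompact (G '' K0) := hK0c.image hG.continuous
  have hfin : IsFiniteMeasure (μ.restrict (B' \ T)) := isFiniteMeasure_restrict.2 hBt
  have hFm : Measurable F := hFL.continuous.measurable
  have hcl : CLv ((μ.restrict (B' \ T)).map F) :=
    clv_of fun i η hη => scalar_cl hd hFL hFc hBm hBt hreg hKc hFK i hη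
  have hz := part2 hn ((μ.restrict (B' \ T)).map F) hKc (vol_image_null hG hK00) (by
    rw [Measure.map_apply hFm hKc.measurableSet.compl, Measure.restrict_apply (hFm hKc.measurableSet.compl)]
    have : F ⁻¹' (G '' K0)ᶜ ∩ (B' \ T) = ∅ := by
      ext x
      simp only [Set.mem_inter_iff, Set.mem_empty_iff_false, iff_false, not_and]
      intro h1 h2
      exact h1 (hFK x h2)
    rw [this, measure_empty]) hcl
  have h9 : ((μ.restrict (B' \ T)).map F) Set.univ = 0 := by rw [hz]; simp
  rw [Measure.map_apply hFm MeasurableSet.univ, Set.preimage_univ, Measure.restrict_apply_univ] at h9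
  exact hBp.ne' h9

/-- Rigidity Theorem II: let `m` be a Radon measure on `ℝⁿ` concentrated on a Borel set `A`
such that `(A, d_Euclid, m)` is a Lipschitz differentiability space of Lipschitz dimension `n`
(every positive-measure Borel subset of `A` contains a positive-measure Borel subset carrying
`n` independent Lipschitz functions, and no `n+1` Lipschitz functions are independent on a set
of positive measure).  Then `m` is absolutely continuous w.r.t. the Lebesgue measure on `ℝⁿ`;
in particular `m` is supported on an `n`-rectifiable set. -/
theorem stmt13 (n : ℕ) (A : Set (EuclideanSpace ℝ (Fin n))) (hA : MeasurableSet A)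
    (m : Measure (EuclideanSpace ℝ (Fin n))) [IsFiniteMeasureOnCompacts m] [m.Regular]
    (hconc : m Aᶜ = 0)
    (hdiff : IsDiffSpace (m.comap (Subtype.val : A → EuclideanSpace ℝ (Fin n))))
    (hdim_le : ∀ (f : Fin (n + 1) → A → ℝ) (B : Set A), MeasurableSet B →
      0 < m.comap Subtype.val B → (∀ i, ∃ K : ℝ≥0, LipschitzWith K (f i)) →
      ¬ IndependentOn (m.comap Subtype.val) f B)
    (hdim_ge : ∀ B : Set A, MeasurableSet B → 0 < m.comap Subtype.val B →
      ∃ B' ⊆ B, MeasurableSet B' ∧ 0 < m.comap Subtype.val B' ∧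
        ∃ f : Fin n → A → ℝ, (∀ i, ∃ K : ℝ≥0, LipschitzWith K (f i)) ∧
          IndependentOn (m.comap Subtype.val) f B') :
    m ≪ (volume : Measure (EuclideanSpace ℝ (Fin n))) ∧
    ∃ S : Set (EuclideanSpace ℝ (Fin n)), IsNRectifiable n S ∧ m Sᶜ = 0 := by
  refine ⟨main_ac hA m hconc hdim_le hdim_ge, Set.univ, ⟨Set.univ, id, 1, one_pos, MeasurableSet.univ, by simp, ?_⟩, by simp⟩
  intro x _ y _
  simp
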